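/- Let s ∈ ℂ with −1 < Re s < 1 and s ≠ 0, and let x > 0 be real. Define φ(t,s) := 2 ∑_{n=1}^∞ σ_{−s}(n) n^{s/2} ( e^{πis/4} K_s(4π e^{iπ/4} √(nt)) + e^{−πis/4} K_s(4π e^{−iπ/4} √(nt)) ) for t > 0 (note that the arguments 4π e^{±iπ/4}√(nt) have positive real part, so K_s is given by its defining integral). Then f(x,s) = (2/π)·x^{−s/2} ∫_0^∞ ( t^{1+s/2}/(x² + t²) ) · ( φ(t,s) − (ζ(s)/(2π))·t^{s/2−1} ) dt. -/

import Mathlib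

open Complex Finset MeasureTheory
open scoped Real BigOperators Classical

/-- Generalized divisor sum `σ_s(n) = ∑_{d ∣ n} d^s` with complex exponent. -/
noncomputable def csigma (s : ℂ) (n : ℕ) : ℂ := ∑ d ∈ n.divisors, (d : ℂ) ^ s

/-- The modified Bessel function of the second kind,
`K_ν(z) = ∫_0^∞ e^{-z cosh t} cosh(ν t) dt` (for `Re z > 0`). -/
noncomputable def Kbes (ν z : ℂ) : ℂ :=
  ∫ t in Set.Ioi (0 : ℝ), Complex.exp (-z * (Real.cosh t : ℂ)) * Complex.cosh (ν * (t : ℂ))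

/-- The function `f(x,s)` of Theorem `newthm`; the term at `n = x` (when `x` is a
positive integer) is interpreted as its limiting value `(s-1) x^{s-3} / 2`. -/
noncomputable def fRam (x : ℝ) (s : ℂ) : ℂ :=
  (x : ℂ) ^ (s / 2) * riemannZeta (1 + s) / (2 * Complex.sin ((π : ℂ) * s / 2))
  + (x : ℂ) ^ (2 - s / 2) / ((π : ℂ) * Complex.cos ((π : ℂ) * s / 2)) *
      ∑' n : ℕ, csigma (-s) (n + 1) *
        (if x = ((n : ℝ) + 1) then (s - 1) * ((n : ℂ) + 1) ^ (s - 3) / 2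
          else (((n : ℂ) + 1) ^ (s - 1) - (x : ℂ) ^ (s - 1)) /
            (((n : ℂ) + 1) ^ 2 - (x : ℂ) ^ 2))
  - (2 : ℂ) ^ (-s) * (π : ℂ) ^ (-1 - s) * (x : ℂ) ^ (-s / 2) *
      (Complex.Gamma s * riemannZeta s *
          ((π : ℂ) * Complex.tan ((π : ℂ) * s / 2) -
            2 * ((Real.eulerMascheroniConstant : ℂ) + (Real.log x : ℂ)))
        - ((2 * π : ℝ) : ℂ) ^ s * deriv riemannZeta (1 - s) /
            Complex.cos ((π : ℂ) * s / 2))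

/-- The Koshliakov-type series `φ(t,s)`. -/
noncomputable def phiK (t : ℝ) (s : ℂ) : ℂ :=
  2 * ∑' n : ℕ, csigma (-s) (n + 1) * ((n : ℂ) + 1) ^ (s / 2) *
    (Complex.exp ((π : ℂ) * Complex.I * s / 4) *
        Kbes s (4 * (π : ℂ) * Complex.exp ((π : ℂ) * Complex.I / 4) *
          (Real.sqrt (((n : ℝ) + 1) * t) : ℂ))
      + Complex.exp (-(π : ℂ) * Complex.I * s / 4) *
        Kbes s (4 * (π : ℂ) * Complex.exp (-(π : ℂ) * Complex.I / 4) *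
          (Real.sqrt (((n : ℝ) + 1) * t) : ℂ)))


open Filter Topology in
/-- Holomorphic dependence of an integral on a parameter. -/
theorem aux_hol_param {α : Type*} [MeasurableSpace α] {μ : Measure α} {F : ℂ → α → ℂ} {z₀ : ℂ}
    {r : ℝ} (hr : 0 < r) {bound : α → ℝ}
    (hmeas : ∀ z ∈ Metric.ball z₀ r, AEStronglyMeasurable (F z) μ)
    (hdiff : ∀ᵐ a ∂μ, DifferentiableOn ℂ (fun z => F z a) (Metric.ball z₀ r))
    (hIntg : Integrable bound μ)
    (hb : ∀ᵐ a ∂μ, ∀ z ∈ Metric.ball z₀ r, ‖F z a‖ ≤ bound a) :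
    DifferentiableAt ℂ (fun z => ∫ a, F z a ∂μ) z₀ := by
  have hz0 : z₀ ∈ Metric.ball z₀ r := Metric.mem_ball_self hr
  have hr2 : 0 < r / 2 := by positivity
  have hsub : ∀ x ∈ Metric.ball z₀ (r/2), Metric.closedBall x (r/4) ⊆ Metric.ball z₀ r := by
    intro x hx y hy
    rw [Metric.mem_ball] at *
    rw [Metric.mem_closedBall] at hy
    linarith [dist_triangle y x z₀]
  have key := hasDerivAt_integral_of_dominated_loc_of_deriv_le (μ := μ) (F := F) (x₀ := z₀)
    (s := Metric.ball z₀ (r/2)) (bound := fun a => bound a / (r/4))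
    (F' := fun z a => deriv (fun z => F z a) z) (Metric.ball_mem_nhds _ hr2)
    (by
      filter_upwards [Metric.ball_mem_nhds z₀ hr] with x hx using hmeas x hx)
    (by
      refine Integrable.mono' hIntg (hmeas _ hz0) ?_
      filter_upwards [hb] with a ha using ha _ hz0)
    (by
      have hseq : ∀ n : ℕ, z₀ + ((r / 2 / (n + 1) : ℝ) : ℂ) ∈ Metric.ball z₀ r := by
        intro n
        rw [Metric.mem_ball, dist_eq_norm]
        have h1 : r / 2 / ((n : ℝ) + 1) ≤ r / 2 := by
          apply div_le_self hr2.le; linarith [(Nat.cast_nonneg n : (0:ℝ) ≤ n)]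
        have h2 : 0 ≤ r / 2 / ((n : ℝ) + 1) := by positivity
        simp only [add_sub_cancel_left, norm_real, Real.norm_eq_abs, abs_of_nonneg h2]
        linarith
      refine aestronglyMeasurable_of_tendsto_ae (u := atTop)
        (f := fun (n : ℕ) a => ((r / 2 / (n + 1) : ℝ) : ℂ)⁻¹ •
          (F (z₀ + ((r / 2 / (n + 1) : ℝ) : ℂ)) a - F z₀ a)) ?_ ?_
      · intro n
        exact AEStronglyMeasurable.const_smul ((hmeas _ (hseq n)).sub (hmeas _ hz0)) (((r / 2 / (n + 1) : ℝ) : ℂ)⁻¹)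
      · filter_upwards [hdiff] with a ha
        have hd : HasDerivAt (fun z => F z a) (deriv (fun z => F z a) z₀) z₀ :=
          (ha.differentiableAt (Metric.ball_mem_nhds _ hr)).hasDerivAt
        have h1 := hasDerivAt_iff_tendsto_slope_zero.mp hd
        refine h1.comp (tendsto_nhdsWithin_iff.mpr ⟨?_, ?_⟩)
        · have : Tendsto (fun n : ℕ => r / 2 / ((n : ℝ) + 1)) atTop (𝓝 0) := by
            refine Tendsto.div_atTop tendsto_const_nhds ?_
            exact tendsto_atTop_add_const_right _ _ tendsto_natCast_atTop_atTop
          have h2 := (continuous_ofReal.tendsto (0:ℝ)).comp this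
          simpa [Function.comp_def] using h2
        · refine Eventually.of_forall fun n => ?_
          have : r / 2 / ((n : ℝ) + 1) ≠ 0 := by positivity
          simpa using (ofReal_ne_zero.mpr this))
    (by
      filter_upwards [hdiff, hb] with a ha hba x hx
      refine Complex.norm_deriv_le_of_forall_mem_sphere_norm_le (by positivity) ?_ ?_
      · refine DifferentiableOn.diffContOnCl ?_
        rw [closure_ball _ (by positivity)]
        exact ha.mono (hsub x hx)
      · intro z hz
        exact hba z (hsub x hx (Metric.sphere_subset_closedBall hz)))
    (hIntg.div_const _)
    (by
      filter_upwards [hdiff] with a ha x hx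
      exact (ha.differentiableAt (Metric.isOpen_ball.mem_nhds
        (Metric.ball_subset_ball (by linarith) hx))).hasDerivAt)
  exact key.2.differentiableAt

/-- A vertical strip minus a countable set is preconnected. -/
theorem aux_strip_preconnected {a b : ℝ} (hab : a < b) {S : Set ℂ} (hS : S.Countable) :
    IsPreconnected ({z : ℂ | a < z.re ∧ z.re < b} \ S) := by
  let f : ℂ → ℂ := fun z => ((a + (b - a) * (Real.arctan z.re / π + 1/2) : ℝ) : ℂ) + z.im * I
  have hre : ∀ z, (f z).re = a + (b - a) * (Real.arctan z.re / π + 1/2) := by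
    intro z
    simp only [f, add_re, ofReal_re, mul_re, ofReal_im, I_re, I_im]; ring
  have him : ∀ z, (f z).im = z.im := by
    intro z
    simp only [f, add_im, ofReal_re, mul_im, ofReal_im, I_re, I_im]; ring
  have hba : 0 < b - a := by linarith
  have hpi := Real.pi_pos
  have hinj : Function.Injective f := by
    intro z w h
    have h1 := congrArg Complex.re h
    have h2 := congrArg Complex.im h
    rw [hre, hre] at h1
    rw [him, him] at h2
    refine Complex.ext ?_ h2
    apply Real.arctan_injective
    have h3 : (b - a) * (Real.arctan z.re / π + 1/2) = (b - a) * (Real.arctan w.re / π + 1/2) := by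
      linarith
    have h4 := mul_left_cancel₀ hba.ne' h3
    have h5 : Real.arctan z.re / π = Real.arctan w.re / π := by linarith
    exact (div_left_inj' hpi.ne').mp h5
  have hcont : Continuous f := by
    have : Continuous Real.arctan := Real.continuous_arctan
    fun_prop
  have himage : f '' (f ⁻¹' S)ᶜ = {z : ℂ | a < z.re ∧ z.re < b} \ S := by
    ext w
    constructor
    · rintro ⟨z, hz, rfl⟩
      refine ⟨?_, hz⟩
      have h1 := Real.neg_pi_div_two_lt_arctan z.re
      have h2 := Real.arctan_lt_pi_div_two z.re
      have h3 : 0 < Real.arctan z.re / π + 1/2 := by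
        have : Real.arctan z.re / π + 1/2 = (Real.arctan z.re + π/2) / π := by field_simp
        rw [this]; apply div_pos _ hpi; linarith
      have h4 : Real.arctan z.re / π + 1/2 < 1 := by
        have : Real.arctan z.re / π + 1/2 = (Real.arctan z.re + π/2) / π := by field_simp
        rw [this, div_lt_one hpi]; linarith
      simp only [Set.mem_ofPred_eq, hre]
      constructor
      · have := mul_pos hba h3; linarith
      · have := mul_lt_mul_of_pos_left h4 hba; linarith
    · rintro ⟨⟨h1, h2⟩, hw⟩
      have h3 : 0 < (w.re - a) / (b - a) := div_pos (by linarith) hba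
      have h4 : (w.re - a) / (b - a) < 1 := by rw [div_lt_one hba]; linarith
      have h5 : f ⟨Real.tan (π * ((w.re - a) / (b - a) - 1/2)), w.im⟩ = w := by
        refine Complex.ext ?_ ?_
        · rw [hre]
          simp only
          rw [Real.arctan_tan (by nlinarith) (by nlinarith)]
          field_simp
          ring
        · rw [him]
      refine ⟨_, ?_, h5⟩
      rw [Set.mem_compl_iff, Set.mem_preimage, h5]; exact hw
  rw [← himage]
  refine IsPreconnected.image ?_ _ hcont.continuousOn
  exact ((hS.preimage hinj).isConnected_compl_of_one_lt_rank
    (by simp [Complex.rank_real_complex])).isPreconnected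

theorem aux_cosh_le_exp_abs (x : ℝ) : Real.cosh x ≤ Real.exp |x| := by
  rw [Real.cosh_eq]
  have h1 : Real.exp x ≤ Real.exp |x| := Real.exp_le_exp.mpr (le_abs_self x)
  have h2 : Real.exp (-x) ≤ Real.exp |x| := Real.exp_le_exp.mpr (neg_le_abs x)
  linarith

theorem aux_K_bd {c : ℝ} (hc : 0 < c) (σ : ℝ) {u : ℝ} (hu : 0 ≤ u) :
    Real.exp (-c * Real.cosh u) * Real.cosh (σ * u) ≤
      Real.exp ((|σ| + 1) ^ 2 / c) * Real.exp (-u) := by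
  have h1 : Real.cosh (σ * u) ≤ Real.exp (|σ| * u) := by
    have := aux_cosh_le_exp_abs (σ * u)
    rwa [abs_mul, abs_of_nonneg hu] at this
  have h2 : u ^ 2 / 4 ≤ Real.cosh u := by
    rw [Real.cosh_eq]
    have := Real.quadratic_le_exp_of_nonneg hu
    have := Real.exp_pos (-u)
    nlinarith
  calc Real.exp (-c * Real.cosh u) * Real.cosh (σ * u)
      ≤ Real.exp (-c * Real.cosh u) * Real.exp (|σ| * u) := by gcongr
    _ = Real.exp (-c * Real.cosh u + |σ| * u) := by rw [Real.exp_add]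
    _ ≤ Real.exp ((|σ| + 1) ^ 2 / c + -u) := by
        apply Real.exp_le_exp.mpr
        have h3 : c * (u ^ 2 / 4) ≤ c * Real.cosh u := by gcongr
        have h4 : (|σ| + 1) * u - c * (u ^ 2 / 4) ≤ (|σ| + 1) ^ 2 / c := by
          rw [le_div_iff₀ hc]
          nlinarith [sq_nonneg ((|σ| + 1) - c * u / 2)]
        linarith
    _ = _ := by rw [Real.exp_add]

noncomputable def auxKR (σ c : ℝ) : ℝ :=
  ∫ u in Set.Ioi (0 : ℝ), Real.exp (-c * Real.cosh u) * Real.cosh (σ * u)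

theorem aux_KR_integrable {c : ℝ} (hc : 0 < c) (σ : ℝ) :
    IntegrableOn (fun u : ℝ => Real.exp (-c * Real.cosh u) * Real.cosh (σ * u))
      (Set.Ioi 0) := by
  have h0 : IntegrableOn (fun u : ℝ => Real.exp (-u)) (Set.Ioi 0) := by
    simpa using exp_neg_integrableOn_Ioi 0 one_pos
  refine Integrable.mono' (h0.const_mul (Real.exp ((|σ| + 1) ^ 2 / c))) ?_ ?_
  · exact (Continuous.aestronglyMeasurable (by fun_prop))
  · filter_upwards [ae_restrict_mem measurableSet_Ioi] with u hu
    rw [Real.norm_of_nonneg (by positivity)]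
    exact aux_K_bd hc σ (le_of_lt hu)

theorem aux_KR_nonneg (σ c : ℝ) : 0 ≤ auxKR σ c :=
  integral_nonneg (fun u => by positivity)

theorem aux_norm_cosh_le (z : ℂ) : ‖Complex.cosh z‖ ≤ Real.cosh z.re := by
  rw [Complex.cosh, Real.cosh_eq, norm_div]
  have := norm_add_le (cexp z) (cexp (-z))
  rw [Complex.norm_exp, Complex.norm_exp, neg_re] at this
  simpa using by linarith

theorem aux_K_integrand_norm {s z : ℂ} {σ c : ℝ} (hs : |s.re| ≤ σ) (hz : c ≤ z.re)
    {u : ℝ} (hu : 0 ≤ u) :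
    ‖Complex.exp (-z * (Real.cosh u : ℂ)) * Complex.cosh (s * (u : ℂ))‖ ≤
      Real.exp (-(z.re - c)) * (Real.exp (-c * Real.cosh u) * Real.cosh (σ * u)) := by
  rw [norm_mul, Complex.norm_exp, ← mul_assoc, ← Real.exp_add]
  have h1 : (-z * (Real.cosh u : ℂ)).re = -z.re * Real.cosh u := by
    rw [Complex.re_mul_ofReal, neg_re]
  rw [h1]
  have h2 : ‖Complex.cosh (s * (u : ℂ))‖ ≤ Real.cosh (σ * u) := by
    refine (aux_norm_cosh_le _).trans ?_
    rw [Complex.re_mul_ofReal, Real.cosh_le_cosh, abs_mul, abs_mul]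
    exact mul_le_mul_of_nonneg_right (hs.trans (le_abs_self _)) (abs_nonneg _)
  have h3 := Real.one_le_cosh u
  gcongr
  nlinarith

theorem aux_K_norm {s z : ℂ} {σ c : ℝ} (hc : 0 < c) (hs : |s.re| ≤ σ) (hz : c ≤ z.re) :
    ‖Kbes s z‖ ≤ Real.exp (-(z.re - c)) * auxKR σ c := by
  unfold Kbes auxKR
  rw [← integral_const_mul]
  refine norm_integral_le_of_norm_le ((aux_KR_integrable hc σ).const_mul _) ?_
  filter_upwards [ae_restrict_mem measurableSet_Ioi] with u hu
  exact aux_K_integrand_norm hs hz (le_of_lt hu)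

theorem aux_K_diff_s {z : ℂ} (hz : 0 < z.re) : Differentiable ℂ (fun s => Kbes s z) := by
  intro s
  unfold Kbes
  refine aux_hol_param (r := 1) one_pos (μ := volume.restrict (Set.Ioi (0:ℝ)))
    (F := fun s u => Complex.exp (-z * (Real.cosh u : ℂ)) * Complex.cosh (s * (u : ℂ)))
    (bound := fun u => Real.exp (-(z.re - z.re)) *
      (Real.exp (-z.re * Real.cosh u) * Real.cosh ((|s.re| + 1) * u))) ?_ ?_ ?_ ?_
  · intro w _
    exact (Continuous.aestronglyMeasurable (by fun_prop))
  · refine Filter.Eventually.of_forall fun u => ?_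
    apply Differentiable.differentiableOn
    fun_prop
  · exact (aux_KR_integrable hz _).const_mul _
  · filter_upwards [ae_restrict_mem measurableSet_Ioi] with u hu w hw
    refine aux_K_integrand_norm ?_ le_rfl (le_of_lt hu)
    have h1 := Complex.abs_re_le_norm (w - s)
    rw [Metric.mem_ball, dist_eq_norm] at hw
    have h2 : |w.re| ≤ |s.re| + |(w - s).re| := by
      have := abs_add_le s.re (w - s).re
      simpa using this
    linarith

theorem aux_K_diff_z (s : ℂ) {z : ℂ} (hz : 0 < z.re) : DifferentiableAt ℂ (fun z => Kbes s z) z := by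
  unfold Kbes
  refine aux_hol_param (r := z.re / 2) (by linarith) (μ := volume.restrict (Set.Ioi (0:ℝ)))
    (F := fun z u => Complex.exp (-z * (Real.cosh u : ℂ)) * Complex.cosh (s * (u : ℂ)))
    (bound := fun u => 
      (Real.exp (-(z.re / 2) * Real.cosh u) * Real.cosh (|s.re| * u))) ?_ ?_ ?_ ?_
  · intro w _
    exact (Continuous.aestronglyMeasurable (by fun_prop))
  · refine Filter.Eventually.of_forall fun u => ?_
    apply Differentiable.differentiableOn
    fun_prop
  · exact (aux_KR_integrable (by linarith) _)
  · filter_upwards [ae_restrict_mem measurableSet_Ioi] with u hu w hw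
    have h1 := Complex.abs_re_le_norm (w - z)
    rw [Metric.mem_ball, dist_eq_norm] at hw
    have h2 := neg_abs_le (w - z).re
    rw [sub_re] at h1 h2
    have h3 : z.re / 2 ≤ w.re := by linarith
    refine (aux_K_integrand_norm (c := z.re / 2) le_rfl h3 (le_of_lt hu)).trans ?_
    refine mul_le_of_le_one_left (by positivity) ?_
    rw [Real.exp_le_one_iff]; linarith

theorem aux_inv_exp_integrable {σ b : ℝ} (hσ : 0 < σ) (hb : 0 < b) :
    IntegrableOn (fun y : ℝ => y ^ (-σ - 1) * Real.exp (-b / y)) (Set.Ioi 0) := by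
  have h1 : IntegrableOn (fun v : ℝ => v ^ (σ - 1) * Real.exp (-b * v)) (Set.Ioi 0) := by
    have := integrableOn_rpow_mul_exp_neg_mul_rpow (p := 1) (s := σ - 1) (b := b) (by linarith)
      zero_lt_one hb
    simpa using this
  have h2 := (integrableOn_Ioi_comp_rpow_iff (fun v : ℝ => v ^ (σ - 1) * Real.exp (-b * v))
    (p := -1) (by norm_num)).mpr h1
  refine h2.congr_fun ?_ measurableSet_Ioi
  intro y hy
  have hy : 0 < y := hy
  simp only [abs_neg, abs_one, one_mul, smul_eq_mul]
  rw [← Real.rpow_mul hy.le, ← mul_assoc, ← Real.rpow_add hy, Real.rpow_neg_one, div_eq_mul_inv]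
  congr 2
  ring

theorem aux_inv_exp_integral {s : ℂ} {b : ℝ} (hs : 0 < s.re) (hb : 0 < b) :
    ∫ y in Set.Ioi (0:ℝ), (y : ℂ) ^ (-s - 1) * cexp (-b / y) = Complex.Gamma s * (b : ℂ) ^ (-s) := by
  have h1 := Complex.integral_cpow_mul_exp_neg_mul_Ioi hs hb
  have h2 := integral_comp_rpow_Ioi (fun v : ℝ => (v : ℂ) ^ (s - 1) * cexp (-(b * v)))
    (p := -1) (by norm_num)
  rw [h1] at h2
  rw [mul_comm, cpow_neg, ← inv_cpow _ _ (by rw [arg_ofReal_of_nonneg hb.le]; exact Real.pi_pos.ne),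
    ← one_div, ← h2]
  refine setIntegral_congr_fun measurableSet_Ioi ?_
  intro y hy
  have hy : 0 < y := hy
  have hy0 : (y : ℂ) ≠ 0 := ofReal_ne_zero.mpr hy.ne'
  simp only [abs_neg, abs_one, one_mul, real_smul]
  rw [Real.rpow_neg_one, ofReal_inv, inv_cpow _ _ (by rw [arg_ofReal_of_nonneg hy.le]; exact Real.pi_pos.ne),
    ← cpow_neg, ofReal_cpow hy.le, ← mul_assoc, ← cpow_add _ _ hy0]
  congr 2
  · push_cast; ring
  · field_simp

/-- The auxiliary integral. -/
noncomputable def auxJ (s : ℂ) (b : ℝ) (a : ℂ) : ℂ :=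
  ∫ y in Set.Ioi (0:ℝ), (y : ℂ) ^ (-s - 1) * cexp (-a * y - b / y)

theorem aux_J_norm {s a : ℂ} {b y : ℝ} (ha : 0 ≤ a.re) (hy : 0 < y) :
    ‖(y : ℂ) ^ (-s - 1) * cexp (-a * y - b / y)‖ ≤ y ^ (-s.re - 1) * Real.exp (-b / y) := by
  rw [norm_mul, Complex.norm_exp, norm_cpow_eq_rpow_re_of_pos hy]
  have h1 : (-a * y - b / y : ℂ).re = -a.re * y - b / y := by
    rw [sub_re, re_mul_ofReal, neg_re, ← ofReal_div, ofReal_re]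
  rw [h1]
  have : (-s - 1 : ℂ).re = -s.re - 1 := by simp
  rw [this]
  gcongr
  have := mul_nonneg ha hy.le
  rw [neg_div]
  linarith

theorem aux_J_meas (s : ℂ) (b : ℝ) (a : ℂ) : AEStronglyMeasurable
    (fun y : ℝ => (y : ℂ) ^ (-s - 1) * cexp (-a * y - b / y)) (volume.restrict (Set.Ioi 0)) := by
  refine ContinuousOn.aestronglyMeasurable ?_ measurableSet_Ioi
  intro y hy
  have hy : 0 < y := hy
  have hy0 : (y : ℂ) ≠ 0 := ofReal_ne_zero.mpr hy.ne'
  apply ContinuousAt.continuousWithinAt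
  have h1 : ContinuousAt (fun y : ℝ => (y : ℂ) ^ (-s - 1)) y :=
    continuousAt_ofReal_cpow_const _ _ (Or.inr hy.ne')
  have h2 : ContinuousAt (fun y : ℝ => cexp (-a * y - b / y)) y := by
    have : ContinuousAt (fun y : ℝ => (y : ℂ)) y := continuous_ofReal.continuousAt
    refine ContinuousAt.cexp ?_
    exact (this.const_mul _).sub (continuousAt_const.div this hy0)
  exact h1.mul h2

theorem aux_J_diff {s : ℂ} {b : ℝ} (hs : 0 < s.re) (hb : 0 < b) {a : ℂ} (ha : 0 < a.re) :
    DifferentiableAt ℂ (auxJ s b) a := by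
  unfold auxJ
  refine aux_hol_param (r := a.re) ha (μ := volume.restrict (Set.Ioi (0:ℝ)))
    (F := fun a y => (y : ℂ) ^ (-s - 1) * cexp (-a * y - b / y))
    (bound := fun y => y ^ (-s.re - 1) * Real.exp (-b / y)) ?_ ?_ ?_ ?_
  · intro w _
    exact aux_J_meas s b w
  · refine Filter.Eventually.of_forall fun u => ?_
    apply Differentiable.differentiableOn
    fun_prop
  · exact aux_inv_exp_integrable hs hb
  · filter_upwards [ae_restrict_mem measurableSet_Ioi] with u hu w hw
    apply aux_J_norm _ hu
    have h1 := Complex.abs_re_le_norm (w - a)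
    rw [Metric.mem_ball, dist_eq_norm] at hw
    have h2 := neg_abs_le (w - a).re
    rw [sub_re] at h1 h2
    linarith

theorem aux_J_cont {s : ℂ} {b : ℝ} (hs : 0 < s.re) (hb : 0 < b) :
    ContinuousOn (auxJ s b) {a | 0 ≤ a.re} := by
  unfold auxJ
  refine continuousOn_of_dominated (bound := fun y => y ^ (-s.re - 1) * Real.exp (-b / y)) ?_ ?_ ?_ ?_
  · intro w _
    exact aux_J_meas s b w
  · intro w hw
    filter_upwards [ae_restrict_mem measurableSet_Ioi] with u hu
    exact aux_J_norm hw hu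
  · exact aux_inv_exp_integrable hs hb
  · refine Filter.Eventually.of_forall fun u => ?_
    apply Continuous.continuousOn
    fun_prop

theorem aux_K_full_integrable (s : ℂ) {c : ℝ} (hc : 0 < c) :
    Integrable (fun x : ℝ => cexp (-s * x) * cexp (-c * Real.cosh x)) := by
  have key : ∀ s : ℂ, IntegrableOn (fun x : ℝ => cexp (-s * x) * cexp (-c * Real.cosh x)) (Set.Ioi 0) := by
    intro s
    refine Integrable.mono' ((aux_KR_integrable hc s.re).const_mul 2) ?_ ?_
    · exact (Continuous.aestronglyMeasurable (by fun_prop))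
    · filter_upwards [ae_restrict_mem measurableSet_Ioi] with u hu
      rw [norm_mul, Complex.norm_exp, Complex.norm_exp, re_mul_ofReal, neg_re, 
        show (-(c:ℂ)) = ((-c : ℝ) : ℂ) by push_cast; rfl, ← ofReal_mul, ofReal_re]
      have : Real.exp (-s.re * u) ≤ 2 * Real.cosh (s.re * u) := by
        rw [Real.cosh_eq]
        have := Real.exp_pos (s.re * u)
        rw [neg_mul]; linarith
      have h2 := Real.exp_pos (-c * Real.cosh u)
      nlinarith
  rw [← integrableOn_univ, ← Set.Iic_union_Ioi (a := (0:ℝ)), integrableOn_union]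
  refine ⟨?_, key s⟩
  have h1 := key (-s)
  rw [integrableOn_Iic_iff_integrableOn_Iio]
  have h2 := ((integrable_indicator_iff measurableSet_Ioi).mpr h1).comp_neg
  rw [← integrable_indicator_iff measurableSet_Iio]
  refine h2.congr (Filter.Eventually.of_forall fun x => ?_)
  beta_reduce
  by_cases hx : x < 0
  · rw [Set.indicator_of_mem (show -x ∈ Set.Ioi (0:ℝ) by simpa using hx),
      Set.indicator_of_mem (show x ∈ Set.Iio (0:ℝ) from hx)]
    simp
  · rw [Set.indicator_of_notMem (show -x ∉ Set.Ioi (0:ℝ) by simpa using hx),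
      Set.indicator_of_notMem (show x ∉ Set.Iio (0:ℝ) from hx)]

theorem aux_K_full (s : ℂ) {c : ℝ} (hc : 0 < c) :
    ∫ x : ℝ, cexp (-s * x) * cexp (-c * Real.cosh x) = 2 * Kbes s c := by
  have hi := aux_K_full_integrable s hc
  have hi2 := aux_K_full_integrable (-s) hc
  rw [← intervalIntegral.integral_Iic_add_Ioi (b := 0) hi.integrableOn hi.integrableOn]
  have h1 := integral_comp_neg_Ioi 0 (fun x : ℝ => cexp (-s * x) * cexp (-c * Real.cosh x))
  rw [neg_zero] at h1
  rw [← h1, ← integral_add (by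
    have := hi2.integrableOn (s := Set.Ioi 0)
    rw [IntegrableOn] at this
    simpa using this) hi.integrableOn]
  unfold Kbes
  rw [← integral_const_mul]
  refine setIntegral_congr_fun measurableSet_Ioi fun x _ => ?_
  simp only [Real.cosh_neg, ofReal_neg]
  rw [Complex.cosh]
  ring_nf

theorem aux_J_real (s : ℂ) {a b : ℝ} (ha : 0 < a) (hb : 0 < b) :
    auxJ s b a = 2 * ((a / b : ℝ) : ℂ) ^ (s / 2) * Kbes s ((2 * Real.sqrt (a * b) : ℝ) : ℂ) := by
  have hba : 0 < Real.sqrt (b / a) := Real.sqrt_pos.mpr (by positivity)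
  set q := Real.sqrt (b / a) with hq
  have himg : (fun x : ℝ => q * Real.exp x) '' Set.univ = Set.Ioi 0 := by
    ext y
    constructor
    · rintro ⟨x, -, rfl⟩
      exact mul_pos hba (Real.exp_pos x)
    · intro hy
      have hy : 0 < y := hy
      refine ⟨Real.log (y / q), trivial, ?_⟩
      simp only
      rw [Real.exp_log (by positivity)]
      field_simp
  have h := integral_image_eq_integral_abs_deriv_smul (s := Set.univ)
    (f := fun x : ℝ => q * Real.exp x) (f' := fun x : ℝ => q * Real.exp x) MeasurableSet.univ
    (fun x _ => ((Real.hasDerivAt_exp x).const_mul q).hasDerivWithinAt)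
    (fun x _ y _ hxy => Real.exp_injective (mul_left_cancel₀ hba.ne' hxy))
    (fun y : ℝ => (y : ℂ) ^ (-s - 1) * cexp (-a * y - b / y))
  rw [himg] at h
  unfold auxJ
  rw [h, setIntegral_univ]
  have hc : 0 < 2 * Real.sqrt (a * b) := by positivity
  have hK := aux_K_full s hc
  rw [mul_right_comm, ← hK, mul_comm, ← integral_const_mul]
  congr 1
  funext x
  have hp : 0 < q * Real.exp x := by positivity
  have hp0 : ((q * Real.exp x : ℝ) : ℂ) ≠ 0 := ofReal_ne_zero.mpr hp.ne'
  rw [abs_of_pos hp, real_smul, ← mul_assoc]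
  have e1 : ((q * Real.exp x : ℝ) : ℂ) * ((q * Real.exp x : ℝ) : ℂ) ^ (-s - 1) =
      ((a / b : ℝ) : ℂ) ^ (s / 2) * cexp (-s * x) := by
    nth_rewrite 1 [← cpow_one ((q * Real.exp x : ℝ) : ℂ)]
    rw [← cpow_add _ _ hp0, cpow_def_of_ne_zero hp0, cpow_def_of_ne_zero (by
      apply ofReal_ne_zero.mpr; positivity), ← Complex.exp_add, ← ofReal_log hp.le,
      ← ofReal_log (by positivity), Real.log_mul hba.ne' (Real.exp_pos x).ne', Real.log_exp,
      hq, Real.log_sqrt (by positivity), Real.log_div hb.ne' ha.ne', Real.log_div ha.ne' hb.ne']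
    congr 1
    push_cast
    ring
  rw [e1, mul_assoc]
  congr 2
  have e2 : a * (q * Real.exp x) + b / (q * Real.exp x) = 2 * Real.sqrt (a * b) * Real.cosh x := by
    have h3 : a * q = Real.sqrt (a * b) := by
      rw [hq, ← Real.sqrt_sq ha.le, ← Real.sqrt_mul (by positivity), Real.sqrt_sq ha.le]
      congr 1; field_simp
    have h4 : b / q = Real.sqrt (a * b) := by
      rw [div_eq_iff hba.ne', hq, ← Real.sqrt_mul (by positivity)]
      rw [show a * b * (b / a) = b ^ 2 by field_simp, Real.sqrt_sq hb.le]
    rw [Real.cosh_eq, ← mul_assoc, h3, div_mul_eq_div_div, h4, Real.exp_neg]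
    field_simp
  have e3 : (-(a:ℂ) * ((q * Real.exp x : ℝ) : ℂ) - b / ((q * Real.exp x : ℝ) : ℂ)) =
      ((-(a * (q * Real.exp x) + b / (q * Real.exp x)) : ℝ) : ℂ) := by
    push_cast; ring
  rw [e3, e2]
  push_cast
  ring_nf

theorem aux_sqrt_re_pos {z : ℂ} (hz : z ∈ slitPlane) : 0 < (z ^ (1 / 2 : ℂ)).re := by
  have hz0 := slitPlane_ne_zero hz
  rw [cpow_def_of_ne_zero hz0, Complex.exp_re]
  apply mul_pos (Real.exp_pos _)
  have h1 : (Complex.log z * (1 / 2)).im = z.arg / 2 := by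
    rw [show (1 / 2 : ℂ) = ((1 / 2 : ℝ) : ℂ) by push_cast; rfl, im_mul_ofReal, log_im]; ring
  rw [h1]
  have h2 := neg_pi_lt_arg z
  have h3 := (mem_slitPlane_iff_arg.mp hz).1
  have h4 := lt_of_le_of_ne (arg_le_pi z) h3
  apply Real.cos_pos_of_mem_Ioo
  constructor <;> linarith

noncomputable def auxJK (s : ℂ) (b : ℝ) (a : ℂ) : ℂ :=
  2 * (a / b) ^ (s / 2) * Kbes s (2 * (a * b) ^ (1 / 2 : ℂ))

theorem aux_JK_diff (s : ℂ) {b : ℝ} (hb : 0 < b) {a : ℂ} (ha : a ∈ slitPlane) :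
    DifferentiableAt ℂ (auxJK s b) a := by
  have h1 : a / b ∈ slitPlane := by
    rw [div_eq_mul_inv, ← ofReal_inv, mem_slitPlane_iff, re_mul_ofReal, im_mul_ofReal]
    rcases mem_slitPlane_iff.mp ha with h | h
    · left; positivity
    · right; positivity
  have h2 : a * b ∈ slitPlane := by
    rw [mem_slitPlane_iff, re_mul_ofReal, im_mul_ofReal]
    rcases mem_slitPlane_iff.mp ha with h | h
    · left; positivity
    · right; positivity
  unfold auxJK
  have h3 : 0 < (2 * (a * b) ^ (1 / 2 : ℂ)).re := by
    have := aux_sqrt_re_pos h2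
    rw [show (2:ℂ) = ((2:ℝ):ℂ) by norm_num, re_ofReal_mul]; push_cast
    linarith
  have h4 : DifferentiableAt ℂ (fun a : ℂ => 2 * (a * b) ^ (1 / 2 : ℂ)) a := by
    refine DifferentiableAt.const_mul ?_ _
    refine DifferentiableAt.cpow_const ?_ h2
    fun_prop
  have h5 := DifferentiableAt.comp a (aux_K_diff_z s h3) h4
  refine DifferentiableAt.mul (DifferentiableAt.const_mul ?_ _) h5
  refine DifferentiableAt.cpow_const ?_ h1
  fun_prop

theorem aux_J_eq_half {s : ℂ} {b : ℝ} (hs : 0 < s.re) (hb : 0 < b) :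
    Set.EqOn (auxJ s b) (auxJK s b) {a | 0 < a.re} := by
  have hopen : IsOpen {a : ℂ | 0 < a.re} := isOpen_lt continuous_const continuous_re
  have hf : AnalyticOnNhd ℂ (auxJ s b) {a | 0 < a.re} := by
    apply DifferentiableOn.analyticOnNhd _ hopen
    intro a ha
    exact (aux_J_diff hs hb ha).differentiableWithinAt
  have hg : AnalyticOnNhd ℂ (auxJK s b) {a | 0 < a.re} := by
    apply DifferentiableOn.analyticOnNhd _ hopen
    intro a ha
    exact (aux_JK_diff s hb (mem_slitPlane_iff.mpr (Or.inl ha))).differentiableWithinAt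
  have hpre : IsPreconnected {a : ℂ | 0 < a.re} := (convex_halfSpace_re_gt 0).isPreconnected
  refine hf.eqOn_of_preconnected_of_frequently_eq hg hpre (z₀ := 1) (by simp) ?_
  have hreal : ∀ r : ℝ, 0 < r → auxJ s b r = auxJK s b r := by
    intro r hr
    rw [aux_J_real s hr hb, auxJK]
    have : ((r:ℂ) * b) ^ (1 / 2 : ℂ) = ((Real.sqrt (r * b) : ℝ) : ℂ) := by
      rw [Real.sqrt_eq_rpow, ofReal_cpow (by positivity)]
      push_cast; rfl
    rw [this]; push_cast; rfl
  have hseq : Filter.Tendsto (fun n : ℕ => ((1 + 1 / ((n:ℝ) + 1) : ℝ) : ℂ)) Filter.atTop (nhdsWithin 1 {1}ᶜ) := by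
    refine tendsto_nhdsWithin_iff.mpr ⟨?_, ?_⟩
    · have h1 : Filter.Tendsto (fun n : ℕ => 1 + 1 / ((n:ℝ) + 1)) Filter.atTop (nhds (1 + 0)) :=
        tendsto_const_nhds.add tendsto_one_div_add_atTop_nhds_zero_nat
      have h2 := (continuous_ofReal.tendsto _).comp h1
      simpa [Function.comp_def] using h2
    · refine Filter.Eventually.of_forall fun n => ?_
      have : (1:ℝ) + 1 / ((n:ℝ) + 1) ≠ 1 := by
        have : 0 < 1 / ((n:ℝ) + 1) := by positivity
        linarith
      rw [Set.mem_compl_iff, Set.mem_singleton_iff]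
      exact_mod_cast this
  refine hseq.frequently (Filter.Frequently.of_forall fun n => ?_)
  apply hreal
  positivity

theorem aux_J_eq {s : ℂ} {b : ℝ} (hs : 0 < s.re) (hb : 0 < b) {a : ℂ} (ha : a.re = 0) (ha0 : a ≠ 0) :
    auxJ s b a = auxJK s b a := by
  have hc1 : ContinuousWithinAt (auxJ s b) {a | 0 < a.re} a :=
    ((aux_J_cont hs hb) a (by simp [ha])).mono (fun x hx => by
      have hx' : 0 < x.re := hx
      show 0 ≤ x.re
      exact hx'.le)
  have hsl : a ∈ slitPlane := by
    rw [mem_slitPlane_iff]; right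
    intro h; exact ha0 (Complex.ext ha h)
  have hc2 : ContinuousWithinAt (auxJK s b) {a | 0 < a.re} a :=
    (aux_JK_diff s hb hsl).continuousAt.continuousWithinAt
  have hcl : a ∈ closure {a : ℂ | 0 < a.re} := by
    rw [Complex.closure_setOf_lt_re]; simp [ha]
  have : (nhdsWithin a {a : ℂ | 0 < a.re}).NeBot := mem_closure_iff_nhdsWithin_neBot.mp hcl
  refine tendsto_nhds_unique hc1 (hc2.congr' ?_)
  filter_upwards [self_mem_nhdsWithin] with x hx using (aux_J_eq_half hs hb hx).symm

noncomputable def auxB (s : ℂ) (r : ℝ) : ℂ :=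
  Complex.exp ((π : ℂ) * Complex.I * s / 4) *
        Kbes s (4 * (π : ℂ) * Complex.exp ((π : ℂ) * Complex.I / 4) * (Real.sqrt r : ℂ))
      + Complex.exp (-(π : ℂ) * Complex.I * s / 4) *
        Kbes s (4 * (π : ℂ) * Complex.exp (-(π : ℂ) * Complex.I / 4) * (Real.sqrt r : ℂ))

noncomputable def auxc : ℝ := 4 * π * Real.cos (π / 4)

lemma aux_c_pos : 0 < auxc := by
  unfold auxc
  rw [Real.cos_pi_div_four]; positivity

lemma aux_arg_re (r : ℝ) : (4 * (π : ℂ) * Complex.exp ((π : ℂ) * Complex.I / 4) * (Real.sqrt r : ℂ)).re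
    = auxc * Real.sqrt r := by
  have : (4 * (π : ℂ) * Complex.exp ((π : ℂ) * Complex.I / 4) * (Real.sqrt r : ℂ))
      = ((4 * π * Real.sqrt r : ℝ) : ℂ) * Complex.exp (((π / 4 : ℝ) : ℂ) * Complex.I) := by
    push_cast; rw [show (π : ℂ) / 4 * Complex.I = (π : ℂ) * Complex.I / 4 by ring]; ring
  rw [this, Complex.re_ofReal_mul, Complex.exp_ofReal_mul_I_re, auxc]; ring

lemma aux_arg_re' (r : ℝ) : (4 * (π : ℂ) * Complex.exp (-(π : ℂ) * Complex.I / 4) * (Real.sqrt r : ℂ)).re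
    = auxc * Real.sqrt r := by
  have : (4 * (π : ℂ) * Complex.exp (-(π : ℂ) * Complex.I / 4) * (Real.sqrt r : ℂ))
      = ((4 * π * Real.sqrt r : ℝ) : ℂ) * Complex.exp (((-(π / 4) : ℝ) : ℂ) * Complex.I) := by
    push_cast; rw [show -((π : ℂ) / 4) * Complex.I = -(π : ℂ) * Complex.I / 4 by ring]; ring
  rw [this, Complex.re_ofReal_mul, Complex.exp_ofReal_mul_I_re, auxc, Real.cos_neg]; ring

noncomputable def auxBC (R r₀ : ℝ) : ℝ :=
  2 * Real.exp R * (Real.exp (auxc * Real.sqrt r₀) * auxKR R (auxc * Real.sqrt r₀))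

lemma aux_BC_nonneg (R r₀ : ℝ) : 0 ≤ auxBC R r₀ := by
  unfold auxBC
  have := aux_KR_nonneg R (auxc * Real.sqrt r₀)
  positivity

lemma aux_B_norm12 {s : ℂ} {R r₀ r : ℝ} (hs : ‖s‖ ≤ R) (h0 : 0 < r₀) (hr : r₀ ≤ r) :
    ‖Complex.exp ((π : ℂ) * Complex.I * s / 4) *
        Kbes s (4 * (π : ℂ) * Complex.exp ((π : ℂ) * Complex.I / 4) * (Real.sqrt r : ℂ))‖
      ≤ auxBC R r₀ / 2 * Real.exp (-auxc * Real.sqrt r) ∧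
    ‖Complex.exp (-(π : ℂ) * Complex.I * s / 4) *
        Kbes s (4 * (π : ℂ) * Complex.exp (-(π : ℂ) * Complex.I / 4) * (Real.sqrt r : ℂ))‖
      ≤ auxBC R r₀ / 2 * Real.exp (-auxc * Real.sqrt r) := by
  have hc := aux_c_pos
  have hq : 0 < auxc * Real.sqrt r₀ := mul_pos hc (Real.sqrt_pos.2 h0)
  have hle : auxc * Real.sqrt r₀ ≤ auxc * Real.sqrt r := by gcongr
  have hre : |s.re| ≤ R := (Complex.abs_re_le_norm s).trans hs
  have him : |s.im| ≤ R := (Complex.abs_im_le_norm s).trans hs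
  have k1 := aux_K_norm hq hre (le_of_le_of_eq hle (aux_arg_re r).symm)
  have k2 := aux_K_norm hq hre (le_of_le_of_eq hle (aux_arg_re' r).symm)
  rw [aux_arg_re] at k1
  rw [aux_arg_re'] at k2
  have hpi : π / 4 ≤ 1 := by linarith [Real.pi_le_four]
  have hpi0 : 0 ≤ π / 4 := by positivity
  have hR : 0 ≤ R := (norm_nonneg _).trans hs
  have e1 : ‖Complex.exp ((π : ℂ) * Complex.I * s / 4)‖ ≤ Real.exp R := by
    rw [Complex.norm_exp, Real.exp_le_exp]
    have : ((π : ℂ) * Complex.I * s / 4).re = -(π / 4) * s.im := by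
      have : (π : ℂ) * Complex.I * s / 4 = ((π / 4 : ℝ) : ℂ) * (Complex.I * s) := by push_cast; ring
      rw [this, Complex.re_ofReal_mul]; simp
    rw [this]
    have := abs_le.1 him
    nlinarith
  have e2 : ‖Complex.exp (-(π : ℂ) * Complex.I * s / 4)‖ ≤ Real.exp R := by
    rw [Complex.norm_exp, Real.exp_le_exp]
    have : (-(π : ℂ) * Complex.I * s / 4).re = (π / 4) * s.im := by
      have : -(π : ℂ) * Complex.I * s / 4 = ((-(π / 4) : ℝ) : ℂ) * (Complex.I * s) := by push_cast; ring
      rw [this, Complex.re_ofReal_mul]; simp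
    rw [this]
    have := abs_le.1 him
    nlinarith
  have hexp : Real.exp (-(auxc * Real.sqrt r - auxc * Real.sqrt r₀)) =
      Real.exp (auxc * Real.sqrt r₀) * Real.exp (-auxc * Real.sqrt r) := by
    rw [← Real.exp_add]; ring_nf
  rw [norm_mul, norm_mul]
  constructor
  · refine (mul_le_mul e1 k1 (norm_nonneg _) (Real.exp_pos _).le).trans (le_of_eq ?_)
    rw [hexp, auxBC]; ring
  · refine (mul_le_mul e2 k2 (norm_nonneg _) (Real.exp_pos _).le).trans (le_of_eq ?_)
    rw [hexp, auxBC]; ring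

lemma aux_B_norm {s : ℂ} {R r₀ r : ℝ} (hs : ‖s‖ ≤ R) (h0 : 0 < r₀) (hr : r₀ ≤ r) :
    ‖auxB s r‖ ≤ auxBC R r₀ * Real.exp (-auxc * Real.sqrt r) := by
  obtain ⟨h1, h2⟩ := aux_B_norm12 hs h0 hr
  unfold auxB
  refine (norm_add_le _ _).trans ((add_le_add h1 h2).trans (le_of_eq ?_))
  ring

lemma aux_B_diff {r : ℝ} (hr : 0 < r) : Differentiable ℂ (fun s => auxB s r) := by
  have hc := aux_c_pos
  have hq : 0 < auxc * Real.sqrt r := mul_pos hc (Real.sqrt_pos.2 hr)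
  have k1 := aux_K_diff_s (z := 4 * (π : ℂ) * Complex.exp ((π : ℂ) * Complex.I / 4) * (Real.sqrt r : ℂ))
    (by rw [aux_arg_re]; exact hq)
  have k2 := aux_K_diff_s (z := 4 * (π : ℂ) * Complex.exp (-(π : ℂ) * Complex.I / 4) * (Real.sqrt r : ℂ))
    (by rw [aux_arg_re']; exact hq)
  unfold auxB
  fun_prop

lemma aux_summ_exp (A : ℝ) {c : ℝ} (hc : 0 < c) :
    Summable (fun n : ℕ => ((n : ℝ) + 1) ^ A * Real.exp (-c * Real.sqrt ((n : ℝ) + 1))) := by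
  have h1 := tendsto_rpow_mul_exp_neg_mul_atTop_nhds_zero (2 * A + 4) c hc
  have h2 : Filter.Tendsto (fun n : ℕ => Real.sqrt ((n : ℝ) + 1)) Filter.atTop Filter.atTop :=
    Real.tendsto_sqrt_atTop.comp (Filter.tendsto_atTop_add_const_right _ _ tendsto_natCast_atTop_atTop)
  have h3 := h1.comp h2
  have h4 : Summable (fun n : ℕ => ((n : ℝ) + 1) ^ (-2 : ℝ)) := by
    have := (summable_nat_add_iff 1).2 (Real.summable_nat_rpow.2 (show (-2 : ℝ) < -1 by norm_num))
    simpa using this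
  refine summable_of_isBigO_nat h4 ?_
  have h5 := h3.isBigO_one ℝ
  have h6 := h5.mul (Asymptotics.isBigO_refl (fun n : ℕ => ((n : ℝ) + 1) ^ (-2 : ℝ)) Filter.atTop)
  refine (h6.congr (fun n => ?_) (fun n => by simp))
  have hn : (0 : ℝ) < (n : ℝ) + 1 := by positivity
  simp only [Function.comp]
  rw [Real.sqrt_eq_rpow, ← Real.rpow_mul hn.le, mul_right_comm, ← Real.rpow_add hn]
  congr 2; ring

lemma aux_sqrt_mul_ge {a b : ℝ} (ha : 1 ≤ a) (hb : 1 ≤ b) :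
    (Real.sqrt a + Real.sqrt b) / 2 ≤ Real.sqrt (a * b) := by
  rw [Real.sqrt_mul (by linarith)]
  have h1 : 1 ≤ Real.sqrt a := Real.one_le_sqrt.2 ha
  have h2 : 1 ≤ Real.sqrt b := Real.one_le_sqrt.2 hb
  nlinarith

noncomputable def auxF (s : ℂ) (b : ℝ) (y : ℝ) : ℂ :=
  if 0 < y then (y : ℂ) ^ (-s - 1) * Complex.exp (-(b : ℂ) / (y : ℂ)) else 0

lemma aux_F_norm (s : ℂ) (b : ℝ) {y : ℝ} (hy : 0 < y) :
    ‖auxF s b y‖ = y ^ (-s.re - 1) * Real.exp (-b / y) := by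
  rw [auxF, if_pos hy, norm_mul, Complex.norm_cpow_eq_rpow_re_of_pos hy, Complex.norm_exp]
  congr 2
  rw [← Complex.ofReal_neg, ← Complex.ofReal_div, Complex.ofReal_re]

lemma aux_F_cont (s : ℂ) {b : ℝ} (hb : 0 < b) : Continuous (auxF s b) := by
  rw [continuous_iff_continuousAt]
  intro y
  rcases lt_trichotomy y 0 with hy | rfl | hy
  · refine (continuousAt_const (y := (0 : ℂ))).congr ?_
    filter_upwards [gt_mem_nhds hy] with z hz
    rw [auxF, if_neg (not_lt.2 hz.le)]
  · have h0 : auxF s b 0 = 0 := by simp [auxF]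
    rw [ContinuousAt, h0, ← nhdsLE_sup_nhdsGT, Filter.tendsto_sup]
    constructor
    · refine tendsto_const_nhds.congr' ?_
      filter_upwards [self_mem_nhdsWithin] with z hz
      rw [auxF, if_neg (not_lt.2 hz)]
    · rw [tendsto_zero_iff_norm_tendsto_zero]
      have h1 := tendsto_rpow_mul_exp_neg_mul_atTop_nhds_zero (s.re + 1) b hb
      have h2 := h1.comp tendsto_inv_nhdsGT_zero
      refine h2.congr' ?_
      filter_upwards [self_mem_nhdsWithin] with z hz
      have hz : 0 < z := hz
      rw [aux_F_norm s b hz]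
      simp only [Function.comp]
      rw [Real.inv_rpow hz.le, ← Real.rpow_neg hz.le]
      congr 2
      ring
  · have : ContinuousAt (fun y : ℝ => (y : ℂ) ^ (-s - 1) * Complex.exp (-(b : ℂ) / (y : ℂ))) y := by
      have hy' : (y : ℂ) ≠ 0 := by exact_mod_cast hy.ne'
      have h1 : ContinuousAt (fun y : ℝ => (y : ℂ) ^ (-s - 1)) y :=
        Complex.continuousAt_ofReal_cpow_const _ _ (Or.inr hy.ne')
      refine h1.mul ?_
      refine Complex.continuous_exp.continuousAt.comp ?_
      exact continuousAt_const.div Complex.continuous_ofReal.continuousAt hy'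
    refine this.congr ?_
    filter_upwards [lt_mem_nhds hy] with z hz
    rw [auxF, if_pos hz]

open FourierTransform in
lemma aux_F_fourier (s : ℂ) (b w : ℝ) :
    𝓕 (auxF s b) w = auxJ s b (2 * π * Complex.I * w) := by
  rw [Real.fourier_real_eq_integral_exp_smul, auxJ, ← integral_indicator measurableSet_Ioi]
  congr 1
  ext v
  by_cases hv : 0 < v
  · rw [Set.indicator_of_mem (show v ∈ Set.Ioi 0 from hv), auxF, if_pos hv, smul_eq_mul,
      mul_left_comm, ← Complex.exp_add]
    congr 2
    push_cast; ring
  · rw [Set.indicator_of_notMem (show v ∉ Set.Ioi 0 from hv), auxF, if_neg hv]; simp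

lemma aux_ofReal_mul_cpow {r : ℝ} (hr : 0 < r) {z : ℂ} (hz : z ≠ 0) (w : ℂ) :
    ((r : ℂ) * z) ^ w = (r : ℂ) ^ w * z ^ w := by
  have hr' : (r : ℂ) ≠ 0 := by exact_mod_cast hr.ne'
  rw [Complex.cpow_def_of_ne_zero (mul_ne_zero hr' hz), Complex.log_ofReal_mul hr hz,
    Complex.cpow_def_of_ne_zero hr', Complex.cpow_def_of_ne_zero hz, ← Complex.exp_add,
    Complex.ofReal_log hr.le]
  congr 1; ring

lemma aux_JK_gen (s : ℂ) {u d : ℝ} (hu : 0 < u) (hd : 0 < d) {J : ℂ} (hJ : J ≠ 0) {q : ℂ}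
    (hI : Complex.log J = q / 2) :
    auxJK s (2 * π * u) (2 * π * J * d) = 2 * ((d / u : ℝ) : ℂ) ^ (s / 2) *
      (Complex.exp (q * s / 4) *
        Kbes s (4 * (π : ℂ) * Complex.exp (q / 4) * (Real.sqrt (d * u) : ℂ))) := by
  have hpi := Real.pi_pos
  have hpiC : (π : ℂ) ≠ 0 := by exact_mod_cast hpi.ne'
  have huC : (u : ℂ) ≠ 0 := by exact_mod_cast hu.ne'
  have h1 : (2 * π * J * d : ℂ) / ((2 * π * u : ℝ) : ℂ) = ((d / u : ℝ) : ℂ) * J := by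
    push_cast; field_simp
  have h2 : (2 * π * J * d : ℂ) * ((2 * π * u : ℝ) : ℂ) = ((4 * π ^ 2 * (d * u) : ℝ) : ℂ) * J := by
    push_cast; ring
  have h3 : ((4 * π ^ 2 * (d * u) : ℝ) : ℂ) ^ (1 / 2 : ℂ) = ((2 * π * Real.sqrt (d * u) : ℝ) : ℂ) := by
    rw [show (1 / 2 : ℂ) = ((1 / 2 : ℝ) : ℂ) by push_cast; rfl, ← Complex.ofReal_cpow (by positivity),
      ← Real.sqrt_eq_rpow, Real.sqrt_mul (by positivity), show 4 * π ^ 2 = (2 * π) ^ 2 by ring,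
      Real.sqrt_sq (by positivity)]
  rw [auxJK, h1, h2, aux_ofReal_mul_cpow (by positivity) hJ, aux_ofReal_mul_cpow (by positivity) hJ,
    h3, Complex.cpow_def_of_ne_zero hJ, Complex.cpow_def_of_ne_zero hJ, hI,
    show q / 2 * (s / 2) = q * s / 4 by ring, show q / 2 * (1 / 2) = q / 4 by ring,
    show 2 * (((2 * π * Real.sqrt (d * u) : ℝ) : ℂ) * Complex.exp (q / 4))
      = 4 * (π : ℂ) * Complex.exp (q / 4) * (Real.sqrt (d * u) : ℂ) by push_cast; ring]
  ring

lemma aux_JK_pos (s : ℂ) {u d : ℝ} (hu : 0 < u) (hd : 0 < d) :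
    auxJK s (2 * π * u) (2 * π * Complex.I * d) = 2 * ((d / u : ℝ) : ℂ) ^ (s / 2) *
      (Complex.exp ((π : ℂ) * Complex.I * s / 4) *
        Kbes s (4 * (π : ℂ) * Complex.exp ((π : ℂ) * Complex.I / 4) * (Real.sqrt (d * u) : ℂ))) :=
  aux_JK_gen s hu hd Complex.I_ne_zero (by rw [Complex.log_I]; ring)

lemma aux_JK_neg (s : ℂ) {u d : ℝ} (hu : 0 < u) (hd : 0 < d) :
    auxJK s (2 * π * u) (2 * π * (-Complex.I) * d) = 2 * ((d / u : ℝ) : ℂ) ^ (s / 2) *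
      (Complex.exp (-(π : ℂ) * Complex.I * s / 4) *
        Kbes s (4 * (π : ℂ) * Complex.exp (-(π : ℂ) * Complex.I / 4) * (Real.sqrt (d * u) : ℂ))) :=
  aux_JK_gen s hu hd (neg_ne_zero.2 Complex.I_ne_zero) (by rw [Complex.log_neg_I]; ring)

lemma aux_half_summable {u : ℝ} (hu : 0 < u) (s : ℂ) (X : ℕ → ℂ) (C : ℝ)
    (hX : ∀ d : ℕ, ‖X d‖ ≤ C * Real.exp (-auxc * Real.sqrt (((d : ℝ) + 1) * u))) :
    Summable (fun d : ℕ => 2 * ((((d : ℝ) + 1) / u : ℝ) : ℂ) ^ (s / 2) * X d) := by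
  have h := aux_summ_exp (s.re / 2) (c := auxc * Real.sqrt u) (mul_pos aux_c_pos (Real.sqrt_pos.2 hu))
  refine Summable.of_norm_bounded (h.mul_left (2 * u⁻¹ ^ (s.re / 2) * C)) (fun d => ?_)
  have hd : (0 : ℝ) < (d : ℝ) + 1 := by positivity
  rw [norm_mul, norm_mul, Complex.norm_cpow_eq_rpow_re_of_pos (by positivity)]
  have h2 : (s / 2).re = s.re / 2 := by simp
  rw [h2, div_eq_mul_inv, Real.mul_rpow hd.le (by positivity), Complex.norm_ofNat]
  refine (mul_le_mul_of_nonneg_left (hX d) (by positivity)).trans (le_of_eq ?_)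
  rw [Real.sqrt_mul hd.le]
  rw [show -(auxc * √u) * √((d : ℝ) + 1) = -auxc * (√((d : ℝ) + 1) * √u) by ring]
  ring

open FourierTransform in
lemma aux_poisson {s : ℂ} (hs : 0 < s.re) {u : ℝ} (hu : 0 < u) :
    ∑' k : ℕ, ((k : ℂ) + 1) ^ (-s - 1) * Complex.exp (-(2 * π * u : ℝ) / ((k : ℂ) + 1))
      = Complex.Gamma s * ((2 * π * u : ℝ) : ℂ) ^ (-s)
        + ∑' d : ℕ, 2 * ((((d : ℝ) + 1) / u : ℝ) : ℂ) ^ (s / 2) * auxB s (((d : ℝ) + 1) * u) := by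
  have hb : 0 < 2 * π * u := by positivity
  set b := 2 * π * u with hbdef
  set X : ℕ → ℂ := fun d => Complex.exp ((π : ℂ) * Complex.I * s / 4) *
        Kbes s (4 * (π : ℂ) * Complex.exp ((π : ℂ) * Complex.I / 4) * (Real.sqrt (((d : ℝ) + 1) * u) : ℂ)) with hX
  set Y : ℕ → ℂ := fun d => Complex.exp (-(π : ℂ) * Complex.I * s / 4) *
        Kbes s (4 * (π : ℂ) * Complex.exp (-(π : ℂ) * Complex.I / 4) * (Real.sqrt (((d : ℝ) + 1) * u) : ℂ)) with hY
  have hle : ∀ d : ℕ, u ≤ ((d : ℝ) + 1) * u := fun d => by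
    have : (0 : ℝ) ≤ d := by positivity
    nlinarith
  have sX := aux_half_summable hu s X _ (fun d => (aux_B_norm12 le_rfl hu (hle d)).1)
  have sY := aux_half_summable hu s Y _ (fun d => (aux_B_norm12 le_rfl hu (hle d)).2)
  have fX : ∀ d : ℕ, 𝓕 (auxF s b) (((d : ℤ) + 1 : ℤ) : ℝ)
      = 2 * ((((d : ℝ) + 1) / u : ℝ) : ℂ) ^ (s / 2) * X d := by
    intro d
    have hd : (0 : ℝ) < (d : ℝ) + 1 := by positivity
    have hd' : ((((d : ℝ) + 1 : ℝ)) : ℂ) ≠ 0 := by exact_mod_cast hd.ne'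
    rw [aux_F_fourier]
    push_cast
    rw [aux_J_eq hs hb (by simp) (by
      have := Real.pi_ne_zero
      simp [this]; exact_mod_cast hd.ne')]
    have := aux_JK_pos s hu hd
    push_cast at this
    rw [this]
  have fY : ∀ d : ℕ, 𝓕 (auxF s b) ((-((d : ℤ) + 1) : ℤ) : ℝ)
      = 2 * ((((d : ℝ) + 1) / u : ℝ) : ℂ) ^ (s / 2) * Y d := by
    intro d
    have hd : (0 : ℝ) < (d : ℝ) + 1 := by positivity
    rw [aux_F_fourier]
    have e : (2 * π * Complex.I * (((-((d : ℤ) + 1) : ℤ) : ℝ) : ℂ)) = 2 * π * (-Complex.I) * (((d : ℝ) + 1 : ℝ) : ℂ) := by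
      push_cast; ring
    rw [e, aux_J_eq hs hb (by simp) (by
      have := Real.pi_ne_zero
      simp [this]; exact_mod_cast hd.ne')]
    rw [aux_JK_neg s hu hd]
  have f0 : 𝓕 (auxF s b) ((0 : ℤ) : ℝ) = Complex.Gamma s * ((2 * π * u : ℝ) : ℂ) ^ (-s) := by
    rw [aux_F_fourier, auxJ, ← aux_inv_exp_integral hs hb]
    refine integral_congr_ae (Filter.Eventually.of_forall fun y => ?_)
    simp [neg_div]
  have sX' : Summable (fun d : ℕ => 𝓕 (auxF s b) (((d : ℤ) + 1 : ℤ) : ℝ)) := by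
    simp_rw [fX]; exact sX
  have sY' : Summable (fun d : ℕ => 𝓕 (auxF s b) ((-((d : ℤ) + 1) : ℤ) : ℝ)) := by
    simp_rw [fY]; exact sY
  have hF : Summable (fun n : ℤ => 𝓕 (auxF s b) (n : ℝ)) :=
    Summable.of_add_one_of_neg_add_one (f := fun n : ℤ => 𝓕 (auxF s b) (n : ℝ)) sX' sY'
  have hO : auxF s b =O[Filter.cocompact ℝ] fun x => |x| ^ (-(s.re + 1)) := by
    refine Asymptotics.IsBigO.of_bound 1 (Filter.Eventually.of_forall fun y => ?_)
    rw [one_mul, Real.norm_of_nonneg (Real.rpow_nonneg (abs_nonneg _) _)]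
    by_cases hy : 0 < y
    · rw [aux_F_norm s b hy, abs_of_pos hy, show -(s.re + 1) = -s.re - 1 by ring]
      refine mul_le_of_le_one_right (Real.rpow_nonneg hy.le _) (Real.exp_le_one_iff.2 ?_)
      exact div_nonpos_of_nonpos_of_nonneg (by linarith) hy.le
    · rw [auxF, if_neg hy, norm_zero]; positivity
  have main := Real.tsum_eq_tsum_fourier_of_rpow_decay_of_summable (aux_F_cont s hb)
    (by linarith : 1 < s.re + 1) hO hF 0
  have e1 : ∀ n : ℤ, 𝓕 (auxF s b) (n : ℝ) * (fourier n) ((0 : ℝ) : UnitAddCircle) = 𝓕 (auxF s b) (n : ℝ) := by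
    intro n; simp
  simp_rw [e1, zero_add] at main
  rw [tsum_of_add_one_of_neg_add_one (f := fun n : ℤ => 𝓕 (auxF s b) (n : ℝ)) sX' sY'] at main
  have g1 : ∀ k : ℕ, auxF s b (((k : ℤ) + 1 : ℤ) : ℝ) =
      ((k : ℂ) + 1) ^ (-s - 1) * Complex.exp (-(2 * π * u : ℝ) / ((k : ℂ) + 1)) := by
    intro k
    have hk : (0 : ℝ) < (((k : ℤ) + 1 : ℤ) : ℝ) := by push_cast; positivity
    rw [auxF, if_pos hk]; push_cast; simp [hbdef]
  have g2 : ∀ k : ℕ, auxF s b ((-((k : ℤ) + 1) : ℤ) : ℝ) = 0 := by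
    intro k
    have hk : ¬ (0 : ℝ) < ((-((k : ℤ) + 1) : ℤ) : ℝ) := by push_cast; linarith [(Nat.cast_nonneg k : (0:ℝ) ≤ k)]
    rw [auxF, if_neg hk]
  have sG : Summable (fun k : ℕ => auxF s b (((k : ℤ) + 1 : ℤ) : ℝ)) := by
    have h4 : Summable (fun n : ℕ => ((n : ℝ) + 1) ^ (-s.re - 1)) := by
      have := (summable_nat_add_iff 1).2 (Real.summable_nat_rpow.2 (show -s.re - 1 < -1 by linarith))
      simpa using this
    refine Summable.of_norm_bounded h4 fun k => ?_
    have hk : (0 : ℝ) < (((k : ℤ) + 1 : ℤ) : ℝ) := by push_cast; positivity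
    rw [aux_F_norm s b hk]
    push_cast
    refine mul_le_of_le_one_right (by positivity) (Real.exp_le_one_iff.2 ?_)
    exact div_nonpos_of_nonpos_of_nonneg (by linarith) (by positivity)
  rw [tsum_of_add_one_of_neg_add_one (f := fun n : ℤ => auxF s b (n : ℝ)) sG (by simp_rw [g2]; exact summable_zero)] at main
  simp_rw [g1, g2, fX, fY, f0] at main
  have g0 : auxF s b ((0 : ℤ) : ℝ) = 0 := by simp [auxF]
  rw [g0, tsum_zero, add_zero, add_zero] at main
  rw [main]
  have : ∑' d : ℕ, 2 * ((((d : ℝ) + 1) / u : ℝ) : ℂ) ^ (s / 2) * auxB s (((d : ℝ) + 1) * u)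
     = ∑' d : ℕ, 2 * ((((d : ℝ) + 1) / u : ℝ) : ℂ) ^ (s / 2) * X d
      + ∑' d : ℕ, 2 * ((((d : ℝ) + 1) / u : ℝ) : ℂ) ^ (s / 2) * Y d := by
    rw [← sX.tsum_add sY]
    congr 1; ext d; rw [← mul_add]; rfl
  rw [this]; ring

lemma aux_divisor_hasSum {E : Type*} [NormedAddCommGroup E] (F : ℕ → ℕ → E) {a : E}
    (h : HasSum (fun p : ℕ × ℕ => F (p.1 + 1) (p.2 + 1)) a) :
    HasSum (fun n : ℕ => ∑ d ∈ (n + 1).divisors, F d ((n + 1) / d)) a := by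
  have h1 : HasSum (fun p : ℕ+ × ℕ+ => F p.1 p.2) a := by
    have := (Equiv.prodCongr Equiv.pnatEquivNat Equiv.pnatEquivNat).hasSum_iff.2 h
    have e : (fun p : ℕ+ × ℕ+ => F p.1 p.2) = (fun p : ℕ × ℕ => F (p.1 + 1) (p.2 + 1)) ∘
        (Equiv.prodCongr Equiv.pnatEquivNat Equiv.pnatEquivNat) := by
      ext p
      simp [Equiv.pnatEquivNat, PNat.natPred_add_one]
    rw [e]; exact this
  have h2 := sigmaAntidiagonalEquivProd.hasSum_iff.2 h1
  have h3 := h2.sigma (g := fun n : ℕ+ => ∑ d ∈ (n : ℕ).divisors, F d ((n : ℕ) / d)) (fun n => by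
    have := hasSum_fintype (fun c : (n : ℕ).divisorsAntidiagonal => F c.1.1 c.1.2)
    rw [Finset.univ_eq_attach, Finset.sum_attach _ (fun c : ℕ × ℕ => F c.1 c.2),
      Nat.sum_divisorsAntidiagonal F] at this
    exact this)
  have h4 := Equiv.pnatEquivNat.symm.hasSum_iff.2 h3
  exact h4

lemma aux_csigma_mul (s : ℂ) (g : ℕ → ℂ) (n : ℕ) :
    csigma (-s) (n + 1) * g (n + 1) =
      ∑ d ∈ (n + 1).divisors, (d : ℂ) ^ (-s) * g (d * ((n + 1) / d)) := by
  rw [csigma, Finset.sum_mul]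
  refine Finset.sum_congr rfl fun d hd => ?_
  rw [Nat.mul_div_cancel' (Nat.dvd_of_mem_divisors hd)]

lemma aux_csigma_hasSum (s : ℂ) (g : ℕ → ℂ) {a : ℂ}
    (h : HasSum (fun p : ℕ × ℕ => ((p.1 : ℂ) + 1) ^ (-s) * g ((p.1 + 1) * (p.2 + 1))) a) :
    HasSum (fun n : ℕ => csigma (-s) (n + 1) * g (n + 1)) a := by
  simp_rw [aux_csigma_mul]
  refine aux_divisor_hasSum (fun d m => (d : ℂ) ^ (-s) * g (d * m)) ?_
  push_cast
  exact h

lemma aux_csigma_summable_norm (s : ℂ) (g : ℕ → ℝ) (hg : ∀ n, 0 ≤ g n)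
    (h : Summable (fun p : ℕ × ℕ => ((p.1 : ℝ) + 1) ^ (-s.re) * g ((p.1 + 1) * (p.2 + 1)))) :
    Summable (fun n : ℕ => ‖csigma (-s) (n + 1)‖ * g (n + 1)) := by
  have h1 := (aux_divisor_hasSum (fun d m => (d : ℝ) ^ (-s.re) * g (d * m)) (by
    push_cast
    exact h.hasSum)).summable
  refine Summable.of_nonneg_of_le (fun n => mul_nonneg (norm_nonneg _) (hg _)) (fun n => ?_) h1
  rw [csigma]
  refine (mul_le_mul_of_nonneg_right (norm_sum_le _ _) (hg _)).trans ?_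
  rw [Finset.sum_mul]
  refine Finset.sum_le_sum fun d hd => ?_
  rw [Nat.mul_div_cancel' (Nat.dvd_of_mem_divisors hd),
    Complex.norm_natCast_cpow_of_pos (Nat.pos_of_mem_divisors hd)]
  simp

lemma aux_summable_shift {a : ℝ} (ha : a < -1) : Summable (fun n : ℕ => ((n : ℝ) + 1) ^ a) := by
  have := (summable_nat_add_iff 1).2 (Real.summable_nat_rpow.2 ha)
  simpa using this

lemma aux_cast_ne (n : ℕ) : ((n : ℂ) + 1) ≠ 0 := Nat.cast_add_one_ne_zero n

lemma aux_norm_cast_cpow (n : ℕ) (z : ℂ) : ‖((n : ℂ) + 1) ^ z‖ = ((n : ℝ) + 1) ^ z.re := by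
  have : (0 : ℝ) < (n : ℝ) + 1 := by positivity
  have h := Complex.norm_cpow_eq_rpow_re_of_pos this z
  push_cast at h; exact h

lemma aux_summable_shiftC {z : ℂ} (ha : z.re < -1) : Summable (fun n : ℕ => ‖((n : ℂ) + 1) ^ z‖) := by
  simp_rw [aux_norm_cast_cpow]; exact aux_summable_shift ha

lemma aux_pair_cpow (d m : ℕ) (z : ℂ) : (((d : ℂ) + 1) * ((m : ℂ) + 1)) ^ z =
    ((d : ℂ) + 1) ^ z * ((m : ℂ) + 1) ^ z := by
  have h := Complex.natCast_mul_natCast_cpow (d + 1) (m + 1) z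
  push_cast at h; exact h

lemma aux_zeta_sum {s : ℂ} (hs : 1 < s.re) :
    HasSum (fun n : ℕ => ((n : ℂ) + 1) ^ (-s)) (riemannZeta s) := by
  have h1 : Summable (fun n : ℕ => ((n : ℂ) + 1) ^ (-s)) :=
    (aux_summable_shiftC (by simpa using hs)).of_norm
  have := zeta_eq_tsum_one_div_nat_add_one_cpow hs
  rw [this]
  simp_rw [one_div, ← Complex.cpow_neg]
  exact h1.hasSum

/-- the `g` used for `phiK` -/
noncomputable def auxg (s : ℂ) (t : ℝ) (n : ℕ) : ℂ := (n : ℂ) ^ (s / 2) * auxB s (n * t)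

lemma aux_phiK_eq (t : ℝ) (s : ℂ) :
    phiK t s = 2 * ∑' n : ℕ, csigma (-s) (n + 1) * auxg s t (n + 1) := by
  unfold phiK auxg auxB
  push_cast
  simp_rw [mul_assoc]

lemma aux_pair_bound {R t : ℝ} (ht : 0 < t) {s : ℂ} (hs : ‖s‖ ≤ R) (d m : ℕ) :
    ‖((d : ℂ) + 1) ^ (-s) * auxg s t ((d + 1) * (m + 1))‖ ≤ auxBC R t *
      ((((d : ℝ) + 1) ^ (2 * R) * Real.exp (-(auxc * Real.sqrt t / 2) * Real.sqrt ((d : ℝ) + 1))) *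
      (((m : ℝ) + 1) ^ (2 * R) * Real.exp (-(auxc * Real.sqrt t / 2) * Real.sqrt ((m : ℝ) + 1)))) := by
  have hd : (1 : ℝ) ≤ (d : ℝ) + 1 := by linarith [(Nat.cast_nonneg d : (0:ℝ) ≤ d)]
  have hm : (1 : ℝ) ≤ (m : ℝ) + 1 := by linarith [(Nat.cast_nonneg m : (0:ℝ) ≤ m)]
  have hre := abs_le.1 ((Complex.abs_re_le_norm s).trans hs)
  have hR : 0 ≤ R := (norm_nonneg _).trans hs
  unfold auxg
  push_cast
  rw [aux_pair_cpow, norm_mul, norm_mul, norm_mul, aux_norm_cast_cpow, aux_norm_cast_cpow, aux_norm_cast_cpow]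
  have hB := aux_B_norm hs ht (r := ((d : ℝ) + 1) * ((m : ℝ) + 1) * t)
    (le_mul_of_one_le_left ht.le (one_le_mul_of_one_le_of_one_le hd hm))
  have he : Real.exp (-auxc * Real.sqrt (((d : ℝ) + 1) * ((m : ℝ) + 1) * t)) ≤
      Real.exp (-(auxc * Real.sqrt t / 2) * Real.sqrt ((d : ℝ) + 1)) *
      Real.exp (-(auxc * Real.sqrt t / 2) * Real.sqrt ((m : ℝ) + 1)) := by
    rw [← Real.exp_add, Real.exp_le_exp, Real.sqrt_mul (by positivity)]
    have h1 := aux_sqrt_mul_ge hd hm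
    have h2 : 0 ≤ auxc * Real.sqrt t := mul_nonneg aux_c_pos.le (Real.sqrt_nonneg _)
    nlinarith
  have p1 : ((d : ℝ) + 1) ^ (-s).re * ((d : ℝ) + 1) ^ (s / 2).re ≤ ((d : ℝ) + 1) ^ (2 * R) := by
    rw [← Real.rpow_add (by positivity)]
    refine Real.rpow_le_rpow_of_exponent_le hd ?_
    simp; linarith
  have p2 : ((m : ℝ) + 1) ^ (s / 2).re ≤ ((m : ℝ) + 1) ^ (2 * R) := by
    refine Real.rpow_le_rpow_of_exponent_le hm ?_
    simp; linarith
  calc _ = (((d : ℝ) + 1) ^ (-s).re * ((d : ℝ) + 1) ^ (s / 2).re) * ((m : ℝ) + 1) ^ (s / 2).re *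
        ‖auxB s (((d : ℝ) + 1) * ((m : ℝ) + 1) * t)‖ := by ring
    _ ≤ ((d : ℝ) + 1) ^ (2 * R) * ((m : ℝ) + 1) ^ (2 * R) * (auxBC R t *
      (Real.exp (-(auxc * Real.sqrt t / 2) * Real.sqrt ((d : ℝ) + 1)) *
      Real.exp (-(auxc * Real.sqrt t / 2) * Real.sqrt ((m : ℝ) + 1)))) := by
        refine mul_le_mul (mul_le_mul p1 p2 (by positivity) (by positivity)) (hB.trans ?_) (norm_nonneg _) (by positivity)
        exact mul_le_mul_of_nonneg_left he (aux_BC_nonneg _ _)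
    _ = _ := by ring

lemma aux_pair_major_summable (R : ℝ) {t : ℝ} (ht : 0 < t) :
    Summable (fun p : ℕ × ℕ => auxBC R t *
      ((((p.1 : ℝ) + 1) ^ (2 * R) * Real.exp (-(auxc * Real.sqrt t / 2) * Real.sqrt ((p.1 : ℝ) + 1))) *
      (((p.2 : ℝ) + 1) ^ (2 * R) * Real.exp (-(auxc * Real.sqrt t / 2) * Real.sqrt ((p.2 : ℝ) + 1))))) := by
  have h := aux_summ_exp (2 * R) (c := auxc * Real.sqrt t / 2)
    (by have := mul_pos aux_c_pos (Real.sqrt_pos.2 ht); positivity)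
  exact (h.mul_of_nonneg h (fun n => by positivity) (fun n => by positivity)).mul_left _

lemma aux_pair_summable (s : ℂ) {t : ℝ} (ht : 0 < t) :
    Summable (fun p : ℕ × ℕ => ((p.1 : ℂ) + 1) ^ (-s) * auxg s t ((p.1 + 1) * (p.2 + 1))) :=
  Summable.of_norm_bounded (aux_pair_major_summable ‖s‖ ht) (fun p => aux_pair_bound ht le_rfl p.1 p.2)

noncomputable def auxH (s : ℂ) (t : ℝ) : ℂ :=
  ∑' n : ℕ, csigma (-s) (n + 1) * (1 / ((((n + 1 : ℕ) : ℂ)) ^ 2 + (t : ℂ) ^ 2))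

lemma aux_Hpair_bound (s : ℂ) (t : ℝ) (d m : ℕ) :
    ((d : ℝ) + 1) ^ (-s.re) * (1 / ((((d + 1) * (m + 1) : ℕ) : ℝ) ^ 2 + t ^ 2)) ≤
      ((d : ℝ) + 1) ^ (-s.re - 2) * ((m : ℝ) + 1) ^ (-2 : ℝ) := by
  have hd : (0 : ℝ) < (d : ℝ) + 1 := by positivity
  have hm : (0 : ℝ) < (m : ℝ) + 1 := by positivity
  rw [Real.rpow_sub hd, Real.rpow_neg hm.le, Real.rpow_two, Real.rpow_two, div_mul_eq_mul_div,
    mul_div_assoc]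
  refine mul_le_mul_of_nonneg_left ?_ (by positivity)
  push_cast
  rw [← one_div, div_div, one_div_le_one_div (by positivity) (by positivity)]
  nlinarith [sq_nonneg t]

lemma aux_Hpair_summable {s : ℂ} (hs : -1 < s.re) (t : ℝ) :
    Summable (fun p : ℕ × ℕ => ((p.1 : ℝ) + 1) ^ (-s.re) *
      (1 / ((((p.1 + 1) * (p.2 + 1) : ℕ) : ℝ) ^ 2 + t ^ 2))) := by
  refine Summable.of_nonneg_of_le (fun p => by positivity) (fun p => aux_Hpair_bound s t p.1 p.2) ?_
  exact (aux_summable_shift (show -s.re - 2 < -1 by linarith)).mul_of_nonneg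
    (aux_summable_shift (show (-2 : ℝ) < -1 by norm_num)) (fun n => by positivity) (fun n => by positivity)

lemma aux_H_summable_norm {s : ℂ} (hs : -1 < s.re) (t : ℝ) :
    Summable (fun n : ℕ => ‖csigma (-s) (n + 1)‖ * (1 / (((n + 1 : ℕ) : ℝ) ^ 2 + t ^ 2))) :=
  aux_csigma_summable_norm s (fun n => 1 / ((n : ℝ) ^ 2 + t ^ 2)) (fun n => by positivity)
    (aux_Hpair_summable hs t)

lemma aux_HpairC_summable {s : ℂ} (hs : -1 < s.re) (t : ℝ) :
    Summable (fun p : ℕ × ℕ => ((p.1 : ℂ) + 1) ^ (-s) *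
      (1 / ((((p.1 + 1) * (p.2 + 1) : ℕ) : ℂ) ^ 2 + (t : ℂ) ^ 2))) := by
  refine Summable.of_norm_bounded (aux_Hpair_summable hs t) (fun p => le_of_eq ?_)
  rw [norm_mul, aux_norm_cast_cpow, Complex.neg_re]
  congr 1
  have : (1 / ((((p.1 + 1) * (p.2 + 1) : ℕ) : ℂ) ^ 2 + (t : ℂ) ^ 2)) =
    ((1 / ((((p.1 + 1) * (p.2 + 1) : ℕ) : ℝ) ^ 2 + t ^ 2) : ℝ) : ℂ) := by push_cast; ring
  rw [this, Complex.norm_real, Real.norm_of_nonneg (by positivity)]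

lemma aux_H_hasSum {s : ℂ} (hs : -1 < s.re) (t : ℝ) :
    HasSum (fun n : ℕ => csigma (-s) (n + 1) * (1 / ((((n + 1 : ℕ) : ℂ)) ^ 2 + (t : ℂ) ^ 2)))
      (∑' p : ℕ × ℕ, ((p.1 : ℂ) + 1) ^ (-s) *
      (1 / ((((p.1 + 1) * (p.2 + 1) : ℕ) : ℂ) ^ 2 + (t : ℂ) ^ 2))) :=
  aux_csigma_hasSum s (fun n => 1 / ((n : ℂ) ^ 2 + (t : ℂ) ^ 2)) (aux_HpairC_summable hs t).hasSum

lemma aux_cot {y : ℝ} (hy : 0 < y) :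
    ((1 / (Real.exp (2 * π * y) - 1) : ℝ) : ℂ) = (1 / π) * ∑' m : ℕ, ((y : ℂ) / ((y : ℂ) ^ 2 + ((m : ℂ) + 1) ^ 2))
      - 1 / 2 + 1 / (2 * π * y) := by
  have hyC : (y : ℂ) ≠ 0 := by exact_mod_cast hy.ne'
  have hpiC : (π : ℂ) ≠ 0 := by exact_mod_cast Real.pi_ne_zero
  have hmem : (Complex.I * y : ℂ) ∈ Complex.integerComplement := by
    rintro ⟨n, hn⟩
    have := congrArg Complex.im hn
    simp at this
    exact hy.ne this
  have h := cot_series_rep' hmem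
  rw [Complex.cot_pi_eq_exp_ratio] at h
  have e1 : (2 * π * Complex.I * (Complex.I * y) : ℂ) = ((-(2 * π * y) : ℝ) : ℂ) := by
    push_cast; linear_combination (2 * π * y : ℂ) * Complex.I_mul_I
  rw [e1, ← Complex.ofReal_exp, Real.exp_neg] at h
  set E := Real.exp (2 * π * y) with hE
  have hE1 : 1 < E := Real.one_lt_exp_iff.2 (by positivity)
  have hE0 : (E : ℂ) ≠ 0 := by exact_mod_cast (by linarith : (0 : ℝ) < E).ne'
  have hE2 : (E : ℂ) - 1 ≠ 0 := by
    have : E - 1 ≠ 0 := by linarith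
    exact_mod_cast this
  have e2 : ∀ m : ℕ, (1 / (Complex.I * y - ((m : ℂ) + 1)) + 1 / (Complex.I * y + ((m : ℂ) + 1)))
      = (-2 * Complex.I) * ((y : ℂ) / ((y : ℂ) ^ 2 + ((m : ℂ) + 1) ^ 2)) := by
    intro m
    have hm : ((m : ℝ) + 1) ≠ 0 := by positivity
    have a1 : (Complex.I * y - ((m : ℂ) + 1)) ≠ 0 := by
      intro h0; have := congrArg Complex.im h0; simp at this; exact hy.ne' this
    have a2 : (Complex.I * y + ((m : ℂ) + 1)) ≠ 0 := by
      intro h0; have := congrArg Complex.im h0; simp at this; exact hy.ne' this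
    have a3 : ((y : ℂ) ^ 2 + ((m : ℂ) + 1) ^ 2) ≠ 0 := by
      have : (y ^ 2 + ((m : ℝ) + 1) ^ 2) ≠ 0 := by positivity
      exact_mod_cast this
    rw [div_add_div _ _ a1 a2, ← mul_div_assoc, div_eq_div_iff (mul_ne_zero a1 a2) a3]
    have hI := Complex.I_sq
    linear_combination (-2 * Complex.I * y ^ 3 + 4 * Complex.I * y ^3 ) * hI
  simp_rw [e2] at h
  rw [tsum_mul_left] at h
  set S := ∑' m : ℕ, ((y : ℂ) / ((y : ℂ) ^ 2 + ((m : ℂ) + 1) ^ 2)) with hS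
  have hI0 := Complex.I_ne_zero
  have hS2 : S = Complex.I / 2 * (-2 * Complex.I * S) := by linear_combination S * Complex.I_sq
  rw [hS2, ← h]
  push_cast
  have hE3 : 1 - (E : ℂ)⁻¹ ≠ 0 := by
    rw [sub_ne_zero]; intro h0
    apply hE2; rw [sub_eq_zero]; exact (inv_eq_one.1 h0.symm)
  have : ((E : ℂ)⁻¹ + 1) / (Complex.I * (1 - (E : ℂ)⁻¹)) = (1 + E) / (Complex.I * (E - 1)) := by
    field_simp
  rw [this]
  field_simp
  ring

lemma aux_geom {v : ℝ} (hv : 0 < v) :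
    HasSum (fun d : ℕ => Real.exp (-(v * ((d : ℝ) + 1)))) (1 / (Real.exp v - 1)) := by
  have h1 : 1 < Real.exp v := Real.one_lt_exp_iff.2 hv
  have h := (hasSum_geometric_of_lt_one (Real.exp_pos (-v)).le (by rw [Real.exp_lt_one_iff]; linarith)).mul_left (Real.exp (-v))
  convert! h using 1
  · ext d; rw [← Real.exp_nat_mul, ← Real.exp_add]; ring_nf
  · rw [Real.exp_neg]
    have : Real.exp v - 1 ≠ 0 := by linarith
    have : Real.exp v ≠ 0 := by linarith
    field_simp

lemma aux_dk_summable {s : ℂ} (hs : 1 < s.re) {t : ℝ} (ht : 0 < t) :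
    Summable (fun p : ℕ × ℕ => ((p.2 : ℂ) + 1) ^ (-s - 1) *
      Complex.exp (-(2 * π * (((p.1 : ℝ) + 1) * t) : ℝ) / ((p.2 : ℂ) + 1))) := by
  have hn : ∀ p : ℕ × ℕ, ‖((p.2 : ℂ) + 1) ^ (-s - 1) *
      Complex.exp (-(2 * π * (((p.1 : ℝ) + 1) * t) : ℝ) / ((p.2 : ℂ) + 1))‖ =
      ((p.2 : ℝ) + 1) ^ (-s.re - 1) * Real.exp (-(2 * π * t / ((p.2 : ℝ) + 1) * ((p.1 : ℝ) + 1))) := by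
    intro p
    rw [norm_mul, aux_norm_cast_cpow, Complex.norm_exp]
    congr 2
    have : (-((2 * π * (((p.1 : ℝ) + 1) * t) : ℝ) : ℂ) / ((p.2 : ℂ) + 1)) =
       ((-(2 * π * t / ((p.2 : ℝ) + 1) * ((p.1 : ℝ) + 1)) : ℝ) : ℂ) := by push_cast; ring
    rw [this, Complex.ofReal_re]
  refine Summable.of_norm ?_
  simp_rw [hn]
  rw [← (Equiv.prodComm ℕ ℕ).summable_iff]
  refine (summable_prod_of_nonneg (fun p => by simp only [Function.comp]; positivity)).2 ⟨fun k => ?_, ?_⟩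
  · have hv : 0 < 2 * π * t / ((k : ℝ) + 1) := by positivity
    simp only [Function.comp, Equiv.prodComm_apply, Prod.swap_prod_mk]
    exact (aux_geom hv).summable.mul_left _
  · have : Summable (fun k : ℕ => (1 / (2 * π * t)) * ((k : ℝ) + 1) ^ (-s.re)) :=
      (aux_summable_shift (by linarith)).mul_left _
    refine Summable.of_nonneg_of_le (fun k => tsum_nonneg fun d => by simp only [Function.comp]; positivity) (fun k => ?_) this
    have hk : (0 : ℝ) < (k : ℝ) + 1 := by positivity
    have hv : 0 < 2 * π * t / ((k : ℝ) + 1) := by positivity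
    simp only [Function.comp, Equiv.prodComm_apply, Prod.swap_prod_mk]
    rw [tsum_mul_left, (aux_geom hv).tsum_eq, Real.rpow_sub hk, Real.rpow_one]
    have h2 : 2 * π * t / ((k : ℝ) + 1) ≤ Real.exp (2 * π * t / ((k : ℝ) + 1)) - 1 := by
      linarith [Real.add_one_le_exp (2 * π * t / ((k : ℝ) + 1))]
    calc _ ≤ ((k : ℝ) + 1) ^ (-s.re) / ((k : ℝ) + 1) * (1 / (2 * π * t / ((k : ℝ) + 1))) := by
          gcongr
      _ = _ := by field_simp

lemma aux_guinand0 {s : ℂ} (hs : 1 < s.re) {t : ℝ} (ht : 0 < t) :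
    phiK t s = (t : ℂ) ^ (s / 2) * ((∑' k : ℕ, ((k : ℂ) + 1) ^ (-s - 1) *
        ((1 / (Real.exp (2 * π * (t / ((k : ℝ) + 1))) - 1) : ℝ) : ℂ))
      - Complex.Gamma s * riemannZeta s * ((2 * π * t : ℝ) : ℂ) ^ (-s)) := by
  have htC : (t : ℂ) ≠ 0 := by exact_mod_cast ht.ne'
  have hsum := aux_pair_summable s ht
  rw [aux_phiK_eq, (aux_csigma_hasSum s (auxg s t) hsum.hasSum).tsum_eq, hsum.tsum_prod]
  have key : ∀ d : ℕ, 2 * ∑' m : ℕ, ((d : ℂ) + 1) ^ (-s) * auxg s t ((d + 1) * (m + 1)) =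
      (t : ℂ) ^ (s / 2) * ((∑' k : ℕ, ((k : ℂ) + 1) ^ (-s - 1) *
        Complex.exp (-(2 * π * (((d : ℝ) + 1) * t) : ℝ) / ((k : ℂ) + 1)))
        - Complex.Gamma s * ((2 * π * t : ℝ) : ℂ) ^ (-s) * ((d : ℂ) + 1) ^ (-s)) := by
    intro d
    have hd : (0 : ℝ) < (d : ℝ) + 1 := by positivity
    have hu : 0 < ((d : ℝ) + 1) * t := by positivity
    rw [aux_poisson (by linarith : 0 < s.re) hu]
    have e1 : ((2 * π * (((d : ℝ) + 1) * t) : ℝ) : ℂ) ^ (-s) = ((2 * π * t : ℝ) : ℂ) ^ (-s) * ((d : ℂ) + 1) ^ (-s) := by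
      have := Complex.mul_cpow_ofReal_nonneg (a := 2 * π * t) (b := (d : ℝ) + 1) (by positivity) (by positivity) (-s)
      rw [← Complex.ofReal_mul] at this
      rw [show 2 * π * (((d : ℝ) + 1) * t) = 2 * π * t * ((d : ℝ) + 1) by ring, this]
      push_cast; rfl
    rw [e1, ← tsum_mul_left, ← mul_assoc, add_sub_cancel_left, ← tsum_mul_left]
    congr 1
    ext m
    have hm : (0 : ℝ) < (m : ℝ) + 1 := by positivity
    unfold auxg
    push_cast
    rw [aux_pair_cpow]
    rw [show ((d : ℝ) + 1) * ((m : ℝ) + 1) * t = ((m : ℝ) + 1) * (((d : ℝ) + 1) * t) by ring]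
    have e2 : (((m : ℂ) + 1) / (((d : ℂ) + 1) * t)) ^ (s / 2) * (t : ℂ) ^ (s / 2)
        = ((m : ℂ) + 1) ^ (s / 2) * ((d : ℂ) + 1) ^ (-(s / 2)) := by
      have a1 := Complex.mul_cpow_ofReal_nonneg (a := ((m : ℝ) + 1) / (((d : ℝ) + 1) * t)) (b := t)
        (by positivity) ht.le (s / 2)
      have a2 := Complex.mul_cpow_ofReal_nonneg (a := ((m : ℝ) + 1)) (b := ((d : ℝ) + 1)⁻¹)
        (by positivity) (by positivity) (s / 2)
      have a3 : (((d : ℂ) + 1)⁻¹) ^ (s / 2) = ((d : ℂ) + 1) ^ (-(s / 2)) := by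
        rw [Complex.cpow_neg, Complex.inv_cpow]
        have := Complex.arg_ofReal_of_nonneg hd.le
        push_cast at this
        rw [this]; exact Real.pi_pos.ne
      push_cast at a1 a2
      rw [← a1, ← a3, ← a2]
      congr 1
      have := aux_cast_ne d
      field_simp
    have e3 : ((d : ℂ) + 1) ^ (-s) * ((d : ℂ) + 1) ^ (s / 2) = ((d : ℂ) + 1) ^ (-(s / 2)) := by
      rw [← Complex.cpow_add _ _ (aux_cast_ne d)]; congr 1; ring
    rw [← e3] at e2
    linear_combination (-2 * auxB s (((m : ℝ) + 1) * (((d : ℝ) + 1) * t))) * e2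
  rw [← tsum_mul_left]
  simp_rw [key]
  rw [tsum_mul_left]
  congr 1
  have hdk := aux_dk_summable hs ht
  have hz := aux_zeta_sum hs
  rw [Summable.tsum_sub hdk.prod (hz.summable.mul_left _), tsum_mul_left, hz.tsum_eq, ← hdk.tsum_prod]
  congr 1
  · rw [← (Equiv.prodComm ℕ ℕ).tsum_eq]
    have hdk' := (Equiv.prodComm ℕ ℕ).summable_iff.2 hdk
    simp only [Function.comp_def] at hdk'
    rw [hdk'.tsum_prod]
    congr 1; ext k
    have hv : 0 < 2 * π * (t / ((k : ℝ) + 1)) := by positivity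
    have hg := Complex.hasSum_ofReal.2 (aux_geom hv)
    simp only [Equiv.prodComm_apply, Prod.swap_prod_mk]
    rw [tsum_mul_left]
    congr 1
    rw [← hg.tsum_eq]
    congr 1; ext d
    rw [Complex.ofReal_exp]
    congr 1
    push_cast
    have := aux_cast_ne k
    field_simp
  · ring

lemma aux_guinand1 {s : ℂ} (hs : 1 < s.re) {t : ℝ} (ht : 0 < t) :
    phiK t s = (t : ℂ) ^ (s / 2) * ((t / π) * auxH s t - riemannZeta (1 + s) / 2
      + riemannZeta s / (2 * π * t)
      - Complex.Gamma s * riemannZeta s * ((2 * π * t : ℝ) : ℂ) ^ (-s)) := by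
  have htC : (t : ℂ) ≠ 0 := by exact_mod_cast ht.ne'
  have hpiC : (π : ℂ) ≠ 0 := by exact_mod_cast Real.pi_ne_zero
  rw [aux_guinand0 hs ht]
  congr 2
  have hH := aux_HpairC_summable (show -1 < s.re by linarith) t
  have hz := aux_zeta_sum hs
  have hz1 := aux_zeta_sum (s := 1 + s) (by simp; linarith)
  have key : ∀ k : ℕ, ((k : ℂ) + 1) ^ (-s - 1) *
        ((1 / (Real.exp (2 * π * (t / ((k : ℝ) + 1))) - 1) : ℝ) : ℂ) =
      (t / π) * (∑' m : ℕ, ((k : ℂ) + 1) ^ (-s) *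
      (1 / ((((k + 1) * (m + 1) : ℕ) : ℂ) ^ 2 + (t : ℂ) ^ 2))) - (1 / 2) * ((k : ℂ) + 1) ^ (-(1 + s))
      + (1 / (2 * π * t)) * ((k : ℂ) + 1) ^ (-s) := by
    intro k
    have hk := aux_cast_ne k
    rw [aux_cot (by positivity), tsum_mul_left]
    have e1 : ((k : ℂ) + 1) ^ (-s) = ((k : ℂ) + 1) ^ (-s - 1) * ((k : ℂ) + 1) := by
      rw [Complex.cpow_sub _ _ hk, Complex.cpow_one]; field_simp
    rw [e1, show -(1 + s) = -s - 1 by ring]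
    have e2 : ∑' m : ℕ, (((t / ((k : ℝ) + 1) : ℝ) : ℂ) / (((t / ((k : ℝ) + 1) : ℝ) : ℂ) ^ 2 + ((m : ℂ) + 1) ^ 2))
       = t * ((k : ℂ) + 1) * ∑' m : ℕ, (1 / ((((k + 1) * (m + 1) : ℕ) : ℂ) ^ 2 + (t : ℂ) ^ 2)) := by
      rw [← tsum_mul_left]
      congr 1; ext m
      push_cast
      have h3 : ((((k : ℂ) + 1) * ((m : ℂ) + 1)) ^ 2 + (t : ℂ) ^ 2) ≠ 0 := by
        have : ((((k : ℝ) + 1) * ((m : ℝ) + 1)) ^ 2 + t ^ 2) ≠ 0 := by positivity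
        exact_mod_cast this
      have h4 : ((t / ((k : ℂ) + 1)) ^ 2 + ((m : ℂ) + 1) ^ 2) ≠ 0 := by
        have : ((t / ((k : ℝ) + 1)) ^ 2 + ((m : ℝ) + 1) ^ 2) ≠ 0 := by positivity
        exact_mod_cast this
      have h5 : ((t / ((k : ℂ) + 1)) ^ 2 + ((m : ℂ) + 1) ^ 2) =
         ((((k : ℂ) + 1) * ((m : ℂ) + 1)) ^ 2 + (t : ℂ) ^ 2) / ((k : ℂ) + 1) ^ 2 := by
        field_simp; ring
      rw [h5]; field_simp
    rw [e2]
    push_cast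
    field_simp
  simp_rw [key]
  rw [Summable.tsum_add ((hH.prod.mul_left _).sub (hz1.summable.mul_left _)) (hz.summable.mul_left _),
    Summable.tsum_sub (hH.prod.mul_left _) (hz1.summable.mul_left _), tsum_mul_left, tsum_mul_left,
    tsum_mul_left, hz.tsum_eq, hz1.tsum_eq, ← hH.tsum_prod, auxH,
    (aux_H_hasSum (show -1 < s.re by linarith) t).tsum_eq]
  ring

lemma aux_phiK_pair {t : ℝ} (ht : 0 < t) (s : ℂ) : phiK t s =
    2 * ∑' p : ℕ × ℕ, ((p.1 : ℂ) + 1) ^ (-s) * auxg s t ((p.1 + 1) * (p.2 + 1)) := by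
  rw [aux_phiK_eq, (aux_csigma_hasSum s (auxg s t) (aux_pair_summable s ht).hasSum).tsum_eq]

lemma aux_natpow_diff (d : ℕ) (a : ℂ → ℂ) (ha : Differentiable ℂ a) :
    Differentiable ℂ (fun s => ((d : ℂ) + 1) ^ (a s)) :=
  fun s => (ha s).const_cpow (Or.inl (aux_cast_ne d))

lemma aux_phiK_diff {t : ℝ} (ht : 0 < t) : Differentiable ℂ (fun s => phiK t s) := by
  intro s
  have h := differentiableOn_tsum_of_summable_norm (F := fun (p : ℕ × ℕ) (s : ℂ) =>
      ((p.1 : ℂ) + 1) ^ (-s) * auxg s t ((p.1 + 1) * (p.2 + 1))) (U := Metric.ball 0 (‖s‖ + 1))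
    (aux_pair_major_summable (‖s‖ + 1) ht) (fun p => ?_) Metric.isOpen_ball
    (fun p w hw => aux_pair_bound ht (mem_ball_zero_iff.1 hw).le p.1 p.2)
  · have h1 : DifferentiableAt ℂ (fun s => 2 * ∑' p : ℕ × ℕ, ((p.1 : ℂ) + 1) ^ (-s) * auxg s t ((p.1 + 1) * (p.2 + 1))) s :=
      (h.differentiableAt (Metric.isOpen_ball.mem_nhds (by simp))).const_mul 2
    simp_rw [aux_phiK_pair ht]
    exact h1
  · refine Differentiable.differentiableOn ?_
    refine (aux_natpow_diff p.1 _ differentiable_neg).mul ?_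
    unfold auxg
    refine Differentiable.mul ?_ (aux_B_diff (by push_cast; positivity))
    have := aux_natpow_diff ((p.1 + 1) * (p.2 + 1) - 1) (fun s => s / 2) (by fun_prop)
    have e : (((p.1 + 1) * (p.2 + 1) - 1 : ℕ) : ℂ) + 1 = (((p.1 + 1) * (p.2 + 1) : ℕ) : ℂ) := by
      rw [← Nat.cast_add_one]; congr 1
    rw [e] at this
    exact this

lemma aux_H_diff {s : ℂ} (hs : -1 < s.re) (t : ℝ) : DifferentiableAt ℂ (fun s => auxH s t) s := by
  obtain ⟨a, ha1, ha2⟩ := exists_between hs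
  have hU : IsOpen {w : ℂ | a < w.re} := isOpen_lt continuous_const Complex.continuous_re
  have hsum := (aux_summable_shift (show -a - 2 < -1 by linarith)).mul_of_nonneg
    (aux_summable_shift (show (-2 : ℝ) < -1 by norm_num)) (fun n => by positivity) (fun n => by positivity)
  have h := differentiableOn_tsum_of_summable_norm (F := fun (p : ℕ × ℕ) (s : ℂ) =>
      ((p.1 : ℂ) + 1) ^ (-s) * (1 / ((((p.1 + 1) * (p.2 + 1) : ℕ) : ℂ) ^ 2 + (t : ℂ) ^ 2)))
      (U := {w : ℂ | a < w.re}) hsum (fun p => ?_) hU (fun p w hw => ?_)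
  · have h1 := h.differentiableAt (hU.mem_nhds (show a < s.re from ha2))
    refine h1.congr_of_eventuallyEq ?_
    filter_upwards [hU.mem_nhds (show a < s.re from ha2)] with w hw
    have hw : a < w.re := hw
    rw [auxH, (aux_H_hasSum (ha1.trans hw) t).tsum_eq]
  · exact ((aux_natpow_diff p.1 _ differentiable_neg).mul_const _).differentiableOn
  · have hw : a < w.re := hw
    have hd : (1 : ℝ) ≤ (p.1 : ℝ) + 1 := by linarith [(Nat.cast_nonneg p.1 : (0:ℝ) ≤ p.1)]
    rw [norm_mul, aux_norm_cast_cpow, Complex.neg_re]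
    have : (1 / ((((p.1 + 1) * (p.2 + 1) : ℕ) : ℂ) ^ 2 + (t : ℂ) ^ 2)) =
      ((1 / ((((p.1 + 1) * (p.2 + 1) : ℕ) : ℝ) ^ 2 + t ^ 2) : ℝ) : ℂ) := by push_cast; ring
    rw [this, Complex.norm_real, Real.norm_of_nonneg (by positivity)]
    refine (aux_Hpair_bound w t p.1 p.2).trans ?_
    refine mul_le_mul_of_nonneg_right ?_ (by positivity)
    exact Real.rpow_le_rpow_of_exponent_le hd (by linarith)

lemma aux_guinand2 {s : ℂ} (hs : -1 < s.re) (hs0 : s ≠ 0) (hs1 : s ≠ 1) (hs3 : s.re < 3) {t : ℝ} (ht : 0 < t) :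
    phiK t s = (t : ℂ) ^ (s / 2) * ((t / π) * auxH s t - riemannZeta (1 + s) / 2
      + riemannZeta s / (2 * π * t)
      - Complex.Gamma s * riemannZeta s * ((2 * π * t : ℝ) : ℂ) ^ (-s)) := by
  have htC : (t : ℂ) ≠ 0 := by exact_mod_cast ht.ne'
  set U : Set ℂ := {z : ℂ | (-1 : ℝ) < z.re ∧ z.re < 3} \ {0, 1} with hU
  have hfin : ({0, 1} : Set ℂ).Finite := Set.toFinite _
  have hUc : IsPreconnected U := aux_strip_preconnected (by norm_num) hfin.countable
  have hUo : IsOpen U := by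
    refine IsOpen.sdiff ?_ hfin.isClosed
    exact (isOpen_lt continuous_const Complex.continuous_re).inter (isOpen_lt Complex.continuous_re continuous_const)
  have hf : DifferentiableOn ℂ (fun s => phiK t s) U := (aux_phiK_diff ht).differentiableOn
  have hg : DifferentiableOn ℂ (fun s => (t : ℂ) ^ (s / 2) * ((t / π) * auxH s t - riemannZeta (1 + s) / 2
      + riemannZeta s / (2 * π * t)
      - Complex.Gamma s * riemannZeta s * ((2 * π * t : ℝ) : ℂ) ^ (-s))) U := by
    intro w hw
    obtain ⟨⟨hw1, hw2⟩, hw3⟩ := hw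
    have hw1 : -1 < w.re := hw1
    have hw0 : w ≠ 0 := fun h => hw3 (by simp [h])
    have hw1' : w ≠ 1 := fun h => hw3 (by simp [h])
    refine DifferentiableAt.differentiableWithinAt ?_
    have d1 : DifferentiableAt ℂ (fun s : ℂ => (t : ℂ) ^ (s / 2)) w :=
      (by fun_prop : DifferentiableAt ℂ (fun s : ℂ => s / 2) w).const_cpow (Or.inl htC)
    have d2 : DifferentiableAt ℂ (fun s : ℂ => ((2 * π * t : ℝ) : ℂ) ^ (-s)) w :=
      (by fun_prop : DifferentiableAt ℂ (fun s : ℂ => -s) w).const_cpow (Or.inl (by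
        have : 2 * π * t ≠ 0 := by positivity
        exact_mod_cast this))
    have d3 := aux_H_diff hw1 t
    have d4 : DifferentiableAt ℂ riemannZeta w := differentiableAt_riemannZeta hw1'
    have d5 : DifferentiableAt ℂ (fun s : ℂ => riemannZeta (1 + s)) w := by
      have : DifferentiableAt ℂ riemannZeta (1 + w) := differentiableAt_riemannZeta (by simpa using hw0)
      exact this.comp w (by fun_prop : DifferentiableAt ℂ (fun s : ℂ => 1 + s) w)
    have d6 : DifferentiableAt ℂ Complex.Gamma w := by
      refine Complex.differentiableAt_Gamma _ fun m hm => ?_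
      rcases Nat.eq_zero_or_pos m with rfl | h
      · exact hw0 (by simpa using hm)
      · have : w.re = -(m : ℝ) := by rw [hm]; simp
        have h' : (1 : ℝ) ≤ m := by exact_mod_cast h
        linarith
    exact d1.mul ((((d3.const_mul _).sub (d5.div_const _)).add (d4.div_const _)).sub ((d6.mul d4).mul d2))
  have h2 : (2 : ℂ) ∈ U := by
    refine ⟨⟨by norm_num, by norm_num⟩, by norm_num⟩
  have := AnalyticOnNhd.eqOn_of_preconnected_of_eventuallyEq (hf.analyticOnNhd hUo) (hg.analyticOnNhd hUo)
    hUc h2 ?_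
  · exact this ⟨⟨hs, hs3⟩, by simp [hs0, hs1]⟩
  · have : {z : ℂ | 1 < z.re} ∈ nhds (2 : ℂ) := (isOpen_lt continuous_const Complex.continuous_re).mem_nhds (by simp)
    filter_upwards [this] with z hz
    exact aux_guinand1 hz ht

/-- The function Psi. -/
noncomputable def auxPsi (s : ℂ) (t : ℝ) : ℂ :=
  (t : ℂ) ^ (-s / 2) * (phiK t s - (riemannZeta s / (2 * (π : ℂ))) * (t : ℂ) ^ (s / 2 - 1))

lemma aux_cos_ne {s : ℂ} (hs : -1 < s.re) (hs1 : s.re < 1) : Complex.cos ((π : ℂ) * s / 2) ≠ 0 := by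
  rw [Ne, Complex.cos_eq_zero_iff]
  rintro ⟨k, hk⟩
  have hpiC : (π : ℂ) ≠ 0 := by exact_mod_cast Real.pi_ne_zero
  have : s = 2 * k + 1 := by
    field_simp at hk; linear_combination hk
  have h1 : s.re = 2 * k + 1 := by rw [this]; simp
  rw [h1] at hs hs1
  have a : (-1 : ℤ) < k := by
    have : (-1 : ℝ) < k := by linarith
    exact_mod_cast this
  have b : k < (0 : ℤ) := by
    have : (k : ℝ) < 0 := by linarith
    exact_mod_cast this
  omega

lemma aux_func_eq {s : ℂ} (hs : -1 < s.re) (hs0 : s ≠ 0) (hs3 : s.re < 1) :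
    Complex.Gamma s * riemannZeta s * ((2 * π : ℝ) : ℂ) ^ (-s) =
      riemannZeta (1 - s) / (2 * Complex.cos ((π : ℂ) * s / 2)) := by
  have h := riemannZeta_one_sub (s := s) (fun m hm => by
      rcases Nat.eq_zero_or_pos m with rfl | h
      · exact hs0 (by simpa using hm)
      · have : s.re = -(m : ℝ) := by rw [hm]; simp
        have h' : (1 : ℝ) ≤ m := by exact_mod_cast h
        linarith) (fun h => by rw [h] at hs3; simp at hs3)
  rw [h]
  have := aux_cos_ne hs hs3
  push_cast
  field_simp

lemma aux_Psi_eq {s : ℂ} (hs : -1 < s.re) (hs0 : s ≠ 0) (hs3 : s.re < 1) {t : ℝ} (ht : 0 < t) :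
    auxPsi s t = -(riemannZeta (1 - s) / (2 * Complex.cos ((π : ℂ) * s / 2))) * (t : ℂ) ^ (-s)
      - riemannZeta (1 + s) / 2 + (t / π) * auxH s t := by
  have htC : (t : ℂ) ≠ 0 := by exact_mod_cast ht.ne'
  have hpiC : (π : ℂ) ≠ 0 := by exact_mod_cast Real.pi_ne_zero
  have hs1 : s ≠ 1 := fun h => by rw [h] at hs3; simp at hs3
  rw [auxPsi, aux_guinand2 hs hs0 hs1 (by linarith) ht, ← aux_func_eq hs hs0 hs3]
  have e1 := Complex.mul_cpow_ofReal_nonneg (a := 2 * π) (b := t) (by positivity) ht.le (-s)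
  rw [← Complex.ofReal_mul] at e1
  rw [e1, Complex.cpow_sub _ _ htC, Complex.cpow_one]
  have e2 : (t : ℂ) ^ (-s / 2) * (t : ℂ) ^ (s / 2) = 1 := by
    rw [← Complex.cpow_add _ _ htC]; ring_nf; simp
  set A := (t : ℂ) ^ (-s / 2)
  set B := (t : ℂ) ^ (s / 2)
  set Q := ((2 * π : ℝ) : ℂ) ^ (-s)
  set T := (t : ℂ) ^ (-s)
  have : A * (B * ((t / π) * auxH s t - riemannZeta (1 + s) / 2 + riemannZeta s / (2 * π * t)
      - Complex.Gamma s * riemannZeta s * (Q * T)) - riemannZeta s / (2 * π) * (B / t)) =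
    (A * B) * ((t / π) * auxH s t - riemannZeta (1 + s) / 2 
      - Complex.Gamma s * riemannZeta s * (Q * T)) := by field_simp; ring
  rw [this, e2]; ring

lemma aux_phi_image : (fun t : ℝ => t ^ 2 / (1 + t ^ 2)) '' Set.Ioi 0 = Set.Ioo 0 1 := by
  ext y
  constructor
  · rintro ⟨t, ht, rfl⟩
    have ht : 0 < t := ht
    have h : 0 < 1 + t ^ 2 := by positivity
    refine ⟨by positivity, ?_⟩
    simp only
    rw [div_lt_one h]; linarith
  · rintro ⟨h0, h1⟩
    have h2 : 0 < y / (1 - y) := div_pos h0 (by linarith)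
    refine ⟨Real.sqrt (y / (1 - y)), Real.sqrt_pos.2 h2, ?_⟩
    simp only
    rw [Real.sq_sqrt h2.le]
    have : 1 - y ≠ 0 := by linarith
    field_simp
    ring

lemma aux_beta_integrand {u : ℂ} {t : ℝ} (ht : 0 < t) :
    |2 * t / (1 + t ^ 2) ^ 2| • (((t ^ 2 / (1 + t ^ 2) : ℝ) : ℂ) ^ (u - 1) *
      (1 - ((t ^ 2 / (1 + t ^ 2) : ℝ) : ℂ)) ^ ((1 - u) - 1)) =
      2 * ((t : ℂ) ^ (2 * u - 1) / (1 + (t : ℂ) ^ 2)) := by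
  have h1 : 0 < 1 + t ^ 2 := by positivity
  have htC : (t : ℂ) ≠ 0 := by exact_mod_cast ht.ne'
  have hC : (1 + (t : ℂ) ^ 2) ≠ 0 := by exact_mod_cast h1.ne'
  rw [abs_of_pos (by positivity)]
  have e0 : (1 - ((t ^ 2 / (1 + t ^ 2) : ℝ) : ℂ)) = (((1 + t ^ 2)⁻¹ : ℝ) : ℂ) := by
    push_cast; field_simp; ring
  have e1 : ((t ^ 2 / (1 + t ^ 2) : ℝ) : ℂ) ^ (u - 1) = (t : ℂ) ^ (2 * (u - 1)) * (((1 + t ^ 2)⁻¹ : ℝ) : ℂ) ^ (u - 1) := by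
    rw [div_eq_mul_inv, Complex.ofReal_mul, Complex.mul_cpow_ofReal_nonneg (by positivity) (by positivity)]
    congr 1
    rw [sq, Complex.ofReal_mul, Complex.mul_cpow_ofReal_nonneg ht.le ht.le, ← Complex.cpow_add _ _ htC]
    congr 1; ring
  have hne : (((1 + t ^ 2)⁻¹ : ℝ) : ℂ) ≠ 0 := by
    have : (1 + t ^ 2)⁻¹ ≠ 0 := by positivity
    exact_mod_cast this
  have e2 : (((1 + t ^ 2)⁻¹ : ℝ) : ℂ) ^ (u - 1) * (((1 + t ^ 2)⁻¹ : ℝ) : ℂ) ^ ((1 - u) - 1) = 1 + (t : ℂ) ^ 2 := by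
    rw [← Complex.cpow_add _ _ hne, show u - 1 + (1 - u - 1) = -1 by ring, Complex.cpow_neg_one]
    push_cast; simp
  have e3 : (t : ℂ) ^ (2 * u - 1) = (t : ℂ) ^ (2 * (u - 1)) * t := by
    have : 2 * (u - 1) = (2 * u - 1) - 1 := by ring
    rw [this, Complex.cpow_sub (2 * u - 1) _ htC, Complex.cpow_one]; field_simp
  rw [e0, e1, mul_assoc, e2, e3, Complex.real_smul]
  push_cast
  field_simp

lemma aux_int_base {p : ℂ} (hp0 : 0 < p.re) (hp2 : p.re < 2) :
    IntegrableOn (fun t : ℝ => (t : ℂ) ^ (p - 1) / (1 + (t : ℂ) ^ 2)) (Set.Ioi 0) ∧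
    ∫ t in Set.Ioi (0 : ℝ), (t : ℂ) ^ (p - 1) / (1 + (t : ℂ) ^ 2) =
      π / 2 / Complex.sin (π * p / 2) := by
  set u : ℂ := p / 2 with hu
  have hu0 : 0 < u.re := by simp [hu]; linarith
  have hu1 : 0 < (1 - u).re := by simp [hu]; linarith
  have hder : ∀ t ∈ Set.Ioi (0 : ℝ), HasDerivWithinAt (fun t : ℝ => t ^ 2 / (1 + t ^ 2))
      (2 * t / (1 + t ^ 2) ^ 2) (Set.Ioi 0) t := by
    intro t ht
    have h1 : 1 + t ^ 2 ≠ 0 := by positivity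
    have h2 : HasDerivAt (fun t : ℝ => t ^ 2) (2 * t) t := by simpa using hasDerivAt_pow 2 t
    have h3 := h2.div (h2.const_add 1) h1
    refine HasDerivAt.hasDerivWithinAt ?_
    convert! h3 using 1
    ring
  have hinj : Set.InjOn (fun t : ℝ => t ^ 2 / (1 + t ^ 2)) (Set.Ioi 0) := by
    intro a ha b hb hab
    have ha : 0 < a := ha
    have hb : 0 < b := hb
    have h1 : 1 + a ^ 2 ≠ 0 := by positivity
    have h2 : 1 + b ^ 2 ≠ 0 := by positivity
    simp only at hab
    rw [div_eq_div_iff h1 h2] at hab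
    have : a ^ 2 = b ^ 2 := by linarith
    exact (pow_left_inj₀ ha.le hb.le two_ne_zero).1 this
  set g : ℝ → ℂ := fun y => (y : ℂ) ^ (u - 1) * (1 - (y : ℂ)) ^ ((1 - u) - 1) with hg
  have hB : IntegrableOn g (Set.Ioo 0 1) := by
    have := Complex.betaIntegral_convergent hu0 hu1
    rw [intervalIntegrable_iff_integrableOn_Ioo_of_le zero_le_one] at this
    exact this
  have hcongr : ∀ t ∈ Set.Ioi (0 : ℝ), |2 * t / (1 + t ^ 2) ^ 2| • g (t ^ 2 / (1 + t ^ 2)) =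
      2 * ((t : ℂ) ^ (p - 1) / (1 + (t : ℂ) ^ 2)) := by
    intro t ht
    have := aux_beta_integrand (u := u) (show 0 < t from ht)
    rw [show 2 * u - 1 = p - 1 by rw [hu]; ring] at this
    exact this
  have hI := (integrableOn_image_iff_integrableOn_abs_deriv_smul measurableSet_Ioi hder hinj g).1
    (by rw [aux_phi_image]; exact hB)
  have hI2 : IntegrableOn (fun t : ℝ => 2 * ((t : ℂ) ^ (p - 1) / (1 + (t : ℂ) ^ 2))) (Set.Ioi 0) :=
    hI.congr_fun hcongr measurableSet_Ioi
  have hI3 : IntegrableOn (fun t : ℝ => ((t : ℂ) ^ (p - 1) / (1 + (t : ℂ) ^ 2))) (Set.Ioi 0) := by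
    have := hI2.const_mul (1 / 2)
    refine this.congr (Filter.Eventually.of_forall fun t => ?_)
    simp only; ring
  refine ⟨hI3, ?_⟩
  have hIntg := integral_image_eq_integral_abs_deriv_smul measurableSet_Ioi hder hinj g
  rw [aux_phi_image, setIntegral_congr_fun measurableSet_Ioi hcongr, integral_const_mul] at hIntg
  have hbeta : ∫ y in Set.Ioo (0:ℝ) 1, g y = Complex.betaIntegral u (1 - u) := by
    rw [Complex.betaIntegral, intervalIntegral.integral_of_le zero_le_one, integral_Ioc_eq_integral_Ioo]
  have hG := Complex.Gamma_mul_Gamma_eq_betaIntegral hu0 hu1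
  rw [Complex.Gamma_mul_Gamma_one_sub, add_sub_cancel, Complex.Gamma_one, one_mul] at hG
  rw [hbeta, ← hG] at hIntg
  rw [show (π : ℂ) * p / 2 = π * u by rw [hu]; ring]
  linear_combination (-1 / 2) * hIntg

lemma aux_int_scaled {w : ℂ} (hw0 : -1 < w.re) (hw1 : w.re < 1) {a : ℝ} (ha : 0 < a) :
    IntegrableOn (fun t : ℝ => (t : ℂ) ^ w / ((a : ℂ) ^ 2 + (t : ℂ) ^ 2)) (Set.Ioi 0) ∧
    ∫ t in Set.Ioi (0 : ℝ), (t : ℂ) ^ w / ((a : ℂ) ^ 2 + (t : ℂ) ^ 2) =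
      π / 2 * (a : ℂ) ^ (w - 1) / Complex.cos (π * w / 2) := by
  have haC : (a : ℂ) ≠ 0 := by exact_mod_cast ha.ne'
  obtain ⟨h1, h2⟩ := aux_int_base (p := w + 1) (by simp; linarith) (by simp; linarith)
  rw [add_sub_cancel_right] at h1 h2
  set g : ℝ → ℂ := fun t => (t : ℂ) ^ w / ((a : ℂ) ^ 2 + (t : ℂ) ^ 2) with hg
  have hcomp : ∀ t ∈ Set.Ioi (0 : ℝ), ((a : ℂ) ^ w / (a : ℂ) ^ 2) * ((t : ℂ) ^ w / (1 + (t : ℂ) ^ 2)) = g (a * t) := by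
    intro t ht
    have ht : 0 < t := ht
    have h1 : (1 + (t : ℂ) ^ 2) ≠ 0 := by
      have : 1 + t ^ 2 ≠ 0 := by positivity
      exact_mod_cast this
    have h2 : ((a : ℂ) ^ 2 + ((a * t : ℝ) : ℂ) ^ 2) = (a : ℂ) ^ 2 * (1 + (t : ℂ) ^ 2) := by push_cast; ring
    simp only [hg]
    rw [h2, Complex.ofReal_mul, Complex.mul_cpow_ofReal_nonneg ha.le ht.le]
    field_simp
  have hI : IntegrableOn (fun t => g (a * t)) (Set.Ioi 0) :=
    IntegrableOn.congr_fun (h1.const_mul _) hcomp measurableSet_Ioi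
  have hI2 : IntegrableOn g (Set.Ioi 0) := by
    have := (integrableOn_Ioi_comp_mul_left_iff g 0 ha).1 hI
    rwa [mul_zero] at this
  refine ⟨hI2, ?_⟩
  have h3 := integral_comp_mul_left_Ioi g 0 ha
  rw [mul_zero, ← setIntegral_congr_fun measurableSet_Ioi hcomp, integral_const_mul, h2,
    Complex.real_smul] at h3
  have h4 : Complex.sin (π * (w + 1) / 2) = Complex.cos (π * w / 2) := by
    rw [← Complex.sin_add_pi_div_two]; congr 1; ring
  rw [h4] at h3
  rw [Complex.cpow_sub _ _ haC, Complex.cpow_one]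
  push_cast at h3
  have h5 : ∫ t in Set.Ioi (0 : ℝ), g t = a * ((a : ℂ)⁻¹ * ∫ t in Set.Ioi (0 : ℝ), g t) := by field_simp
  rw [h5, ← h3]
  field_simp

noncomputable def auxQ (w : ℂ) (x a : ℝ) (t : ℝ) : ℂ :=
  (t : ℂ) ^ (w + 1) / (((x : ℂ) ^ 2 + (t : ℂ) ^ 2) * ((a : ℂ) ^ 2 + (t : ℂ) ^ 2))

lemma aux_sq_add_ne {a t : ℝ} (ha : 0 < a) : ((a : ℂ) ^ 2 + (t : ℂ) ^ 2) ≠ 0 := by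
  have : a ^ 2 + t ^ 2 ≠ 0 := by positivity
  exact_mod_cast this

lemma aux_Q_norm {w : ℂ} {x a t : ℝ} (ht : 0 < t) :
    ‖auxQ w x a t‖ = t ^ (w.re + 1) / ((x ^ 2 + t ^ 2) * (a ^ 2 + t ^ 2)) := by
  rw [auxQ, norm_div, Complex.norm_cpow_eq_rpow_re_of_pos ht]
  congr 1
  have : (((x : ℂ) ^ 2 + (t : ℂ) ^ 2) * ((a : ℂ) ^ 2 + (t : ℂ) ^ 2)) =
    (((x ^ 2 + t ^ 2) * (a ^ 2 + t ^ 2) : ℝ) : ℂ) := by push_cast; ring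
  rw [this, Complex.norm_real, Real.norm_of_nonneg (by positivity)]

lemma aux_Q_int_ne {w : ℂ} (hw0 : 0 < w.re) (hw2 : w.re < 2) {x a : ℝ} (hx : 0 < x) (ha : 0 < a) (hxa : a ≠ x) :
    IntegrableOn (auxQ w x a) (Set.Ioi 0) ∧ ∫ t in Set.Ioi (0 : ℝ), auxQ w x a t =
      π / 2 / Complex.sin (π * w / 2) * (((a : ℂ) ^ w - (x : ℂ) ^ w) / ((a : ℂ) ^ 2 - (x : ℂ) ^ 2)) := by
  have haC : (a : ℂ) ≠ 0 := by exact_mod_cast ha.ne'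
  have hxC : (x : ℂ) ≠ 0 := by exact_mod_cast hx.ne'
  have hne : ((a : ℂ) ^ 2 - (x : ℂ) ^ 2) ≠ 0 := by
    have : a ^ 2 - x ^ 2 ≠ 0 := by
      rw [sub_ne_zero]; intro h
      exact hxa ((pow_left_inj₀ ha.le hx.le two_ne_zero).1 h)
    exact_mod_cast this
  obtain ⟨i1, v1⟩ := aux_int_scaled (w := w - 1) (by simp; linarith) (by simp; linarith) ha
  obtain ⟨i2, v2⟩ := aux_int_scaled (w := w - 1) (by simp; linarith) (by simp; linarith) hx
  have hcongr : ∀ t ∈ Set.Ioi (0 : ℝ),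
      ((a : ℂ) ^ 2 / ((a : ℂ) ^ 2 - (x : ℂ) ^ 2)) * ((t : ℂ) ^ (w - 1) / ((a : ℂ) ^ 2 + (t : ℂ) ^ 2)) -
      ((x : ℂ) ^ 2 / ((a : ℂ) ^ 2 - (x : ℂ) ^ 2)) * ((t : ℂ) ^ (w - 1) / ((x : ℂ) ^ 2 + (t : ℂ) ^ 2)) =
      auxQ w x a t := by
    intro t ht
    have ht : 0 < t := ht
    have htC : (t : ℂ) ≠ 0 := by exact_mod_cast ht.ne'
    have h1 := aux_sq_add_ne (t := t) ha
    have h2 := aux_sq_add_ne (t := t) hx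
    have e : (t : ℂ) ^ (w + 1) = (t : ℂ) ^ (w - 1) * t ^ 2 := by
      have : w + 1 = (w - 1) + 2 := by ring
      rw [this, Complex.cpow_add _ _ htC]; norm_cast
    rw [auxQ, e]
    field_simp
    ring
  have j1 := i1.const_mul ((a : ℂ) ^ 2 / ((a : ℂ) ^ 2 - (x : ℂ) ^ 2))
  have j2 := i2.const_mul ((x : ℂ) ^ 2 / ((a : ℂ) ^ 2 - (x : ℂ) ^ 2))
  refine ⟨IntegrableOn.congr_fun (j1.sub j2) hcongr measurableSet_Ioi, ?_⟩
  rw [← setIntegral_congr_fun measurableSet_Ioi hcongr, integral_sub j1 j2, integral_const_mul,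
    integral_const_mul, v1, v2]
  have h4 : Complex.cos (π * (w - 1) / 2) = Complex.sin (π * w / 2) := by
    rw [← Complex.cos_sub_pi_div_two]; congr 1; ring
  have e1 : (a : ℂ) ^ (w - 1 - 1) = (a : ℂ) ^ w / a ^ 2 := by
    rw [show w - 1 - 1 = w - 2 by ring, Complex.cpow_sub _ _ haC]; norm_cast
  have e2 : (x : ℂ) ^ (w - 1 - 1) = (x : ℂ) ^ w / x ^ 2 := by
    rw [show w - 1 - 1 = w - 2 by ring, Complex.cpow_sub _ _ hxC]; norm_cast
  rw [h4, e1, e2]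
  field_simp

lemma aux_Q_meas (w : ℂ) (x a : ℝ) : Measurable (auxQ w x a) := by
  unfold auxQ
  have : Measurable (fun t : ℝ => (t : ℂ) ^ (w + 1)) := Complex.measurable_ofReal.pow_const _
  refine this.div ?_
  fun_prop

lemma aux_Q_le {w : ℂ} {x a b t : ℝ} (hx : 0 < x) (hb : 0 < b) (hab : b ≤ a) (ht : 0 < t) :
    ‖auxQ w x a t‖ ≤ ‖auxQ w x b t‖ := by
  rw [aux_Q_norm ht, aux_Q_norm ht]
  gcongr

lemma aux_Q_integrable {w : ℂ} (hw0 : 0 < w.re) (hw2 : w.re < 2) {x a : ℝ} (hx : 0 < x) (ha : 0 < a) :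
    IntegrableOn (auxQ w x a) (Set.Ioi 0) := by
  by_cases h : a = x
  · subst h
    have := (aux_Q_int_ne hw0 hw2 ha (half_pos ha) (by linarith)).1
    refine Integrable.mono this (aux_Q_meas _ _ _).aestronglyMeasurable ?_
    refine (ae_restrict_iff' measurableSet_Ioi).2 (Filter.Eventually.of_forall fun t ht => ?_)
    exact aux_Q_le ha (half_pos ha) (by linarith) ht
  · exact (aux_Q_int_ne hw0 hw2 hx ha h).1

noncomputable def auxD (w : ℂ) (x a : ℝ) : ℂ :=
  if x = a then w * (a : ℂ) ^ (w - 2) / 2 else ((a : ℂ) ^ w - (x : ℂ) ^ w) / ((a : ℂ) ^ 2 - (x : ℂ) ^ 2)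

lemma aux_Q_int {w : ℂ} (hw0 : 0 < w.re) (hw2 : w.re < 2) {x a : ℝ} (hx : 0 < x) (ha : 0 < a) :
    ∫ t in Set.Ioi (0 : ℝ), auxQ w x a t = π / 2 / Complex.sin (π * w / 2) * auxD w x a := by
  by_cases h : x = a
  · subst h
    rw [auxD, if_pos rfl]
    have hxC : (x : ℂ) ≠ 0 := by exact_mod_cast hx.ne'
    have hw : w ≠ 0 := by rintro rfl; simp at hw0
    have hc : ContinuousAt (fun a : ℝ => ∫ t in Set.Ioi (0 : ℝ), auxQ w x a t) x := by
      refine continuousAt_of_dominated (bound := fun t => ‖auxQ w x (x / 2) t‖) ?_ ?_ ?_ ?_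
      · exact Filter.Eventually.of_forall fun a => (aux_Q_meas _ _ _).aestronglyMeasurable
      · filter_upwards [lt_mem_nhds (show x / 2 < x by linarith)] with a ha'
        refine (ae_restrict_iff' measurableSet_Ioi).2 (Filter.Eventually.of_forall fun t ht => ?_)
        exact aux_Q_le hx (half_pos hx) ha'.le ht
      · exact (aux_Q_integrable hw0 hw2 hx (half_pos hx)).norm
      · refine (ae_restrict_iff' measurableSet_Ioi).2 (Filter.Eventually.of_forall fun t ht => ?_)
        unfold auxQ
        refine ContinuousAt.div continuousAt_const (by fun_prop) ?_
        exact mul_ne_zero (aux_sq_add_ne hx) (aux_sq_add_ne hx)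
    have hlim1 : Filter.Tendsto (fun a : ℝ => ∫ t in Set.Ioi (0 : ℝ), auxQ w x a t) (nhdsWithin x {x}ᶜ)
      (nhds (∫ t in Set.Ioi (0 : ℝ), auxQ w x x t)) := hc.tendsto.mono_left nhdsWithin_le_nhds
    have hd := hasDerivAt_iff_tendsto_slope.1 (hasDerivAt_ofReal_cpow_const hx.ne' hw)
    have hq : Filter.Tendsto (fun a : ℝ => (1 : ℂ) / ((a : ℂ) + x)) (nhdsWithin x {x}ᶜ) (nhds (1 / ((x : ℂ) + x))) := by
      have : ContinuousAt (fun a : ℝ => (1 : ℂ) / ((a : ℂ) + x)) x :=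
        ContinuousAt.div continuousAt_const (by fun_prop) (by rw [← two_mul]; exact mul_ne_zero two_ne_zero hxC)
      exact this.tendsto.mono_left nhdsWithin_le_nhds
    have hlim2 := ((hd.mul hq).const_mul (π / 2 / Complex.sin (π * w / 2)))
    have heq : (fun a : ℝ => ∫ t in Set.Ioi (0 : ℝ), auxQ w x a t) =ᶠ[nhdsWithin x {x}ᶜ]
        fun a => π / 2 / Complex.sin (π * w / 2) * (slope (fun y : ℝ => (y : ℂ) ^ w) x a * (1 / ((a : ℂ) + x))) := by
      have h1 : ∀ᶠ a in nhdsWithin x {x}ᶜ, 0 < a := nhdsWithin_le_nhds (lt_mem_nhds hx)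
      filter_upwards [h1, self_mem_nhdsWithin] with a ha0 hax
      have hax : a ≠ x := hax
      rw [(aux_Q_int_ne hw0 hw2 hx ha0 hax).2, slope_def_module, Complex.real_smul]
      congr 1
      have hs : ((a : ℂ) ^ 2 - (x : ℂ) ^ 2) = ((a : ℂ) - x) * (a + x) := by ring
      rw [hs]
      push_cast
      rw [div_eq_mul_inv, mul_inv]
      ring
    have := tendsto_nhds_unique (hlim1.congr' heq) hlim2
    rw [this]
    congr 1
    have e2 : (x : ℂ) ^ (w - 1) = (x : ℂ) ^ (w - 2) * x := by
      rw [show w - 1 = (w - 2) + 1 by ring, Complex.cpow_add _ _ hxC, Complex.cpow_one]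
    rw [e2]; field_simp; ring
  · rw [auxD, if_neg h]
    exact (aux_Q_int_ne hw0 hw2 hx ha (Ne.symm h)).2

noncomputable def auxE (w : ℂ) (x : ℝ) (n : ℕ) : ℂ :=
  if x = ((n : ℝ) + 1) then (w - 2) * ((n : ℂ) + 1) ^ (w - 4) / 2
          else (((n : ℂ) + 1) ^ (w - 2) - (x : ℂ) ^ (w - 2)) /
            (((n : ℂ) + 1) ^ 2 - (x : ℂ) ^ 2)

lemma aux_ratio_bdd (x : ℝ) : ∃ C : ℝ, 0 ≤ C ∧ ∀ n : ℕ,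
    |((n : ℝ) + 1) ^ 2 / (((n : ℝ) + 1) ^ 2 - x ^ 2)| ≤ C := by
  have h : Filter.Tendsto (fun n : ℕ => |((n : ℝ) + 1) ^ 2 / (((n : ℝ) + 1) ^ 2 - x ^ 2)|) Filter.atTop
      (nhds 1) := by
    have h1 : Filter.Tendsto (fun n : ℕ => 1 / ((n : ℝ) + 1)) Filter.atTop (nhds 0) :=
      tendsto_one_div_add_atTop_nhds_zero_nat
    have h2 : Filter.Tendsto (fun n : ℕ => |1 / (1 - x ^ 2 * (1 / ((n : ℝ) + 1)) ^ 2)|) Filter.atTop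
      (nhds |1 / (1 - x ^ 2 * 0 ^ 2)|) := by
      refine Filter.Tendsto.abs (Filter.Tendsto.div tendsto_const_nhds ?_ (by simp))
      exact tendsto_const_nhds.sub (tendsto_const_nhds.mul (h1.pow 2))
    have h3 : |1 / (1 - x ^ 2 * 0 ^ 2)| = (1:ℝ) := by simp
    rw [h3] at h2
    refine h2.congr fun n => ?_
    have : ((n : ℝ) + 1) ≠ 0 := by positivity
    congr 1
    rw [show (1 - x ^ 2 * (1 / ((n : ℝ) + 1)) ^ 2) = (((n : ℝ) + 1) ^ 2 - x ^ 2) / ((n : ℝ) + 1) ^ 2 by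
      field_simp]
    rw [one_div_div]
  obtain ⟨C, hC⟩ := h.bddAbove_range
  have hC' : ∀ n : ℕ, |((n : ℝ) + 1) ^ 2 / (((n : ℝ) + 1) ^ 2 - x ^ 2)| ≤ C :=
    fun n => hC ⟨n, rfl⟩
  exact ⟨C, (abs_nonneg _).trans (hC' 0), hC'⟩

lemma aux_E_bound {x : ℝ} (hx : 0 < x) (R : ℝ) : ∃ C : ℝ, 0 ≤ C ∧ ∀ w : ℂ, 0 < w.re → w.re < 2 → ‖w‖ ≤ R →
    ∀ n : ℕ, ‖auxE w x n‖ ≤ C * (1 / (((n + 1 : ℕ) : ℝ) ^ 2 + 0 ^ 2)) := by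
  obtain ⟨C, hC0, hC⟩ := aux_ratio_bdd x
  refine ⟨C * (2 + x⁻¹ ^ 2) + (|R| + 2) / 2, by positivity, fun w h0 h2 hR n => ?_⟩
  have hn : (0 : ℝ) < (n : ℝ) + 1 := by positivity
  have hn1 : (1 : ℝ) ≤ (n : ℝ) + 1 := by linarith [(Nat.cast_nonneg n : (0:ℝ) ≤ n)]
  have e0 : (1 / (((n + 1 : ℕ) : ℝ) ^ 2 + 0 ^ 2)) = 1 / ((n : ℝ) + 1) ^ 2 := by push_cast; ring
  rw [e0, auxE]
  split_ifs with h
  · rw [norm_div, norm_mul, aux_norm_cast_cpow]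
    have a1 : ‖w - 2‖ ≤ |R| + 2 := by
      refine (norm_sub_le _ _).trans ?_
      simp; exact hR.trans (le_abs_self R)
    have a2 : ((n : ℝ) + 1) ^ (w - 4).re ≤ 1 / ((n : ℝ) + 1) ^ 2 := by
      have : 1 / ((n : ℝ) + 1) ^ 2 = ((n : ℝ) + 1) ^ (-2 : ℝ) := by
        rw [Real.rpow_neg hn.le]; norm_cast; simp
      rw [this]
      apply Real.rpow_le_rpow_of_exponent_le hn1
      simp; linarith
    have a3 : 0 ≤ C * (2 + x⁻¹ ^ 2) * (1 / ((n : ℝ) + 1) ^ 2) := by positivity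
    have a4 : ‖w - 2‖ * ((n : ℝ) + 1) ^ (w - 4).re ≤ (|R| + 2) * (1 / ((n : ℝ) + 1) ^ 2) := by
      gcongr
    rw [show ‖(2:ℂ)‖ = 2 by simp]
    linarith
  · have b1 : ‖((n : ℂ) + 1) ^ (w - 2)‖ ≤ 1 := by
      rw [aux_norm_cast_cpow]
      exact Real.rpow_le_one_of_one_le_of_nonpos hn1 (by simp; linarith)
    have b2 : ‖(x : ℂ) ^ (w - 2)‖ ≤ 1 + x⁻¹ ^ 2 := by
      rw [Complex.norm_cpow_eq_rpow_re_of_pos hx]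
      rcases le_total 1 x with h1 | h1
      · have := Real.rpow_le_one_of_one_le_of_nonpos h1 (z := (w-2).re) (by simp; linarith)
        have : 0 ≤ x⁻¹ ^ 2 := by positivity
        linarith
      · have := Real.rpow_le_rpow_of_exponent_ge hx h1 (y := (w-2).re) (z := -2) (by simp; linarith)
        rw [Real.rpow_neg hx.le] at this
        norm_cast at this
        rw [inv_pow]; linarith
    have b3 : ‖((n : ℂ) + 1) ^ (w - 2) - (x : ℂ) ^ (w - 2)‖ ≤ 2 + x⁻¹ ^ 2 :=
      (norm_sub_le _ _).trans (by linarith)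
    have b4 : ‖(((n : ℂ) + 1) ^ 2 - (x : ℂ) ^ 2)‖⁻¹ ≤ C * (1 / ((n : ℝ) + 1) ^ 2) := by
      have : (((n : ℂ) + 1) ^ 2 - (x : ℂ) ^ 2) = ((((n : ℝ) + 1) ^ 2 - x ^ 2 : ℝ) : ℂ) := by push_cast; ring
      rw [this, Complex.norm_real, Real.norm_eq_abs, ← abs_inv]
      have := hC n
      rw [abs_div, abs_of_pos (by positivity : 0 < ((n : ℝ) + 1) ^ 2), div_eq_mul_inv, ← abs_inv] at this
      rw [mul_one_div, le_div_iff₀ (by positivity)]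
      linarith
    rw [norm_div, div_eq_mul_inv]
    have b5 : ‖((n : ℂ) + 1) ^ (w - 2) - (x : ℂ) ^ (w - 2)‖ * ‖(((n : ℂ) + 1) ^ 2 - (x : ℂ) ^ 2)‖⁻¹
       ≤ (2 + x⁻¹ ^ 2) * (C * (1 / ((n : ℝ) + 1) ^ 2)) := by gcongr
    have b6 : 0 ≤ (|R| + 2) / 2 * (1 / ((n : ℝ) + 1) ^ 2) := by positivity
    linarith

lemma aux_D_eq (w : ℂ) {x : ℝ} (hx : 0 < x) (n : ℕ) :
    auxD w x ((n : ℝ) + 1) = ((n : ℂ) + 1) ^ (w - 2) + (x : ℂ) ^ 2 * auxE w x n := by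
  have hn := aux_cast_ne n
  have hxC : (x : ℂ) ≠ 0 := by exact_mod_cast hx.ne'
  have e1 : ((n : ℂ) + 1) ^ w = ((n : ℂ) + 1) ^ (w - 2) * ((n : ℂ) + 1) ^ 2 := by
    rw [← Complex.cpow_ofNat, ← Complex.cpow_add _ _ hn]; congr 1; simp
  have e2 : (x : ℂ) ^ w = (x : ℂ) ^ (w - 2) * (x : ℂ) ^ 2 := by
    rw [← Complex.cpow_ofNat, ← Complex.cpow_add _ _ hxC]; congr 1; simp
  have e3 : ((n : ℂ) + 1) ^ (w - 2) = ((n : ℂ) + 1) ^ (w - 4) * ((n : ℂ) + 1) ^ 2 := by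
    rw [← Complex.cpow_ofNat, ← Complex.cpow_add _ _ hn]; congr 1; norm_num; ring
  rw [auxD, auxE]
  push_cast
  split_ifs with h
  · rw [h, e3]; push_cast; ring
  · have hne : (((n : ℂ) + 1) ^ 2 - (x : ℂ) ^ 2) ≠ 0 := by
      have : ((n : ℝ) + 1) ^ 2 - x ^ 2 ≠ 0 := by
        rw [sub_ne_zero]; intro h'
        exact h ((pow_left_inj₀ (by positivity) hx.le two_ne_zero).1 h').symm
      exact_mod_cast this
    rw [e1, e2]
    field_simp
    ring

noncomputable def auxS (s : ℂ) (x : ℝ) (w : ℂ) : ℂ := ∑' n : ℕ, csigma (-s) (n + 1) * auxE w x n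

lemma aux_E_diff {x : ℝ} (hx : 0 < x) (n : ℕ) : Differentiable ℂ (fun w => auxE w x n) := by
  have hn := aux_cast_ne n
  have hxC : (x : ℂ) ≠ 0 := by exact_mod_cast hx.ne'
  intro w
  unfold auxE
  split_ifs with h
  · refine DifferentiableAt.div_const (DifferentiableAt.mul (by fun_prop) ?_) _
    exact DifferentiableAt.const_cpow (by fun_prop) (Or.inl hn)
  · refine DifferentiableAt.div_const (DifferentiableAt.sub ?_ ?_) _
    · exact DifferentiableAt.const_cpow (by fun_prop) (Or.inl hn)
    · exact DifferentiableAt.const_cpow (by fun_prop) (Or.inl hxC)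

lemma aux_S_term_summable {s : ℂ} (hs : -1 < s.re) {x : ℝ} (hx : 0 < x) {w : ℂ} (h0 : 0 < w.re) (h2 : w.re < 2) :
    Summable (fun n : ℕ => ‖csigma (-s) (n + 1) * auxE w x n‖) := by
  obtain ⟨C, hC0, hC⟩ := aux_E_bound hx ‖w‖
  refine Summable.of_nonneg_of_le (fun n => norm_nonneg _) (fun n => ?_) ((aux_H_summable_norm hs 0).mul_left C)
  rw [norm_mul]
  have := mul_le_mul_of_nonneg_left (hC w h0 h2 le_rfl n) (norm_nonneg (csigma (-s) (n + 1)))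
  linarith

lemma aux_S_diff {s : ℂ} (hs : -1 < s.re) {x : ℝ} (hx : 0 < x) {w₀ : ℂ} (h0 : 0 < w₀.re) (h2 : w₀.re < 2) :
    DifferentiableAt ℂ (auxS s x) w₀ := by
  obtain ⟨C, hC0, hC⟩ := aux_E_bound hx (‖w₀‖ + 1)
  have hopen : IsOpen ({w : ℂ | 0 < w.re ∧ w.re < 2} ∩ Metric.ball w₀ 1) := by
    refine IsOpen.inter (IsOpen.inter ?_ ?_) Metric.isOpen_ball
    · exact isOpen_lt continuous_const Complex.continuous_re
    · exact isOpen_lt Complex.continuous_re continuous_const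
  have hd := differentiableOn_tsum_of_summable_norm (F := fun (n : ℕ) w => csigma (-s) (n + 1) * auxE w x n)
    ((aux_H_summable_norm hs 0).mul_left C) (fun n => ((aux_E_diff hx n).const_mul _).differentiableOn) hopen
    (fun n w hw => by
      have hw1 : ‖w‖ ≤ ‖w₀‖ + 1 := by
        have h := hw.2
        rw [Metric.mem_ball, dist_eq_norm] at h
        have := norm_add_le (w - w₀) w₀
        rw [sub_add_cancel] at this
        linarith
      rw [norm_mul]
      have := mul_le_mul_of_nonneg_left (hC w hw.1.1 hw.1.2 hw1 n) (norm_nonneg (csigma (-s) (n + 1)))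
      linarith)
  exact hd.differentiableAt (hopen.mem_nhds ⟨⟨h0, h2⟩, by simp⟩)

lemma aux_hasSum_prod {f g : ℕ → ℂ} {a b : ℂ} (hf : HasSum f a) (hg : HasSum g b) :
    HasSum (fun p : ℕ × ℕ => f p.1 * g p.2) (a * b) := by
  have hf1 : Summable (fun n => ‖f n‖) := hf.summable.norm
  have hg1 : Summable (fun n => ‖g n‖) := hg.summable.norm
  exact hf.mul hg (summable_mul_of_summable_norm hf1 hg1)

lemma aux_zeta_pair {z₁ z₂ : ℂ} (h1 : 1 < z₁.re) (h2 : 1 < z₂.re) :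
    HasSum (fun p : ℕ × ℕ => ((p.1 : ℂ) + 1) ^ (-z₁) * ((p.2 : ℂ) + 1) ^ (-z₂))
    (riemannZeta z₁ * riemannZeta z₂) :=
  aux_hasSum_prod (f := fun n : ℕ => ((n : ℂ) + 1) ^ (-z₁)) (g := fun n : ℕ => ((n : ℂ) + 1) ^ (-z₂))
    (aux_zeta_sum h1) (aux_zeta_sum h2)

lemma aux_csigma_zeta1 {s z : ℂ} (h1 : 1 < z.re) (h2 : 1 < (s + z).re) :
    HasSum (fun n : ℕ => csigma (-s) (n + 1) * ((n : ℂ) + 1) ^ (-z))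
      (riemannZeta (s + z) * riemannZeta z) := by
  have a3 := aux_zeta_pair h2 h1
  have a4 := aux_csigma_hasSum s (fun n => (n : ℂ) ^ (-z)) (a := riemannZeta (s + z) * riemannZeta z) (by
    convert! a3 using 2 with p
    have hp := aux_cast_ne p.1
    push_cast
    rw [aux_pair_cpow, ← mul_assoc, ← Complex.cpow_add _ _ hp, neg_add])
  have heq2 : (fun n : ℕ => csigma (-s) (n + 1) * ((n : ℂ) + 1) ^ (-z)) =
    fun n : ℕ => csigma (-s) (n + 1) * (fun n : ℕ => (n : ℂ) ^ (-z)) (n + 1) := by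
    funext n; simp only; push_cast; rfl
  rw [heq2]; exact a4

lemma aux_csigma_zeta {s w : ℂ} (h1 : w.re < 1) (h2 : w.re < 1 + s.re) :
    HasSum (fun n : ℕ => csigma (-s) (n + 1) * ((n : ℂ) + 1) ^ (w - 2))
      (riemannZeta (2 - w) * riemannZeta (2 - w + s)) := by
  have h := aux_csigma_zeta1 (s := s) (z := 2 - w) (by simp; linarith) (by simp; linarith)
  rw [neg_sub, mul_comm (riemannZeta _), add_comm s] at h
  exact h

lemma aux_Q_norm_int {w : ℂ} (hw0 : 0 < w.re) (hw2 : w.re < 2) {x a : ℝ} (hx : 0 < x) (ha : 0 < a) :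
    ∫ t in Set.Ioi (0 : ℝ), ‖auxQ w x a t‖ =
      ‖(π / 2 / Complex.sin (π * (w.re : ℂ) / 2) : ℂ)‖ * ‖auxD (w.re : ℂ) x a‖ := by
  have h := aux_Q_int (w := (w.re : ℂ)) (by simpa using hw0) (by simpa using hw2) hx ha
  have h2 : ∫ t in Set.Ioi (0 : ℝ), auxQ (w.re : ℂ) x a t =
      ((∫ t in Set.Ioi (0 : ℝ), ‖auxQ w x a t‖ : ℝ) : ℂ) := by
    rw [← integral_complex_ofReal]
    refine setIntegral_congr_fun measurableSet_Ioi fun t ht => ?_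
    have ht : 0 < t := ht
    rw [aux_Q_norm ht, auxQ]
    push_cast
    rw [Complex.ofReal_cpow ht.le]
    push_cast
    rfl
  rw [h2] at h
  have h3 := congrArg norm h
  rw [Complex.norm_real, norm_mul, Real.norm_of_nonneg (integral_nonneg fun t => norm_nonneg _)] at h3
  exact h3

noncomputable def auxM (s : ℂ) (x : ℝ) (w : ℂ) : ℂ :=
  ∫ t in Set.Ioi (0 : ℝ), (t : ℂ) ^ w * (auxPsi s t / ((x : ℂ) ^ 2 + (t : ℂ) ^ 2))

lemma aux_D_summable {s : ℂ} (hs : -1 < s.re) {x : ℝ} (hx : 0 < x) {w : ℂ} (h0 : 0 < w.re)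
    (h1 : w.re < 1) (h2 : w.re < 1 + s.re) :
    HasSum (fun n : ℕ => csigma (-s) (n + 1) * auxD w x ((n : ℝ) + 1))
      (riemannZeta (2 - w) * riemannZeta (2 - w + s) + (x : ℂ) ^ 2 * auxS s x w) := by
  have a1 := aux_csigma_zeta h1 h2
  have a2 := ((aux_S_term_summable hs hx h0 (by linarith)).of_norm.hasSum).mul_left ((x : ℂ) ^ 2)
  refine (a1.add a2).congr_fun fun n => ?_
  rw [aux_D_eq w hx]; ring

lemma aux_swap {s : ℂ} (hs : -1 < s.re) {x : ℝ} (hx : 0 < x) {w : ℂ} (h0 : 0 < w.re)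
    (h1 : w.re < 1) (h2 : w.re < 1 + s.re) :
    ∫ t in Set.Ioi (0 : ℝ), (t : ℂ) ^ (w + 1) * auxH s t / ((x : ℂ) ^ 2 + (t : ℂ) ^ 2) =
      π / 2 / Complex.sin (π * w / 2) *
      (riemannZeta (2 - w) * riemannZeta (2 - w + s) + (x : ℂ) ^ 2 * auxS s x w) := by
  set F : ℕ → ℝ → ℂ := fun n t => csigma (-s) (n + 1) * auxQ w x ((n : ℝ) + 1) t with hF
  have hF_int : ∀ n, Integrable (F n) (volume.restrict (Set.Ioi 0)) := fun n =>
    (aux_Q_integrable h0 (by linarith) hx (by positivity)).const_mul _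
  have hF_sum : Summable fun n => ∫ t in Set.Ioi (0 : ℝ), ‖F n t‖ := by
    have h := (aux_D_summable hs hx (w := (w.re : ℂ)) (by simpa using h0) (by simpa using h1)
      (by simpa using h2)).summable.norm.mul_left ‖(π / 2 / Complex.sin (π * (w.re : ℂ) / 2) : ℂ)‖
    refine h.congr fun n => ?_
    simp only [hF, norm_mul]
    rw [integral_const_mul, aux_Q_norm_int h0 (by linarith) hx (by positivity)]
    ring
  have key := hasSum_integral_of_summable_integral_norm hF_int hF_sum
  have hsumF : ∀ t : ℝ, 0 < t → ∑' n, F n t = (t : ℂ) ^ (w + 1) * auxH s t / ((x : ℂ) ^ 2 + (t : ℂ) ^ 2) := by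
    intro t ht
    have hxt := aux_sq_add_ne (t := t) hx
    rw [auxH, mul_div_right_comm, ← tsum_mul_left]
    refine tsum_congr fun n => ?_
    simp only [hF, auxQ]
    push_cast
    have : ((n : ℂ) + 1) ^ 2 + (t : ℂ) ^ 2 ≠ 0 := by
      have := aux_sq_add_ne (a := (n : ℝ) + 1) (t := t) (by positivity)
      push_cast at this; exact this
    field_simp
  · rw [← setIntegral_congr_fun measurableSet_Ioi (fun t ht => hsumF t ht)]
    refine key.unique ?_
    have h := (aux_D_summable hs hx h0 h1 h2).mul_left (π / 2 / Complex.sin (π * w / 2) : ℂ)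
    refine h.congr_fun fun n => ?_
    simp only [hF]
    rw [integral_const_mul, aux_Q_int h0 (by linarith) hx (by positivity)]
    ring

lemma aux_pair_bound2 {t : ℝ} (ht : 1 ≤ t) (s : ℂ) (d m : ℕ) :
    ‖((d : ℂ) + 1) ^ (-s) * auxg s t ((d + 1) * (m + 1))‖ ≤ (auxBC ‖s‖ 1 *
      ((((d : ℝ) + 1) ^ (2 * ‖s‖) * Real.exp (-(auxc / 4) * Real.sqrt ((d : ℝ) + 1))) *
      (((m : ℝ) + 1) ^ (2 * ‖s‖) * Real.exp (-(auxc / 4) * Real.sqrt ((m : ℝ) + 1))))) *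
      Real.exp (-(auxc / 2) * Real.sqrt t) := by
  have hd : (1 : ℝ) ≤ (d : ℝ) + 1 := by linarith [(Nat.cast_nonneg d : (0:ℝ) ≤ d)]
  have hm : (1 : ℝ) ≤ (m : ℝ) + 1 := by linarith [(Nat.cast_nonneg m : (0:ℝ) ≤ m)]
  have hre := abs_le.1 (Complex.abs_re_le_norm s)
  have hR : 0 ≤ ‖s‖ := norm_nonneg _
  have hdm := one_le_mul_of_one_le_of_one_le hd hm
  unfold auxg
  push_cast
  rw [aux_pair_cpow, norm_mul, norm_mul, norm_mul, aux_norm_cast_cpow, aux_norm_cast_cpow, aux_norm_cast_cpow]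
  have hB := aux_B_norm (s := s) le_rfl one_pos (r := ((d : ℝ) + 1) * ((m : ℝ) + 1) * t)
    (one_le_mul_of_one_le_of_one_le hdm ht)
  have he : Real.exp (-auxc * Real.sqrt (((d : ℝ) + 1) * ((m : ℝ) + 1) * t)) ≤
      Real.exp (-(auxc / 4) * Real.sqrt ((d : ℝ) + 1)) *
      Real.exp (-(auxc / 4) * Real.sqrt ((m : ℝ) + 1)) * Real.exp (-(auxc / 2) * Real.sqrt t) := by
    rw [← Real.exp_add, ← Real.exp_add, Real.exp_le_exp]
    have h1 := aux_sqrt_mul_ge hd hm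
    have h2 := aux_sqrt_mul_ge hdm ht
    have h3 := aux_c_pos
    nlinarith
  have p1 : ((d : ℝ) + 1) ^ (-s).re * ((d : ℝ) + 1) ^ (s / 2).re ≤ ((d : ℝ) + 1) ^ (2 * ‖s‖) := by
    rw [← Real.rpow_add (by positivity)]
    refine Real.rpow_le_rpow_of_exponent_le hd ?_
    simp; linarith
  have p2 : ((m : ℝ) + 1) ^ (s / 2).re ≤ ((m : ℝ) + 1) ^ (2 * ‖s‖) := by
    refine Real.rpow_le_rpow_of_exponent_le hm ?_
    simp; linarith
  calc _ = (((d : ℝ) + 1) ^ (-s).re * ((d : ℝ) + 1) ^ (s / 2).re) * ((m : ℝ) + 1) ^ (s / 2).re *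
        ‖auxB s (((d : ℝ) + 1) * ((m : ℝ) + 1) * t)‖ := by ring
    _ ≤ ((d : ℝ) + 1) ^ (2 * ‖s‖) * ((m : ℝ) + 1) ^ (2 * ‖s‖) * (auxBC ‖s‖ 1 *
      (Real.exp (-(auxc / 4) * Real.sqrt ((d : ℝ) + 1)) *
      Real.exp (-(auxc / 4) * Real.sqrt ((m : ℝ) + 1)) * Real.exp (-(auxc / 2) * Real.sqrt t))) := by
        refine mul_le_mul (mul_le_mul p1 p2 (by positivity) (by positivity)) (hB.trans ?_) (norm_nonneg _) (by positivity)
        exact mul_le_mul_of_nonneg_left he (aux_BC_nonneg _ _)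
    _ = _ := by ring

lemma aux_phiK_decay (s : ℂ) : ∃ C : ℝ, 0 ≤ C ∧ ∀ t : ℝ, 1 ≤ t →
    ‖phiK t s‖ ≤ C * Real.exp (-(auxc / 2) * Real.sqrt t) := by
  have h := aux_summ_exp (2 * ‖s‖) (c := auxc / 4) (by have := aux_c_pos; positivity)
  have hs := (h.mul_of_nonneg h (fun n => by positivity) (fun n => by positivity)).mul_left (auxBC ‖s‖ 1)
  have hnn := aux_BC_nonneg ‖s‖ 1
  refine ⟨2 * ∑' p : ℕ × ℕ, (auxBC ‖s‖ 1 *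
      ((((p.1 : ℝ) + 1) ^ (2 * ‖s‖) * Real.exp (-(auxc / 4) * Real.sqrt ((p.1 : ℝ) + 1))) *
      (((p.2 : ℝ) + 1) ^ (2 * ‖s‖) * Real.exp (-(auxc / 4) * Real.sqrt ((p.2 : ℝ) + 1))))), ?_, fun t ht => ?_⟩
  rotate_left
  · rw [aux_phiK_pair (by linarith), norm_mul]
    have h2 := hs.mul_right (Real.exp (-(auxc / 2) * Real.sqrt t))
    have := tsum_of_norm_bounded h2.hasSum (fun p : ℕ × ℕ => aux_pair_bound2 ht s p.1 p.2)
    rw [tsum_mul_right] at this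
    rw [show ‖(2:ℂ)‖ = 2 by simp, mul_assoc]
    exact mul_le_mul_of_nonneg_left this (by norm_num)
  · exact mul_nonneg (by norm_num) (tsum_nonneg fun p => by positivity)

lemma aux_Psi_top {s : ℂ} (hs : -1 < s.re) : ∃ C : ℝ, ∃ T : ℝ, 1 ≤ T ∧ ∀ t : ℝ, T ≤ t →
    ‖auxPsi s t‖ ≤ C * t⁻¹ := by
  obtain ⟨C, hC0, hC⟩ := aux_phiK_decay s
  have h1 := tendsto_rpow_mul_exp_neg_mul_atTop_nhds_zero 3 (auxc / 2) (by have := aux_c_pos; positivity)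
  have h2 := h1.comp Real.tendsto_sqrt_atTop
  have h3 := (h2.eventually (gt_mem_nhds one_pos)).and (Filter.eventually_ge_atTop 1)
  obtain ⟨T, hT⟩ := Filter.eventually_atTop.1 h3
  refine ⟨C + ‖riemannZeta s / (2 * (π : ℂ))‖, max T 1, le_max_right _ _, fun t ht => ?_⟩
  obtain ⟨h4, h5⟩ := hT t ((le_max_left _ _).trans ht)
  have ht0 : 0 < t := by linarith
  have htC : (t : ℂ) ≠ 0 := by exact_mod_cast ht0.ne'
  have e : auxPsi s t = (t : ℂ) ^ (-s / 2) * phiK t s - (riemannZeta s / (2 * (π : ℂ))) * (t : ℂ)⁻¹ := by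
    have : (t : ℂ)⁻¹ = (t : ℂ) ^ (-s / 2) * (t : ℂ) ^ (s / 2 - 1) := by
      rw [← Complex.cpow_add _ _ htC, ← Complex.cpow_neg_one]; congr 1; ring
    rw [this, auxPsi]; ring
  have f1 : ‖(t : ℂ) ^ (-s / 2) * phiK t s‖ ≤ C * t⁻¹ := by
    rw [norm_mul, Complex.norm_cpow_eq_rpow_re_of_pos ht0]
    have g1 : t ^ (-s / 2).re ≤ t ^ (1/2 : ℝ) := by
      refine Real.rpow_le_rpow_of_exponent_le h5 ?_
      simp; linarith
    have g2 : t ^ (1/2 : ℝ) * Real.exp (-(auxc / 2) * Real.sqrt t) ≤ t⁻¹ := by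
      simp only [Function.comp] at h4
      have : Real.sqrt t ^ (3 : ℝ) = t * t ^ (1/2 : ℝ) := by
        rw [Real.sqrt_eq_rpow, ← Real.rpow_mul ht0.le]
        nth_rewrite 2 [← Real.rpow_one t]
        rw [← Real.rpow_add ht0]; norm_num
      rw [this] at h4
      rw [← one_div, le_div_iff₀ ht0]
      linarith
    calc _ ≤ t ^ (1/2 : ℝ) * (C * Real.exp (-(auxc / 2) * Real.sqrt t)) :=
          mul_le_mul g1 (hC t h5) (norm_nonneg _) (by positivity)
      _ = C * (t ^ (1/2 : ℝ) * Real.exp (-(auxc / 2) * Real.sqrt t)) := by ring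
      _ ≤ _ := mul_le_mul_of_nonneg_left g2 hC0
  rw [e, add_mul]
  refine (norm_sub_le _ _).trans (add_le_add f1 ?_)
  rw [norm_mul, norm_inv, Complex.norm_real, Real.norm_of_nonneg ht0.le]

lemma aux_H_term_le (s : ℂ) (n : ℕ) (t : ℝ) :
    ‖csigma (-s) (n + 1) * (1 / ((((n + 1 : ℕ) : ℂ)) ^ 2 + (t : ℂ) ^ 2))‖ ≤
      ‖csigma (-s) (n + 1)‖ * (1 / (((n + 1 : ℕ) : ℝ) ^ 2 + 0 ^ 2)) := by
  rw [norm_mul]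
  refine mul_le_mul_of_nonneg_left ?_ (norm_nonneg _)
  have : (1 / ((((n + 1 : ℕ) : ℂ)) ^ 2 + (t : ℂ) ^ 2)) = ((1 / (((n + 1 : ℕ) : ℝ) ^ 2 + t ^ 2) : ℝ) : ℂ) := by
    push_cast; ring
  rw [this, Complex.norm_real, Real.norm_of_nonneg (by positivity)]
  have h : (0:ℝ) < ((n + 1 : ℕ) : ℝ) := by positivity
  rw [one_div_le_one_div (by positivity) (by positivity)]
  nlinarith [sq_nonneg t]

lemma aux_H_cont {s : ℂ} (hs : -1 < s.re) : Continuous (auxH s) := by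
  refine continuous_tsum (fun n => ?_) (aux_H_summable_norm hs 0) (fun n t => aux_H_term_le s n t)
  refine continuous_const.mul (continuous_const.div ?_ ?_)
  · fun_prop
  · intro t
    have := aux_sq_add_ne (a := ((n + 1 : ℕ) : ℝ)) (t := t) (by positivity)
    push_cast at this ⊢; exact this

lemma aux_H_le {s : ℂ} (hs : -1 < s.re) (t : ℝ) :
    ‖auxH s t‖ ≤ ∑' n : ℕ, ‖csigma (-s) (n + 1)‖ * (1 / (((n + 1 : ℕ) : ℝ) ^ 2 + 0 ^ 2)) :=
  tsum_of_norm_bounded (aux_H_summable_norm hs 0).hasSum (fun n => aux_H_term_le s n t)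

lemma aux_Psi_cont {s : ℂ} (hs : -1 < s.re) (hs0 : s ≠ 0) (hs3 : s.re < 1) :
    ContinuousOn (auxPsi s) (Set.Ioi 0) := by
  have h : ContinuousOn (fun t : ℝ => -(riemannZeta (1 - s) / (2 * Complex.cos ((π : ℂ) * s / 2))) * (t : ℂ) ^ (-s)
      - riemannZeta (1 + s) / 2 + (t / π) * auxH s t) (Set.Ioi 0) := by
    have hH := aux_H_cont hs
    have hp : ContinuousOn (fun t : ℝ => (t : ℂ) ^ (-s)) (Set.Ioi 0) := by
      intro t ht
      have ht : 0 < t := ht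
      exact (Complex.continuousAt_ofReal_cpow_const t (-s) (Or.inr ht.ne')).continuousWithinAt
    fun_prop
  exact h.congr fun t ht => aux_Psi_eq hs hs0 hs3 ht

lemma aux_Psi_zero {s : ℂ} (hs : -1 < s.re) (hs0 : s ≠ 0) (hs3 : s.re < 1) :
    ∃ C : ℝ, ∀ t : ℝ, 0 < t → t ≤ 1 → ‖auxPsi s t‖ ≤ C * t⁻¹ := by
  refine ⟨‖riemannZeta (1 - s) / (2 * Complex.cos ((π : ℂ) * s / 2))‖ + ‖riemannZeta (1 + s) / 2‖ +
    ∑' n : ℕ, ‖csigma (-s) (n + 1)‖ * (1 / (((n + 1 : ℕ) : ℝ) ^ 2 + 0 ^ 2)), fun t ht ht1 => ?_⟩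
  have hinv : 1 ≤ t⁻¹ := (one_le_inv₀ ht).2 ht1
  rw [aux_Psi_eq hs hs0 hs3 ht, add_mul, add_mul]
  refine (norm_add_le _ _).trans (add_le_add ((norm_sub_le _ _).trans (add_le_add ?_ ?_)) ?_)
  · rw [norm_mul, norm_neg, Complex.norm_cpow_eq_rpow_re_of_pos ht]
    refine mul_le_mul_of_nonneg_left ?_ (norm_nonneg _)
    rw [← Real.rpow_neg_one]
    exact Real.rpow_le_rpow_of_exponent_ge ht ht1 (by simp; linarith)
  · exact le_mul_of_one_le_right (norm_nonneg _) hinv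
  · have h := aux_H_le hs t
    have h0 := (norm_nonneg _).trans h
    have e : ‖(t : ℂ) / π‖ ≤ 1 := by
      rw [norm_div, Complex.norm_real, Complex.norm_real, Real.norm_of_nonneg ht.le,
        Real.norm_of_nonneg Real.pi_pos.le, div_le_one Real.pi_pos]
      linarith [Real.pi_gt_three]
    rw [norm_mul]
    calc _ ≤ 1 * _ := mul_le_mul e h (norm_nonneg _) (by norm_num)
      _ ≤ _ := by rw [one_mul]; exact le_mul_of_one_le_right h0 hinv

lemma aux_norm_sq_add (x t : ℝ) : ‖(x : ℂ) ^ 2 + (t : ℂ) ^ 2‖ = x ^ 2 + t ^ 2 := by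
  have : (x : ℂ) ^ 2 + (t : ℂ) ^ 2 = ((x ^ 2 + t ^ 2 : ℝ) : ℂ) := by push_cast; ring
  rw [this, Complex.norm_real, Real.norm_of_nonneg (by positivity)]

lemma aux_M_mellin {s : ℂ} (hs : -1 < s.re) (hs0 : s ≠ 0) (hs3 : s.re < 1) {x : ℝ} (hx : 0 < x) {w : ℂ}
    (h0 : 0 < w.re) (h2 : w.re < 2) :
    IntegrableOn (fun t : ℝ => (t : ℂ) ^ w * (auxPsi s t / ((x : ℂ) ^ 2 + (t : ℂ) ^ 2))) (Set.Ioi 0) ∧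
    DifferentiableAt ℂ (auxM s x) w := by
  set f : ℝ → ℂ := fun t => auxPsi s t / ((x : ℂ) ^ 2 + (t : ℂ) ^ 2) with hf
  have hcont : ContinuousOn f (Set.Ioi 0) := by
    refine (aux_Psi_cont hs hs0 hs3).div (by fun_prop) (fun t _ => aux_sq_add_ne hx)
  have hloc : LocallyIntegrableOn f (Set.Ioi 0) := hcont.locallyIntegrableOn measurableSet_Ioi
  have htop : f =O[Filter.atTop] (fun t : ℝ => t ^ (-(3:ℝ))) := by
    obtain ⟨C, T, hT, hC⟩ := aux_Psi_top hs
    refine Asymptotics.IsBigO.of_bound C ?_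
    filter_upwards [Filter.eventually_ge_atTop T] with t ht
    have ht0 : 0 < t := by linarith
    rw [hf, norm_div, aux_norm_sq_add, Real.norm_of_nonneg (by positivity), Real.rpow_neg ht0.le]
    have := hC t ht
    have hC0 : 0 ≤ C * t⁻¹ := (norm_nonneg _).trans this
    calc _ ≤ (C * t⁻¹) / t ^ 2 := by
          refine div_le_div₀ hC0 this (by positivity) ?_
          nlinarith [sq_nonneg x]
      _ = _ := by
          norm_cast; field_simp
  have hbot : f =O[nhdsWithin 0 (Set.Ioi 0)] (fun t : ℝ => t ^ (-(1:ℝ))) := by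
    obtain ⟨C, hC⟩ := aux_Psi_zero hs hs0 hs3
    refine Asymptotics.IsBigO.of_bound (C / x ^ 2) ?_
    filter_upwards [Ioc_mem_nhdsGT one_pos] with t ht
    rw [hf, norm_div, aux_norm_sq_add, Real.rpow_neg_one, Real.norm_of_nonneg (inv_nonneg.2 ht.1.le)]
    have := hC t ht.1 ht.2
    have hC0 : 0 ≤ C * t⁻¹ := (norm_nonneg _).trans this
    calc _ ≤ (C * t⁻¹) / x ^ 2 := by
          refine div_le_div₀ hC0 this (by positivity) ?_
          nlinarith [sq_nonneg t]
      _ = _ := by ring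
  have c := mellinConvergent_of_isBigO_rpow (s := w + 1) hloc htop (by simp; linarith) hbot (by simp; linarith)
  have d := mellin_differentiableAt_of_isBigO_rpow (s := w + 1) hloc htop (by simp; linarith) hbot (by simp; linarith)
  constructor
  · have c' := c
    unfold MellinConvergent at c'
    simpa using c'
  · have : auxM s x = fun z => mellin f (z + 1) := by
      funext z
      simp [auxM, mellin, hf]
    rw [this]
    exact DifferentiableAt.comp (f := fun z : ℂ => z + 1) w d (by fun_prop)

noncomputable def auxRHS (s : ℂ) (x : ℝ) (w : ℂ) : ℂ :=
  -(riemannZeta (1 - s) / (2 * Complex.cos ((π : ℂ) * s / 2))) *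
      (π / 2 * (x : ℂ) ^ (w - s - 1) / Complex.cos (π * (w - s) / 2))
    - riemannZeta (1 + s) / 2 * (π / 2 * (x : ℂ) ^ (w - 1) / Complex.cos (π * w / 2))
    + 1 / 2 / Complex.sin (π * w / 2) *
      (riemannZeta (2 - w) * riemannZeta (2 - w + s) + (x : ℂ) ^ 2 * auxS s x w)

lemma aux_M_eq {s : ℂ} (hs : -1 < s.re) (hs0 : s ≠ 0) (hs3 : s.re < 1) {x : ℝ} (hx : 0 < x) {w : ℂ}
    (h0 : 0 < w.re) (h1 : w.re < 1) (h2 : w.re < 1 + s.re) : auxM s x w = auxRHS s x w := by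
  have hpiC : (π : ℂ) ≠ 0 := by exact_mod_cast Real.pi_ne_zero
  obtain ⟨iM, -⟩ := aux_M_mellin hs hs0 hs3 hx h0 (by linarith)
  obtain ⟨iA, vA⟩ := aux_int_scaled (w := w - s) (by simp; linarith) (by simp; linarith) hx
  obtain ⟨iB, vB⟩ := aux_int_scaled (w := w) (by linarith) (by linarith) hx
  have vH := aux_swap hs hx h0 h1 h2
  set cA := riemannZeta (1 - s) / (2 * Complex.cos ((π : ℂ) * s / 2)) with hcA
  set cB := riemannZeta (1 + s) / 2 with hcB
  have hcongr : ∀ t ∈ Set.Ioi (0 : ℝ), (t : ℂ) ^ (w + 1) * auxH s t / ((x : ℂ) ^ 2 + (t : ℂ) ^ 2) =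
      π * ((t : ℂ) ^ w * (auxPsi s t / ((x : ℂ) ^ 2 + (t : ℂ) ^ 2)) +
        (cA * ((t : ℂ) ^ (w - s) / ((x : ℂ) ^ 2 + (t : ℂ) ^ 2)) +
        cB * ((t : ℂ) ^ w / ((x : ℂ) ^ 2 + (t : ℂ) ^ 2)))) := by
    intro t ht
    have ht : 0 < t := ht
    have htC : (t : ℂ) ≠ 0 := by exact_mod_cast ht.ne'
    have hd := aux_sq_add_ne (t := t) hx
    rw [aux_Psi_eq hs hs0 hs3 ht, ← hcA, ← hcB, Complex.cpow_add _ _ htC, Complex.cpow_one, Complex.cpow_sub _ _ htC,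
      Complex.cpow_neg]
    have hts : (t : ℂ) ^ s ≠ 0 := by simp [Complex.cpow_eq_zero_iff, htC]
    field_simp
    ring
  have iAB : Integrable (fun t : ℝ => cA * ((t : ℂ) ^ (w - s) / ((x : ℂ) ^ 2 + (t : ℂ) ^ 2)) +
        cB * ((t : ℂ) ^ w / ((x : ℂ) ^ 2 + (t : ℂ) ^ 2))) (volume.restrict (Set.Ioi 0)) :=
    (iA.const_mul cA).add (iB.const_mul cB)
  rw [setIntegral_congr_fun measurableSet_Ioi hcongr, integral_const_mul,
    integral_add iM iAB, integral_add (iA.const_mul cA) (iB.const_mul cB),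
    integral_const_mul, integral_const_mul, vA, vB] at vH
  have e : auxM s x w = ∫ t in Set.Ioi (0 : ℝ), (t : ℂ) ^ w * (auxPsi s t / ((x : ℂ) ^ 2 + (t : ℂ) ^ 2)) := rfl
  rw [← e] at vH
  rw [auxRHS, ← hcA, ← hcB]
  apply mul_left_cancel₀ hpiC
  linear_combination vH

lemma aux_cos_ne2 {z : ℂ} (h1 : -1 < z.re) (h2 : z.re < 3) (h : z ≠ 1) : Complex.cos ((π : ℂ) * z / 2) ≠ 0 := by
  have hpiC : (π : ℂ) ≠ 0 := by exact_mod_cast Real.pi_ne_zero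
  rw [Complex.cos_ne_zero_iff]
  intro k hk
  have : z = ((2 * k + 1 : ℤ) : ℂ) := by
    push_cast
    field_simp at hk
    exact hk
  rw [this, Complex.intCast_re] at h1 h2
  have h1' : (-1 : ℤ) < 2 * k + 1 := by exact_mod_cast h1
  have h2' : 2 * k + 1 < (3 : ℤ) := by exact_mod_cast h2
  have hk0 : k = 0 := by omega
  apply h; rw [this, hk0]; simp

lemma aux_sin_ne2 {z : ℂ} (h1 : -2 < z.re) (h2 : z.re < 2) (h : z ≠ 0) : Complex.sin ((π : ℂ) * z / 2) ≠ 0 := by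
  have := aux_cos_ne2 (z := z + 1) (by simp; linarith) (by simp; linarith) (by simpa using h)
  rw [show (π : ℂ) * (z + 1) / 2 = (π : ℂ) * z / 2 + π / 2 by ring, Complex.cos_add_pi_div_two] at this
  simpa using this

lemma aux_RHS_diff {s : ℂ} (hs : -1 < s.re) (hs3 : s.re < 1) {x : ℝ} (hx : 0 < x) {w : ℂ}
    (h0 : 0 < w.re) (h2 : w.re < 2) (hw1 : w ≠ 1) (hw2 : w ≠ 1 + s) : DifferentiableAt ℂ (auxRHS s x) w := by
  have hxC : (x : ℂ) ≠ 0 := by exact_mod_cast hx.ne'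
  have c1 := aux_cos_ne2 (z := w - s) (by simp; linarith) (by simp; linarith)
    (fun h => hw2 (by rw [← h]; ring))
  have c2 := aux_cos_ne2 (z := w) (by linarith) (by linarith) hw1
  have c3 := aux_sin_ne2 (z := w) (by linarith) (by linarith) (fun h => by simp [h] at h0)
  have p1 : DifferentiableAt ℂ (fun w => (x : ℂ) ^ (w - s - 1)) w :=
    DifferentiableAt.const_cpow (by fun_prop) (Or.inl hxC)
  have p2 : DifferentiableAt ℂ (fun w => (x : ℂ) ^ (w - 1)) w :=
    DifferentiableAt.const_cpow (by fun_prop) (Or.inl hxC)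
  have z1 : DifferentiableAt ℂ (fun w => riemannZeta (2 - w)) w := by
    refine DifferentiableAt.comp (f := fun w : ℂ => 2 - w) w (differentiableAt_riemannZeta ?_) (by fun_prop)
    intro h; apply hw1; linear_combination -h
  have z2 : DifferentiableAt ℂ (fun w => riemannZeta (2 - w + s)) w := by
    refine DifferentiableAt.comp (f := fun w : ℂ => 2 - w + s) w (differentiableAt_riemannZeta ?_) (by fun_prop)
    intro h; apply hw2; linear_combination -h
  have hS := aux_S_diff hs hx h0 h2
  have d1 : DifferentiableAt ℂ (fun w : ℂ => Complex.cos (π * (w - s) / 2)) w := by fun_prop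
  have d2 : DifferentiableAt ℂ (fun w : ℂ => Complex.cos (π * w / 2)) w := by fun_prop
  have d3 : DifferentiableAt ℂ (fun w : ℂ => Complex.sin (π * w / 2)) w := by fun_prop
  unfold auxRHS
  exact (((((p1.const_mul _).div d1 c1).const_mul _).sub (((p2.const_mul _).div d2 c2).const_mul _))).add
    (((differentiableAt_const _).div d3 c3).mul ((z1.mul z2).add (hS.const_mul _)))

lemma aux_M_eq_RHS {s : ℂ} (hs : -1 < s.re) (hs0 : s ≠ 0) (hs3 : s.re < 1) {x : ℝ} (hx : 0 < x) {w : ℂ}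
    (h0 : 0 < w.re) (h2 : w.re < 2) (hw1 : w ≠ 1) (hw2 : w ≠ 1 + s) : auxM s x w = auxRHS s x w := by
  set U : Set ℂ := {z : ℂ | 0 < z.re ∧ z.re < 2} \ {1, 1 + s} with hU
  have hfin : ({1, 1 + s} : Set ℂ).Finite := Set.toFinite _
  have hpre : IsPreconnected U := aux_strip_preconnected (by norm_num) hfin.countable
  have hopen : IsOpen U := by
    refine IsOpen.sdiff ?_ hfin.isClosed
    exact (isOpen_lt continuous_const Complex.continuous_re).inter
      (isOpen_lt Complex.continuous_re continuous_const)
  have hM : AnalyticOnNhd ℂ (auxM s x) U := by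
    refine DifferentiableOn.analyticOnNhd (fun z hz => ?_) hopen
    exact (aux_M_mellin hs hs0 hs3 hx hz.1.1 hz.1.2).2.differentiableWithinAt
  have hR : AnalyticOnNhd ℂ (auxRHS s x) U := by
    refine DifferentiableOn.analyticOnNhd (fun z hz => ?_) hopen
    have hz2 := hz.2
    simp only [Set.mem_insert_iff, Set.mem_singleton_iff, not_or] at hz2
    exact (aux_RHS_diff hs hs3 hx hz.1.1 hz.1.2 hz2.1 hz2.2).differentiableWithinAt
  set V : Set ℂ := {z : ℂ | 0 < z.re} ∩ ({z : ℂ | z.re < 1} ∩ {z : ℂ | z.re < 1 + s.re}) with hV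
  have hVo : IsOpen V := (isOpen_lt continuous_const Complex.continuous_re).inter
    ((isOpen_lt Complex.continuous_re continuous_const).inter (isOpen_lt Complex.continuous_re continuous_const))
  obtain ⟨r, hr0, hr1⟩ := exists_between (show (0:ℝ) < min 1 (1 + s.re) from lt_min one_pos (by linarith))
  have hrV : (r : ℂ) ∈ V := ⟨by simpa using hr0, by simpa using hr1.trans_le (min_le_left _ _),
    by simpa using hr1.trans_le (min_le_right _ _)⟩
  have hVU : (r : ℂ) ∈ U := by
    have a1 : r < 1 := hr1.trans_le (min_le_left _ _)
    have a2 : r < 1 + s.re := hr1.trans_le (min_le_right _ _)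
    refine ⟨⟨by simpa using hr0, by simp; linarith⟩, ?_⟩
    simp only [Set.mem_insert_iff, Set.mem_singleton_iff, not_or]
    refine ⟨fun h => ?_, fun h => ?_⟩
    · have := congrArg Complex.re h; simp at this; linarith
    · have := congrArg Complex.re h; simp at this; linarith
  have hev : auxM s x =ᶠ[nhds (r : ℂ)] auxRHS s x := by
    filter_upwards [hVo.mem_nhds hrV] with z hz
    exact aux_M_eq hs hs0 hs3 hx hz.1 hz.2.1 hz.2.2
  exact hM.eqOn_of_preconnected_of_eventuallyEq hR hpre hVU hev ⟨⟨h0, h2⟩, by simp [hw1, hw2]⟩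

lemma aux_sinc : ∃ S : ℂ → ℂ, S 0 = 1 ∧ HasDerivAt S 0 0 ∧ ∀ z, Complex.sin z = z * S z := by
  refine ⟨dslope Complex.sin 0, ?_, ?_, ?_⟩
  · rw [dslope_same]; simp
  · have hd : DifferentiableAt ℂ (dslope Complex.sin 0) 0 := by
      have := (Complex.differentiableOn_dslope (s := Set.univ) (c := (0:ℂ)) Filter.univ_mem).2
        Complex.differentiable_sin.differentiableOn
      exact this.differentiableAt Filter.univ_mem
    have h1 := hd.hasDerivAt
    have heven : (fun z : ℂ => dslope Complex.sin 0 (-z)) = dslope Complex.sin 0 := by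
      funext z
      by_cases hz : z = 0
      · simp [hz]
      · rw [dslope_of_ne _ hz, dslope_of_ne _ (neg_ne_zero.2 hz)]
        simp [slope_def_field, Complex.sin_neg, neg_div_neg_eq]
    have h2 : HasDerivAt (fun z : ℂ => dslope Complex.sin 0 (-z)) (-(deriv (dslope Complex.sin 0) 0)) 0 := by
      have h1' : HasDerivAt (dslope Complex.sin 0) (deriv (dslope Complex.sin 0) 0) (-0) := by simpa using h1
      exact (HasDerivAt.comp (0:ℂ) h1' (hasDerivAt_neg (0:ℂ))).congr_deriv (by ring)
    rw [heven] at h2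
    have h3 := h1.unique h2
    have h4 : deriv (dslope Complex.sin 0) 0 = 0 := by linear_combination h3 / 2
    rw [h4] at h1; exact h1
  · intro z
    have := sub_smul_dslope Complex.sin 0 z
    simp at this
    exact this.symm

lemma aux_limit {s : ℂ} (hs : -1 < s.re) (hs0 : s ≠ 0) (hs3 : s.re < 1) {x : ℝ} (hx : 0 < x) :
    Filter.Tendsto (fun h : ℂ => auxRHS s x (1 + s - h)) (nhdsWithin 0 {0}ᶜ)
      (nhds (riemannZeta (1 - s) / (2 * Complex.cos ((π : ℂ) * s / 2)) *
          ((Real.eulerMascheroniConstant : ℂ) + (Real.log x : ℂ))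
        + (deriv riemannZeta (1 - s) / (2 * Complex.cos ((π : ℂ) * s / 2)) -
          riemannZeta (1 - s) / (2 * Complex.cos ((π : ℂ) * s / 2)) * (π / 2) * Complex.tan ((π : ℂ) * s / 2))
        + riemannZeta (1 + s) * π * (x : ℂ) ^ s / (4 * Complex.sin ((π : ℂ) * s / 2))
        + (x : ℂ) ^ 2 * auxS s x (1 + s) / (2 * Complex.cos ((π : ℂ) * s / 2)))) := by
  have hxC : (x : ℂ) ≠ 0 := by exact_mod_cast hx.ne'
  have hpiC : (π : ℂ) ≠ 0 := by exact_mod_cast Real.pi_ne_zero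
  have hcos := aux_cos_ne hs hs3
  have hsin := aux_sin_ne2 (z := s) (by linarith) (by linarith) hs0
  obtain ⟨S, hS0, hS1, hS2⟩ := aux_sinc
  set c1 := riemannZeta (1 - s) / (2 * Complex.cos ((π : ℂ) * s / 2)) with hc1
  set G : ℂ → ℂ := fun h => riemannZeta (1 - s + h) / (2 * Complex.cos ((π : ℂ) * (s - h) / 2)) with hG
  set k : ℂ → ℂ := fun h => (x : ℂ) ^ (-h) / S ((π : ℂ) * h / 2) with hk
  have hG0 : G 0 = c1 := by simp [hG, hc1]
  have hk0 : k 0 = 1 := by simp [hk, hS0]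
  have hcosd : HasDerivAt (fun h : ℂ => 2 * Complex.cos ((π : ℂ) * (s - h) / 2))
      (π * Complex.sin ((π : ℂ) * s / 2)) 0 := by
    have a : HasDerivAt (fun h : ℂ => (π : ℂ) * (s - h) / 2) (-(π / 2)) 0 := by
      have := (((hasDerivAt_id (0:ℂ)).const_sub s).const_mul (π : ℂ)).div_const 2
      exact this.congr_deriv (by ring)
    have b := (a.ccos).const_mul 2
    refine b.congr_deriv ?_
    simp only [sub_zero]; ring
  have hGd : HasDerivAt G (deriv riemannZeta (1 - s) / (2 * Complex.cos ((π : ℂ) * s / 2)) -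
          c1 * (π / 2) * Complex.tan ((π : ℂ) * s / 2)) 0 := by
    have z : HasDerivAt (fun h : ℂ => riemannZeta (1 - s + h)) (deriv riemannZeta (1 - s)) 0 := by
      have h1 : HasDerivAt riemannZeta (deriv riemannZeta (1 - s)) (1 - s + 0) := by
        rw [add_zero]
        exact (differentiableAt_riemannZeta (by simpa using hs0)).hasDerivAt
      exact (HasDerivAt.comp (0:ℂ) h1 ((hasDerivAt_id (0:ℂ)).const_add (1 - s))).congr_deriv (by ring)
    have q := z.div hcosd (by simpa using hcos)
    refine q.congr_deriv ?_
    rw [Complex.tan]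
    simp only [sub_zero, add_zero, hc1]
    field_simp
  have hkd : HasDerivAt k (-(Real.log x : ℂ)) 0 := by
    have a : HasDerivAt (fun h : ℂ => (x : ℂ) ^ (-h)) (-(Real.log x : ℂ)) 0 := by
      have := (hasDerivAt_neg (0:ℂ)).const_cpow (c := (x : ℂ)) (Or.inl hxC)
      refine this.congr_deriv ?_
      rw [Complex.ofReal_log hx.le]; simp
    have b : HasDerivAt (fun h : ℂ => S ((π : ℂ) * h / 2)) 0 0 := by
      have i : HasDerivAt (fun h : ℂ => (π : ℂ) * h / 2) (π / 2) 0 := by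
        have := ((hasDerivAt_id (0:ℂ)).const_mul (π : ℂ)).div_const 2
        exact this.congr_deriv (by ring)
      have hS1' : HasDerivAt S 0 ((π : ℂ) * 0 / 2) := by simpa using hS1
      exact (HasDerivAt.comp (0:ℂ) hS1' i).congr_deriv (by ring)
    have q := a.div b (by simp [hS0])
    refine q.congr_deriv ?_
    simp [hS0]
  have t1 : Filter.Tendsto G (nhdsWithin 0 {0}ᶜ) (nhds c1) := by
    rw [← hG0]; exact hGd.continuousAt.tendsto.mono_left nhdsWithin_le_nhds
  have t2 : Filter.Tendsto (fun h : ℂ => riemannZeta (1 + h) - 1 / h) (nhdsWithin 0 {0}ᶜ)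
      (nhds (Real.eulerMascheroniConstant : ℂ)) := by
    have h := tendsto_riemannZeta_sub_one_div
    have h2 : Filter.Tendsto (fun h : ℂ => 1 + h) (nhdsWithin 0 {0}ᶜ) (nhdsWithin 1 {1}ᶜ) := by
      refine tendsto_nhdsWithin_iff.2 ⟨?_, ?_⟩
      · have : Filter.Tendsto (fun h : ℂ => 1 + h) (nhds 0) (nhds (1 + 0)) :=
          (continuous_const.add continuous_id).tendsto 0
        rw [add_zero] at this
        exact this.mono_left nhdsWithin_le_nhds
      · filter_upwards [self_mem_nhdsWithin] with z hz
        simpa using hz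
    refine (h.comp h2).congr fun z => ?_
    simp
  have t3 := hGd.tendsto_slope
  have t4 := hkd.tendsto_slope
  have hw0 : 0 < (1 + s).re := by simp; linarith
  have hw2 : (1 + s).re < 2 := by simp; linarith
  have tB : Filter.Tendsto (fun h : ℂ => - (riemannZeta (1 + s) / 2 * (π / 2 * (x : ℂ) ^ (1 + s - h - 1) /
      Complex.cos (π * (1 + s - h) / 2)))
      + 1 / 2 / Complex.sin (π * (1 + s - h) / 2) * ((x : ℂ) ^ 2 * auxS s x (1 + s - h)))
      (nhdsWithin 0 {0}ᶜ) (nhds (riemannZeta (1 + s) * π * (x : ℂ) ^ s / (4 * Complex.sin ((π : ℂ) * s / 2))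
        + (x : ℂ) ^ 2 * auxS s x (1 + s) / (2 * Complex.cos ((π : ℂ) * s / 2)))) := by
    have e1 : Complex.cos (π * (1 + s) / 2) = - Complex.sin (π * s / 2) := by
      rw [← Complex.cos_add_pi_div_two]; congr 1; ring
    have e2 : Complex.sin (π * (1 + s) / 2) = Complex.cos (π * s / 2) := by
      rw [← Complex.sin_add_pi_div_two]; congr 1; ring
    have hcl : ContinuousAt (fun w : ℂ => - (riemannZeta (1 + s) / 2 * (π / 2 * (x : ℂ) ^ (w - 1) /
      Complex.cos (π * w / 2)))
      + 1 / 2 / Complex.sin (π * w / 2) * ((x : ℂ) ^ 2 * auxS s x w)) (1 + s) := by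
      have p2 : ContinuousAt (fun w => (x : ℂ) ^ (w - 1)) (1 + s) :=
        (DifferentiableAt.const_cpow (by fun_prop) (Or.inl hxC)).continuousAt
      have hSc := (aux_S_diff hs hx hw0 hw2).continuousAt
      have d2 : ContinuousAt (fun w : ℂ => Complex.cos (π * w / 2)) (1 + s) := by fun_prop
      have d3 : ContinuousAt (fun w : ℂ => Complex.sin (π * w / 2)) (1 + s) := by fun_prop
      exact (continuousAt_const.mul ((continuousAt_const.mul p2).div d2 (by rw [e1]; exact neg_ne_zero.2 hsin))).neg.add
        ((continuousAt_const.div d3 (by rw [e2]; exact hcos)).mul (continuousAt_const.mul hSc))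
    have hlin : Filter.Tendsto (fun h : ℂ => 1 + s - h) (nhdsWithin 0 {0}ᶜ) (nhds (1 + s)) := by
      have : Filter.Tendsto (fun h : ℂ => 1 + s - h) (nhds 0) (nhds (1 + s - 0)) :=
          (continuous_const.sub continuous_id).tendsto 0
      rw [sub_zero] at this
      exact this.mono_left nhdsWithin_le_nhds
    have := hcl.tendsto.comp hlin
    simp only [Function.comp_def] at this
    convert! this using 2
    rw [e1, e2]
    have : 1 + s - 1 = s := by ring
    rw [this]
    field_simp
    ring
  have tall := (((t1.mul t2).add t3).sub (t4.const_mul c1)).add tB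
  refine (tall.congr' ?_).mono_right (le_of_eq ?_)
  · filter_upwards [self_mem_nhdsWithin] with h hh
    have hh : h ≠ 0 := hh
    have e1 : Complex.cos (π * (1 + s - h - s) / 2) = (π * h / 2) * S (π * h / 2) := by
      rw [← hS2, ← Complex.cos_pi_div_two_sub]; congr 1; ring
    have e2 : Complex.sin (π * (1 + s - h) / 2) = Complex.cos (π * (s - h) / 2) := by
      rw [← Complex.sin_add_pi_div_two]; congr 1; ring
    have e3 : (1 + s - h - s - 1) = - h := by ring
    have e4 : 2 - (1 + s - h) = 1 - s + h := by ring
    have e5 : 1 - s + h + s = 1 + h := by ring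
    rw [auxRHS, e1, e2, e3, e4, e5, slope_def_field, slope_def_field, hG0, hk0, ← hc1]
    have ek : (π : ℂ) / 2 * (x : ℂ) ^ (-h) / ((π * h / 2) * S (π * h / 2)) = k h / h := by
      simp only [hk]; field_simp
    have eG : 1 / 2 / Complex.cos (π * (s - h) / 2) * riemannZeta (1 - s + h) = G h := by
      simp only [hG]; field_simp
    rw [ek]
    linear_combination (-riemannZeta (1 + h)) * eG
  · congr 1; ring

lemma aux_M_value {s : ℂ} (hs : -1 < s.re) (hs0 : s ≠ 0) (hs3 : s.re < 1) {x : ℝ} (hx : 0 < x) :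
    auxM s x (1 + s) = riemannZeta (1 - s) / (2 * Complex.cos ((π : ℂ) * s / 2)) *
          ((Real.eulerMascheroniConstant : ℂ) + (Real.log x : ℂ))
        + (deriv riemannZeta (1 - s) / (2 * Complex.cos ((π : ℂ) * s / 2)) -
          riemannZeta (1 - s) / (2 * Complex.cos ((π : ℂ) * s / 2)) * (π / 2) * Complex.tan ((π : ℂ) * s / 2))
        + riemannZeta (1 + s) * π * (x : ℂ) ^ s / (4 * Complex.sin ((π : ℂ) * s / 2))
        + (x : ℂ) ^ 2 * auxS s x (1 + s) / (2 * Complex.cos ((π : ℂ) * s / 2)) := by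
  have hw0 : 0 < (1 + s).re := by simp; linarith
  have hw2 : (1 + s).re < 2 := by simp; linarith
  have hlin : Filter.Tendsto (fun h : ℂ => 1 + s - h) (nhdsWithin 0 {0}ᶜ) (nhds (1 + s)) := by
    have : Filter.Tendsto (fun h : ℂ => 1 + s - h) (nhds 0) (nhds (1 + s - 0)) :=
      (continuous_const.sub continuous_id).tendsto 0
    rw [sub_zero] at this
    exact this.mono_left nhdsWithin_le_nhds
  have h1 := (aux_M_mellin hs hs0 hs3 hx hw0 hw2).2.continuousAt.tendsto.comp hlin
  refine tendsto_nhds_unique h1 ((aux_limit hs hs0 hs3 hx).congr' ?_)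
  have o : IsOpen ({z : ℂ | 0 < z.re ∧ z.re < 2} \ {1}) := by
    refine IsOpen.sdiff ?_ isClosed_singleton
    exact (isOpen_lt continuous_const Complex.continuous_re).inter
      (isOpen_lt Complex.continuous_re continuous_const)
  filter_upwards [self_mem_nhdsWithin, hlin.eventually (o.mem_nhds ⟨⟨hw0, hw2⟩, by simpa using hs0⟩)] with h hh hz
  have hh : h ≠ 0 := hh
  refine (aux_M_eq_RHS hs hs0 hs3 hx hz.1.1 hz.1.2 hz.2 ?_).symm
  intro e; apply hh; linear_combination -e

theorem fRam_integral_representation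
    (s : ℂ) (hs0 : s ≠ 0) (hs1 : -1 < s.re) (hs2 : s.re < 1) (x : ℝ) (hx : 0 < x) :
    fRam x s
    = (2 / (π : ℂ)) * (x : ℂ) ^ (-s / 2) *
        ∫ t in Set.Ioi (0 : ℝ),
          ((t : ℂ) ^ (1 + s / 2) / ((x : ℂ) ^ 2 + (t : ℂ) ^ 2)) *
            (phiK t s - (riemannZeta s / (2 * (π : ℂ))) * (t : ℂ) ^ (s / 2 - 1)) := by
  have hxC : (x : ℂ) ≠ 0 := by exact_mod_cast hx.ne'
  have hpiC : (π : ℂ) ≠ 0 := by exact_mod_cast Real.pi_ne_zero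
  have hcos := aux_cos_ne hs1 hs2
  have hsin := aux_sin_ne2 (z := s) (by linarith) (by linarith) hs0
  have hIntg : ∫ t in Set.Ioi (0 : ℝ),
          ((t : ℂ) ^ (1 + s / 2) / ((x : ℂ) ^ 2 + (t : ℂ) ^ 2)) *
            (phiK t s - (riemannZeta s / (2 * (π : ℂ))) * (t : ℂ) ^ (s / 2 - 1)) = auxM s x (1 + s) := by
    refine setIntegral_congr_fun measurableSet_Ioi fun t ht => ?_
    have ht : 0 < t := ht
    have htC : (t : ℂ) ≠ 0 := by exact_mod_cast ht.ne'
    have e : (t : ℂ) ^ (1 + s / 2) = (t : ℂ) ^ (1 + s) * (t : ℂ) ^ (-s / 2) := by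
      rw [← Complex.cpow_add _ _ htC]; congr 1; ring
    simp only [auxPsi]
    rw [e]
    ring
  rw [hIntg, aux_M_value hs1 hs0 hs2 hx]
  have hS : ∑' n : ℕ, csigma (-s) (n + 1) *
        (if x = ((n : ℝ) + 1) then (s - 1) * ((n : ℂ) + 1) ^ (s - 3) / 2
          else (((n : ℂ) + 1) ^ (s - 1) - (x : ℂ) ^ (s - 1)) /
            (((n : ℂ) + 1) ^ 2 - (x : ℂ) ^ 2)) = auxS s x (1 + s) := by
    unfold auxS
    refine tsum_congr fun n => ?_
    unfold auxE
    rw [show 1 + s - 2 = s - 1 by ring, show 1 + s - 4 = s - 3 by ring]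
  have hf := aux_func_eq hs1 hs0 hs2
  rw [fRam, hS]
  have y1 : (x : ℂ) ^ (2 - s / 2) = (x : ℂ) ^ (-s / 2) * (x : ℂ) ^ 2 := by
    rw [← Complex.cpow_ofNat, ← Complex.cpow_add _ _ hxC]; congr 1; ring
  have y2 : (x : ℂ) ^ (s / 2) = (x : ℂ) ^ (-s / 2) * (x : ℂ) ^ s := by
    rw [← Complex.cpow_add _ _ hxC]; congr 1; ring
  have y3 : (2 : ℂ) ^ (-s) * (π : ℂ) ^ (-1 - s) = ((2 * π : ℝ) : ℂ) ^ (-s) / π := by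
    have a : ((2 * π : ℝ) : ℂ) ^ (-s) = (2 : ℂ) ^ (-s) * (π : ℂ) ^ (-s) := by
      have := Complex.mul_cpow_ofReal_nonneg (a := 2) (b := π) (by norm_num) Real.pi_pos.le (-s)
      push_cast at this ⊢; exact this
    have b : (π : ℂ) ^ (-1 - s) = (π : ℂ) ^ (-s) / π := by
      rw [show -1 - s = -s - 1 by ring, Complex.cpow_sub _ _ hpiC, Complex.cpow_one]
    rw [a, b]; ring
  have y4 : ((2 * π : ℝ) : ℂ) ^ (-s) * ((2 * π : ℝ) : ℂ) ^ s = 1 := by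
    have : ((2 * π : ℝ) : ℂ) ≠ 0 := by exact_mod_cast (by positivity : (0:ℝ) < 2 * π).ne'
    rw [← Complex.cpow_add _ _ this]; simp
  rw [y1, y2, y3]
  set P := ((2 * π : ℝ) : ℂ) ^ (-s) with hP
  set P' := ((2 * π : ℝ) : ℂ) ^ s with hP'
  set X := (x : ℂ) ^ (-s / 2) with hX
  set E := (Real.eulerMascheroniConstant : ℂ) with hE
  set Lg := (Real.log x : ℂ) with hLg
  set C1 := riemannZeta (1 - s) / (2 * Complex.cos ((π : ℂ) * s / 2)) with hC1
  set T := Complex.tan ((π : ℂ) * s / 2) with hT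
  set c := Complex.cos ((π : ℂ) * s / 2) with hc
  set n := Complex.sin ((π : ℂ) * s / 2) with hn
  set Z := deriv riemannZeta (1 - s) with hZ
  set Y := (x : ℂ) ^ s with hY
  set W := auxS s x (1 + s) with hW
  have key : P / π * X * (Complex.Gamma s * riemannZeta s * (π * T - 2 * (E + Lg)) - P' * Z / c) =
      X / π * (C1 * (π * T - 2 * (E + Lg)) - Z / c) := by
    linear_combination (X / π * (π * T - 2 * (E + Lg))) * hf - (X / π * Z / c) * y4
  rw [key]
  field_simp
  ring
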